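/- arXiv:2012.05110 — 2 statements merged into one kernel-verified Lean document; each statement's English description precedes it below -/
import Mathlib

section
/- Let v : Λ → ℝ be pointwise nonnegative and of positive type, and let κ > 0. Then for every p ∈ ℕ*, all x = (x_1,…,x_p) ∈ Λ^p and y = (y_1,…,y_p) ∈ Λ^p, the rescaled reduced p-particle density matrices of the lattice Bose gas at coupling λ = ν² converge to the classical p-point correlation functions: lim_{ν→0⁺} ν^p (Γ_p^{ν,κ,ν²})_{x,y} = (Γ_p^{cl})_{x,y}. -/
/-!
Write `J = Δ/2 + d`, a symmetric matrix with nonnegative entries and row sums `d`, and `a = κ + d`.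
On the `N`-particle space `-(H_N + κνN) = ν dΓ(J) - νaN - V` with `V(X) = (ν²/2) ∑ v(X_i - X_j)`.

*Separating the interaction.* One jump of `dΓ(J)` changes `V` by at most `ν² N max v`. Hence, entry
by entry, `exp (ν dΓ(J) - V)` differs from `exp (ν dΓ(J)) exp (-V)` by at most a multiple of
`ν (νN)` times `exp (ν (1 + ε) dΓ(J))` (`abs_exp_sub_diagonal_sub_le`). The factor `νN` is absorbed
in an exponential `exp (θνN)`, so the total error is `ν` times the corresponding quantity of an
ideal gas with slightly modified parameters (`abs_qterm_sub_kterm_le`).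

*The main term.* `exp (ν dΓ(J))` is a tensor power (`exp_smul_dGam`), so its symmetrized kernels
are moments of the Gaussian field `ψ = exp (-(ν/2)(a - J)) φ`, where `φ` is a standard complex
Gaussian (`wick_app`). Moreover `exp (-V)` is a function `F(νn)` of the occupation numbers `n`
alone. The sum over the traced-out particles thereby becomes the expectation of `F(νn)` under a
Poisson process of intensity `|ψ|²` (`integral_pois_app`, `hasSum_kterm`). After the rescaling
`φ ↦ φ/√ν` the intensity is `|ψ|²/ν`, so that `νn` concentrates at `|φ|²` (`tendsto_tsum_pois`),
while `(|φ|² - |ψ|²)/ν → ⟨φ, (a - J) φ⟩` turns the standard Gaussian into the classical one.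
Dominated convergence yields the limit of the unnormalized density matrices
(`tendsto_tsum_kterm`, `summable_and_tendsto_qterm`).

*Conclusion.* The partition function is the case `p = 0` of the same limit; the quotient of the two
limits is the classical correlation function, since the limit for `p = 0` is positive.
-/


open scoped BigOperators ComplexConjugate Classical Real Topology
open MeasureTheory Filter Matrix

noncomputable section

/-- The discrete torus `Λ = (ℤ/Lℤ)^d`. -/
abbrev Tor (d L : ℕ) := Fin d → ZMod L

/-- Configuration space `Λⁿ`. -/
abbrev Cfg (d L n : ℕ) := Fin n → Tor d L

/-- The unit vector `e j` in the torus. -/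
def unitVec (d L : ℕ) (j : Fin d) : Tor d L := fun i => if i = j then 1 else 0

/-- The discrete Laplacian on the torus, as a matrix:
`Δ f (x) = ∑_{j} (f (x + e_j) - f x) + (f (x - e_j) - f x)`. -/
def lap (d L : ℕ) [NeZero L] : Matrix (Tor d L) (Tor d L) ℂ :=
  fun x y =>
    (∑ j : Fin d,
      ((if y = x + unitVec d L j then (1 : ℂ) else 0)
        + (if y = x - unitVec d L j then (1 : ℂ) else 0)))
      - (if y = x then (2 * d : ℂ) else 0)

/-- Matrix exponential, defined entrywise via the exponential power series. -/
def matExp {m : Type*} [Fintype m] [DecidableEq m] (A : Matrix m m ℂ) : Matrix m m ℂ :=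
  Matrix.of fun x y => ∑' (n : ℕ), ((((Nat.factorial n : ℕ) : ℂ)⁻¹) • A ^ n) x y

/-- The Laplacian `Δ_i` acting in the `i`-th variable, summed over `i`, as a matrix on `ℓ²(Λⁿ)`. -/
def kin (d L n : ℕ) [NeZero L] : Matrix (Cfg d L n) (Cfg d L n) ℂ :=
  fun X Y => ∑ i : Fin n,
    (if ∀ j : Fin n, j ≠ i → X j = Y j then lap d L (X i) (Y i) else 0)

/-- The `n`-particle Hamiltonian
`H_n^{ν,λ} = -(ν/2) ∑_i Δ_i + (λ/2) ∑_{i,j} v(x_i - x_j)` on `ℓ²(Λⁿ)`. -/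
def ham (d L : ℕ) [NeZero L] (v : Tor d L → ℝ) (ν lam : ℝ) (n : ℕ) :
    Matrix (Cfg d L n) (Cfg d L n) ℂ :=
  ((-(ν / 2) : ℝ) : ℂ) • kin d L n
    + Matrix.diagonal (fun X : Cfg d L n =>
        (((lam / 2) * ∑ i : Fin n, ∑ j : Fin n, v (X i - X j) : ℝ) : ℂ))

/-- The symmetrization projection `P_n⁺` as a matrix on `ℓ²(Λⁿ)`. -/
def symProj (d L n : ℕ) [NeZero L] : Matrix (Cfg d L n) (Cfg d L n) ℂ :=
  fun X Y => ((Nat.factorial n : ℕ) : ℂ)⁻¹ * ∑ g : Equiv.Perm (Fin n), (if Y = X ∘ g then (1 : ℂ) else 0)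

/-- The grand canonical partition function
`Ξ^{ν,κ,λ} = ∑_{n ≥ 0} Tr(e^{-(H_n^{ν,λ} + κνn)} P_n⁺)`. -/
def grandXi (d L : ℕ) [NeZero L] (v : Tor d L → ℝ) (ν κ lam : ℝ) : ℂ :=
  ∑' (n : ℕ),
    (matExp (-(ham d L v ν lam n
        + ((κ * ν * n : ℝ) : ℂ) • (1 : Matrix (Cfg d L n) (Cfg d L n) ℂ)))
      * symProj d L n).trace

/-- The relative grand canonical partition function `𝒵^{ν,κ,λ} = Ξ^{ν,κ,λ}/Ξ^{ν,κ,0}`. -/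
def relZ (d L : ℕ) [NeZero L] (v : Tor d L → ℝ) (ν κ lam : ℝ) : ℂ :=
  grandXi d L v ν κ lam / grandXi d L v ν κ 0

/-- The density of the complex Gaussian measure `μ_{(-Δ/2+κ)^{-1}}` with respect to
Lebesgue measure on `ℂ^Λ`. -/
def gaussWeight (d L : ℕ) [NeZero L] (κ : ℝ) (φ : Tor d L → ℂ) : ℂ :=
  (((Real.pi : ℂ) ^ Fintype.card (Tor d L))
      * ((-(1 / 2 : ℂ)) • lap d L + (κ : ℂ) • 1)⁻¹.det)⁻¹
    * Complex.exp (∑ x : Tor d L,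
        (starRingEnd ℂ) (φ x) * (((1 / 2 : ℂ) • lap d L - (κ : ℂ) • 1).mulVec φ x))

/-- The interaction weight `e^{-(1/2) ∑_{x,y} |φ(x)|² v(x-y) |φ(y)|²}`. -/
def intWeight (d L : ℕ) [NeZero L] (v : Tor d L → ℝ) (φ : Tor d L → ℂ) : ℂ :=
  Complex.exp (-(1 / 2 : ℂ) * ∑ x : Tor d L, ∑ y : Tor d L,
    (Complex.normSq (φ x) : ℂ) * ((v (x - y) : ℝ) : ℂ) * (Complex.normSq (φ y) : ℂ))

/-- The relative classical partition function `𝒵^{cl}`. -/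
def Zcl (d L : ℕ) [NeZero L] (v : Tor d L → ℝ) (κ : ℝ) : ℂ :=
  ∫ φ : Tor d L → ℂ, gaussWeight d L κ φ * intWeight d L v φ

/-- The discrete Fourier transform of `v` on the torus. -/
def dft (d L : ℕ) [NeZero L] (v : Tor d L → ℝ) (ξ : Tor d L) : ℂ :=
  ∑ x : Tor d L, ((v x : ℝ) : ℂ) *
    Complex.exp (2 * (Real.pi : ℂ) * Complex.I *
      (∑ j : Fin d, (((ξ j).val : ℕ) : ℂ) * (((x j).val : ℕ) : ℂ)) / (L : ℂ))

/-- `v` is of positive type: its discrete Fourier transform is pointwise a nonnegative real. -/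
def IsPosType (d L : ℕ) [NeZero L] (v : Tor d L → ℝ) : Prop :=
  ∀ ξ : Tor d L, (dft d L v ξ).im = 0 ∧ 0 ≤ (dft d L v ξ).re

/-- The kernel of the reduced `p`-particle density matrix `Γ_p^{ν,κ,λ}`:
`(Γ_p)_{x,y} = (1/Ξ) ∑_{n≥0} ((p+n)!/n!) e^{-κν(p+n)} ∑_{u∈Λⁿ} (e^{-H_{p+n}} P_{p+n}⁺)_{(x,u),(y,u)}`. -/
def GammaQ (d L : ℕ) [NeZero L] (v : Tor d L → ℝ) (ν κ lam : ℝ) (p : ℕ)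
    (x y : Fin p → Tor d L) : ℂ :=
  (grandXi d L v ν κ lam)⁻¹ *
    ∑' (n : ℕ),
      ((Nat.factorial (p + n) : ℂ) / (Nat.factorial n : ℂ))
        * ((Real.exp (-(κ * ν * (p + n))) : ℝ) : ℂ)
        * ∑ u : Cfg d L n,
            (matExp (-(ham d L v ν lam (p + n))) * symProj d L (p + n))
              (Fin.append x u) (Fin.append y u)

/-- The classical `p`-point correlation function `Γ_p^{cl}`. -/
def GammaCl (d L : ℕ) [NeZero L] (v : Tor d L → ℝ) (κ : ℝ) (p : ℕ)
    (x y : Fin p → Tor d L) : ℂ :=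
  (Zcl d L v κ)⁻¹ *
    ∫ φ : Tor d L → ℂ,
      gaussWeight d L κ φ
        * (∏ i : Fin p, (starRingEnd ℂ) (φ (y i)))
        * (∏ i : Fin p, φ (x i))
        * intWeight d L v φ

set_option linter.unusedSectionVars false

/-! ### Entrywise estimates for real matrix exponentials -/

section MatrixExp

variable {m : Type*} [Fintype m] [DecidableEq m]

lemma hasSum_exp_apply (A : Matrix m m ℝ) (x y : m) :
    HasSum (fun k : ℕ => ((k.factorial : ℝ))⁻¹ * (A ^ k) x y) (NormedSpace.exp A x y) := by
  open scoped Matrix.Norms.Operator in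
  have h := NormedSpace.exp_series_hasSum_exp' (𝕂 := ℝ) A
  exact Pi.hasSum.mp (Pi.hasSum.mp h x) y

lemma matExp_map (A : Matrix m m ℝ) (x y : m) :
    matExp (A.map (fun t : ℝ => (t : ℂ))) x y = ((NormedSpace.exp A x y : ℝ) : ℂ) := by
  have hp : ∀ k : ℕ, (A.map (fun t : ℝ => (t : ℂ))) ^ k = (A ^ k).map (fun t : ℝ => (t : ℂ)) := by
    intro k
    exact (Matrix.map_pow A Complex.ofRealHom k).symm
  rw [← (hasSum_exp_apply A x y).tsum_eq, Complex.ofReal_tsum]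
  simp only [matExp, Matrix.of_apply]
  refine tsum_congr fun k => ?_
  rw [hp]
  simp

lemma pow_apply_mono {A B : Matrix m m ℝ} (hA : ∀ x y, 0 ≤ A x y) (hAB : ∀ x y, A x y ≤ B x y)
    (k : ℕ) (x y : m) : (A ^ k) x y ≤ (B ^ k) x y := by
  induction k generalizing x y with
  | zero => simp
  | succ k ih =>
    rw [pow_succ, pow_succ, Matrix.mul_apply, Matrix.mul_apply]
    exact Finset.sum_le_sum fun z _ => mul_le_mul (ih _ _) (hAB _ _) (hA _ _)
      ((pow_apply_nonneg hA k x z).trans (ih _ _))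

lemma exp_apply_nonneg {A : Matrix m m ℝ} (hA : ∀ x y, 0 ≤ A x y) (x y : m) :
    0 ≤ NormedSpace.exp A x y :=
  (hasSum_exp_apply A x y).nonneg fun k =>
    mul_nonneg (inv_nonneg.2 (Nat.cast_nonneg _)) (pow_apply_nonneg hA k x y)

lemma exp_apply_mono {A B : Matrix m m ℝ} (hA : ∀ x y, 0 ≤ A x y) (hAB : ∀ x y, A x y ≤ B x y)
    (x y : m) : NormedSpace.exp A x y ≤ NormedSpace.exp B x y :=
  hasSum_le (fun k => mul_le_mul_of_nonneg_left (pow_apply_mono hA hAB k x y) (by positivity))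
    (hasSum_exp_apply A x y) (hasSum_exp_apply B x y)

lemma exp_add_smul_one (A : Matrix m m ℝ) (c : ℝ) :
    NormedSpace.exp (A + c • (1 : Matrix m m ℝ)) = Real.exp c • NormedSpace.exp A := by
  have h1 : NormedSpace.exp (c • (1 : Matrix m m ℝ)) = Real.exp c • (1 : Matrix m m ℝ) := by
    rw [Matrix.smul_one_eq_diagonal, Matrix.smul_one_eq_diagonal, Matrix.exp_diagonal]
    congr 1
    ext i
    rw [Pi.coe_exp, Real.exp_eq_exp_ℝ]
  rw [Matrix.exp_add_of_commute, h1]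
  · simp
  · exact (Commute.one_right A).smul_right c

lemma hasDerivAt_exp_smul_apply (A : Matrix m m ℝ) (t : ℝ) :
    HasDerivAt (fun s : ℝ => NormedSpace.exp (s • A)) (NormedSpace.exp (t • A) * A) t := by
  open scoped Matrix.Norms.Operator in
  have h := hasDerivAt_exp_smul_const (𝕂 := ℝ) A t
  exact h

/-- Subtracting a nonnegative diagonal matrix keeps the exponential of an entrywise nonnegative
matrix nonnegative and makes it smaller (the positivity behind the Feynman–Kac formula). -/
lemma exp_sub_diagonal_bounds {A : Matrix m m ℝ} (hA : ∀ x y, 0 ≤ A x y) {V : m → ℝ}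
    (hV : ∀ x, 0 ≤ V x) (x y : m) :
    0 ≤ NormedSpace.exp (A - diagonal V) x y ∧
      NormedSpace.exp (A - diagonal V) x y ≤ NormedSpace.exp A x y := by
  set c : ℝ := ∑ z, V z with hc
  have hVc : ∀ z, V z ≤ c := fun z =>
    Finset.single_le_sum (f := V) (fun i _ => hV i) (Finset.mem_univ z)
  have hN : ∀ z w, 0 ≤ (A - diagonal V + c • (1 : Matrix m m ℝ)) z w := by
    intro z w
    by_cases h : z = w
    · subst h
      simp
      linarith [hA z z, hVc z]
    · simp [h, hA z w]
  have hle : ∀ z w, (A - diagonal V + c • (1 : Matrix m m ℝ)) z w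
      ≤ (A + c • (1 : Matrix m m ℝ)) z w := by
    intro z w
    by_cases h : z = w
    · subst h
      simp [hV z]
    · simp [h]
  have h1 := exp_apply_nonneg hN x y
  have h2 := exp_apply_mono hN hle x y
  rw [exp_add_smul_one] at h1 h2
  rw [exp_add_smul_one] at h2
  simp only [Matrix.smul_apply, smul_eq_mul] at h1 h2
  have hpos := Real.exp_pos c
  exact ⟨by nlinarith [(mul_nonneg_iff_of_pos_left hpos).1 h1], le_of_mul_le_mul_left h2 hpos⟩

lemma abs_potential_sub_mul_pow_le {A : Matrix m m ℝ} (hA : ∀ x y, 0 ≤ A x y) {V : m → ℝ} {δ : ℝ}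
    (hδ : ∀ x y, A x y ≠ 0 → |V x - V y| ≤ δ) (k : ℕ) (x y : m) :
    |V x - V y| * (A ^ k) x y ≤ k * δ * (A ^ k) x y := by
  induction k generalizing y with
  | zero =>
    rw [pow_zero, Matrix.one_apply]
    split_ifs with h
    · simp [h]
    · simp
  | succ k ih =>
    rw [pow_succ, Matrix.mul_apply, Finset.mul_sum, Finset.mul_sum]
    refine Finset.sum_le_sum fun z _ => ?_
    have hp := pow_apply_nonneg hA k x z
    by_cases h0 : A z y = 0
    · simp [h0]
    have h1 := hδ z y h0
    have h2 := ih z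
    have h3 : |V x - V y| ≤ |V x - V z| + |V z - V y| := abs_sub_le _ _ _
    have hzy := hA z y
    have h4 : |V x - V y| * (A ^ k) x z ≤ (k + 1) * δ * (A ^ k) x z := by
      nlinarith [mul_le_mul_of_nonneg_right h3 hp, mul_le_mul_of_nonneg_right h1 hp]
    push_cast
    calc |V x - V y| * ((A ^ k) x z * A z y) = (|V x - V y| * (A ^ k) x z) * A z y := by ring
      _ ≤ ((k + 1) * δ * (A ^ k) x z) * A z y := mul_le_mul_of_nonneg_right h4 hzy
      _ = _ := by ring

/-- If one jump of `A` changes the potential `V` by at most `δ`, then the commutator of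
`exp (t A)` with `V` is at most `δ / ε` times a semigroup run a factor `1 + ε` longer:
`k ε ≤ (1 + ε) ^ k` absorbs the number `k` of jumps. -/
lemma abs_potential_sub_mul_exp_le {A : Matrix m m ℝ} (hA : ∀ x y, 0 ≤ A x y) {V : m → ℝ} {δ : ℝ}
    (hδ0 : 0 ≤ δ) (hδ : ∀ x y, A x y ≠ 0 → |V x - V y| ≤ δ) {ε : ℝ} (hε : 0 < ε) {t : ℝ}
    (ht : 0 ≤ t) (x y : m) :
    |V x - V y| * NormedSpace.exp (t • A) x y
      ≤ δ / ε * NormedSpace.exp (((1 + ε) * t) • A) x y := by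
  refine hasSum_le (fun k => ?_) ((hasSum_exp_apply (t • A) x y).mul_left _)
    ((hasSum_exp_apply (((1 + ε) * t) • A) x y).mul_left _)
  have hp := pow_apply_nonneg hA k x y
  rw [smul_pow, smul_pow, Matrix.smul_apply, Matrix.smul_apply, smul_eq_mul, smul_eq_mul, mul_pow]
  have h1 := abs_potential_sub_mul_pow_le hA hδ k x y
  have h2 : (k : ℝ) ≤ (1 + ε) ^ k / ε := by
    rw [le_div_iff₀ hε]
    have := one_add_mul_le_pow (a := ε) (by linarith) k
    linarith
  have h3 : |V x - V y| * (A ^ k) x y ≤ (1 + ε) ^ k / ε * δ * (A ^ k) x y :=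
    h1.trans (mul_le_mul_of_nonneg_right (mul_le_mul_of_nonneg_right h2 hδ0) hp)
  have h4 : 0 ≤ ((k.factorial : ℝ))⁻¹ * t ^ k := by positivity
  calc |V x - V y| * (((k.factorial : ℝ))⁻¹ * (t ^ k * (A ^ k) x y))
      = ((k.factorial : ℝ))⁻¹ * t ^ k * (|V x - V y| * (A ^ k) x y) := by ring
    _ ≤ ((k.factorial : ℝ))⁻¹ * t ^ k * ((1 + ε) ^ k / ε * δ * (A ^ k) x y) :=
      mul_le_mul_of_nonneg_left h3 h4
    _ = _ := by ring

/-- Replacing `exp (A - V)` by `exp A * exp (-V)` costs `δ / ε` times `exp ((1 + ε) A)` entrywise,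
where `δ` bounds the change of `V` along one jump of `A`. The two sides are the endpoints of
`s ↦ exp (s (A - V)) exp ((1 - s) A) exp (-(1 - s) V)`. -/
lemma abs_exp_sub_diagonal_sub_le {A : Matrix m m ℝ} (hA : ∀ x y, 0 ≤ A x y) {V : m → ℝ}
    (hV : ∀ x, 0 ≤ V x) {δ : ℝ} (hδ0 : 0 ≤ δ) (hδ : ∀ x y, A x y ≠ 0 → |V x - V y| ≤ δ)
    {ε : ℝ} (hε : 0 < ε) (x y : m) :
    |NormedSpace.exp (A - diagonal V) x y - NormedSpace.exp A x y * Real.exp (-V y)|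
      ≤ δ / ε * NormedSpace.exp ((1 + ε) • A) x y := by
  set G : ℝ → ℝ := fun s => (NormedSpace.exp (s • (A - diagonal V))
    * NormedSpace.exp ((1 - s) • A)) x y * Real.exp (-((1 - s) * V y)) with hG
  have hder : ∀ s : ℝ, HasDerivAt G
      ((∑ z, NormedSpace.exp (s • (A - diagonal V)) x z *
        (NormedSpace.exp ((1 - s) • A) z y * (V y - V z))) * Real.exp (-((1 - s) * V y))) s := by
    intro s
    have hentry : ∀ (M : Matrix m m ℝ) (z w : m) (r : ℝ),
        HasDerivAt (fun r : ℝ => NormedSpace.exp (r • M) z w)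
          ((NormedSpace.exp (r • M) * M) z w) r := by
      intro M z w r
      exact hasDerivAt_pi.1 (hasDerivAt_pi.1 (hasDerivAt_exp_smul_apply M r) z) w
    have hlin : HasDerivAt (fun r : ℝ => 1 - r) (-1) s := by
      simpa using (hasDerivAt_id s).const_sub 1
    have h1 : HasDerivAt (fun r : ℝ => ∑ z, NormedSpace.exp (r • (A - diagonal V)) x z
        * NormedSpace.exp ((1 - r) • A) z y)
        (∑ z, ((NormedSpace.exp (s • (A - diagonal V)) * (A - diagonal V)) x z
          * NormedSpace.exp ((1 - s) • A) z y
          + NormedSpace.exp (s • (A - diagonal V)) x z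
            * ((NormedSpace.exp ((1 - s) • A) * A) z y * (-1)))) s := by
      refine HasDerivAt.fun_sum fun z _ => ?_
      exact (hentry _ x z s).mul ((hentry A z y (1 - s)).comp s hlin)
    have h2 : HasDerivAt (fun r : ℝ => Real.exp (-((1 - r) * V y)))
        (Real.exp (-((1 - s) * V y)) * V y) s := by
      have := ((hlin.mul_const (V y)).neg).exp
      simpa using this
    have h3 := h1.mul h2
    have hfun : G = (fun r : ℝ => ∑ z, NormedSpace.exp (r • (A - diagonal V)) x z
        * NormedSpace.exp ((1 - r) • A) z y) * (fun r : ℝ => Real.exp (-((1 - r) * V y))) := by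
      ext r
      simp [hG, Matrix.mul_apply]
    rw [hfun]
    refine h3.congr_deriv (Eq.symm ?_)
    have hcomm : NormedSpace.exp ((1 - s) • A) * A = A * NormedSpace.exp ((1 - s) • A) := by
      have hc : Commute ((1 - s) • A) A := (Commute.refl A).smul_left _
      open scoped Matrix.Norms.Operator in
      exact (hc.exp_left).eq
    rw [hcomm]
    have e1 : ∑ z, ((NormedSpace.exp (s • (A - diagonal V)) * (A - diagonal V)) x z
          * NormedSpace.exp ((1 - s) • A) z y
          + NormedSpace.exp (s • (A - diagonal V)) x z
            * ((A * NormedSpace.exp ((1 - s) • A)) z y * (-1)))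
        = -∑ z, NormedSpace.exp (s • (A - diagonal V)) x z
            * (V z * NormedSpace.exp ((1 - s) • A) z y) := by
      have e2 : (NormedSpace.exp (s • (A - diagonal V)) * (A - diagonal V)
          * NormedSpace.exp ((1 - s) • A)
          - NormedSpace.exp (s • (A - diagonal V)) * (A * NormedSpace.exp ((1 - s) • A))) x y
          = (-(NormedSpace.exp (s • (A - diagonal V))
            * (diagonal V * NormedSpace.exp ((1 - s) • A)))) x y := by
        generalize NormedSpace.exp (s • (A - diagonal V)) = P
        generalize NormedSpace.exp ((1 - s) • A) = Q
        rw [mul_sub, sub_mul, mul_assoc, mul_assoc, sub_sub_cancel_left]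
      rw [Matrix.sub_apply, Matrix.mul_apply, Matrix.mul_apply, ← Finset.sum_sub_distrib,
        Matrix.neg_apply, Matrix.mul_apply] at e2
      simp only [Matrix.diagonal_mul] at e2
      rw [← e2]
      refine Finset.sum_congr rfl fun z _ => by ring
    rw [e1, Finset.sum_mul, neg_mul, Finset.sum_mul, Finset.sum_mul, ← Finset.sum_neg_distrib,
      ← Finset.sum_add_distrib]
    refine Finset.sum_congr rfl fun z _ => by ring
  have hbound : ∀ s ∈ Set.Ico (0 : ℝ) 1, ‖(∑ z, NormedSpace.exp (s • (A - diagonal V)) x z *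
        (NormedSpace.exp ((1 - s) • A) z y * (V y - V z))) * Real.exp (-((1 - s) * V y))‖
      ≤ δ / ε * NormedSpace.exp ((1 + ε) • A) x y := by
    intro s hs
    have hs0 : 0 ≤ s := hs.1
    have hs1 : 0 ≤ 1 - s := by linarith [hs.2]
    have hsA : ∀ z w, 0 ≤ (s • A) z w := fun z w => mul_nonneg hs0 (hA z w)
    have hsV : ∀ z, 0 ≤ (s • V) z := fun z => mul_nonneg hs0 (hV z)
    have hb : ∀ z, 0 ≤ NormedSpace.exp (s • (A - diagonal V)) x z ∧
        NormedSpace.exp (s • (A - diagonal V)) x z ≤ NormedSpace.exp (((1 + ε) * s) • A) x z := by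
      intro z
      have := exp_sub_diagonal_bounds hsA hsV x z
      have h2 : s • (A - diagonal V) = s • A - diagonal (s • V) := by
        rw [smul_sub, Matrix.diagonal_smul]
      rw [h2]
      refine ⟨this.1, this.2.trans (exp_apply_mono hsA (fun z w => ?_) x z)⟩
      simp only [Matrix.smul_apply, smul_eq_mul]
      nlinarith [mul_nonneg (mul_nonneg hε.le hs0) (hA z w)]
    have hexp : Real.exp (-((1 - s) * V y)) ≤ 1 := by
      rw [Real.exp_le_one_iff]
      nlinarith [hV y]
    rw [norm_mul, Real.norm_eq_abs, Real.norm_eq_abs, abs_of_pos (Real.exp_pos _)]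
    calc _ ≤ |∑ z, NormedSpace.exp (s • (A - diagonal V)) x z *
            (NormedSpace.exp ((1 - s) • A) z y * (V y - V z))| * 1 := by gcongr
      _ ≤ ∑ z, NormedSpace.exp (((1 + ε) * s) • A) x z *
            (δ / ε * NormedSpace.exp (((1 + ε) * (1 - s)) • A) z y) := by
          rw [mul_one]
          refine (Finset.abs_sum_le_sum_abs _ _).trans (Finset.sum_le_sum fun z _ => ?_)
          have h1 := abs_potential_sub_mul_exp_le hA hδ0 hδ hε hs1 z y
          have h0 : 0 ≤ NormedSpace.exp ((1 - s) • A) z y :=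
            exp_apply_nonneg (fun z w => mul_nonneg hs1 (hA z w)) z y
          rw [abs_mul, abs_of_nonneg (hb z).1, abs_mul, abs_of_nonneg h0, abs_sub_comm,
            mul_comm (NormedSpace.exp ((1 - s) • A) z y)]
          exact mul_le_mul (hb z).2 h1 (by positivity) ((hb z).1.trans (hb z).2)
      _ = δ / ε * (NormedSpace.exp (((1 + ε) * s) • A)
            * NormedSpace.exp (((1 + ε) * (1 - s)) • A)) x y := by
          rw [Matrix.mul_apply, Finset.mul_sum]
          exact Finset.sum_congr rfl fun z _ => by ring
      _ = δ / ε * NormedSpace.exp ((1 + ε) • A) x y := by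
          rw [← Matrix.exp_add_of_commute, ← add_smul]
          · ring_nf
          · exact ((Commute.refl A).smul_left _).smul_right _
  have := norm_image_sub_le_of_norm_deriv_le_segment_01'
    (f := G) (fun s _ => (hder s).hasDerivWithinAt) hbound
  simpa [hG, Real.norm_eq_abs, NormedSpace.exp_zero] using this

end MatrixExp

/-! ### Second quantization of a one-particle matrix -/

section SecondQuantization

variable {Λ : Type*} [Fintype Λ] [DecidableEq Λ]

/-- The second quantization `dΓ(J) = ∑ᵢ Jᵢ` of a one-particle matrix `J`, restricted to the
(unsymmetrized) `n`-particle space. -/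
def dGam (J : Matrix Λ Λ ℝ) (n : ℕ) : Matrix (Fin n → Λ) (Fin n → Λ) ℝ :=
  fun X Y => ∑ i : Fin n, (if ∀ j : Fin n, j ≠ i → X j = Y j then J (X i) (Y i) else 0)

lemma dGam_mul_prod_apply (J K : Matrix Λ Λ ℝ) (n : ℕ) (X Y : Fin n → Λ) :
    ∑ Z, dGam J n X Z * ∏ i, K (Z i) (Y i)
      = ∑ i, (∏ j ∈ Finset.univ.erase i, K (X j) (Y j)) * (J * K) (X i) (Y i) := by
  simp only [dGam, Finset.sum_mul]
  rw [Finset.sum_comm]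
  refine Finset.sum_congr rfl fun i _ => ?_
  -- the configurations reached by moving particle `i` are the updates of `X` at `i`
  have hinj : Function.Injective (fun z : Λ => Function.update X i z) :=
    Function.update_injective X i
  have h1 : ∑ Z : Fin n → Λ, (if ∀ j : Fin n, j ≠ i → X j = Z j then J (X i) (Z i) else 0)
        * ∏ j, K (Z j) (Y j)
      = ∑ Z ∈ Finset.univ.image (fun z : Λ => Function.update X i z),
        (if ∀ j : Fin n, j ≠ i → X j = Z j then J (X i) (Z i) else 0) * ∏ j, K (Z j) (Y j) := by
    symm
    refine Finset.sum_subset (Finset.subset_univ _) fun Z _ hZ => ?_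
    rw [if_neg, zero_mul]
    intro h
    refine hZ (Finset.mem_image.2 ⟨Z i, Finset.mem_univ _, ?_⟩)
    ext j
    by_cases hj : j = i
    · subst hj; simp
    · simp [hj, h j hj]
  rw [h1, Finset.sum_image (fun a _ b _ h => hinj h), Matrix.mul_apply, Finset.mul_sum]
  refine Finset.sum_congr rfl fun z _ => ?_
  rw [if_pos (fun j hj => by simp [hj]), ← Finset.mul_prod_erase _ _ (Finset.mem_univ i)]
  have h2 : ∏ j ∈ Finset.univ.erase i, K (Function.update X i z j) (Y j)
      = ∏ j ∈ Finset.univ.erase i, K (X j) (Y j) := by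
    refine Finset.prod_congr rfl fun j hj => ?_
    rw [Function.update_of_ne (Finset.ne_of_mem_erase hj)]
  rw [h2]
  simp only [Function.update_self]
  ring

open scoped Matrix.Norms.Operator in
/-- `exp (t dΓ(J))` is the `n`-fold tensor power of `exp (t J)`: both solve `F' = dΓ(J) F`. -/
lemma exp_smul_dGam (J : Matrix Λ Λ ℝ) (n : ℕ) (t : ℝ) (X Y : Fin n → Λ) :
    NormedSpace.exp (t • dGam J n) X Y = ∏ i, NormedSpace.exp (t • J) (X i) (Y i) := by
  set F : ℝ → Matrix (Fin n → Λ) (Fin n → Λ) ℝ :=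
    fun s => Matrix.of fun X Y => ∏ i, NormedSpace.exp (s • J) (X i) (Y i) with hF
  have hFder : ∀ s, HasDerivAt F (dGam J n * F s) s := by
    intro s
    refine hasDerivAt_pi.2 fun X => hasDerivAt_pi.2 fun Y => ?_
    have h1 : HasDerivAt (fun r : ℝ => ∏ i, NormedSpace.exp (r • J) (X i) (Y i))
        (∑ i, (∏ j ∈ Finset.univ.erase i, NormedSpace.exp (s • J) (X j) (Y j)) •
          (J * NormedSpace.exp (s • J)) (X i) (Y i)) s := by
      refine HasDerivAt.fun_finsetProd fun i _ => ?_
      have h := hasDerivAt_exp_smul_const' (𝕂 := ℝ) J s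
      exact hasDerivAt_pi.1 (hasDerivAt_pi.1 h (X i)) (Y i)
    refine h1.congr_deriv ?_
    rw [Matrix.mul_apply]
    simp only [hF, Matrix.of_apply, smul_eq_mul]
    exact (dGam_mul_prod_apply J _ n X Y).symm
  have hE : ∀ s : ℝ, HasDerivAt (fun r : ℝ => NormedSpace.exp (r • (-dGam J n)))
      (NormedSpace.exp (s • (-dGam J n)) * (-dGam J n)) s := fun s =>
    hasDerivAt_exp_smul_const (𝕂 := ℝ) (-dGam J n) s
  have hH : ∀ s, HasDerivAt (fun r => NormedSpace.exp (r • (-dGam J n)) * F r) 0 s := by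
    intro s
    refine ((hE s).mul (hFder s)).congr_deriv ?_
    rw [← mul_assoc, mul_neg, neg_mul, neg_add_cancel]
  have hconst := is_const_of_deriv_eq_zero (fun s => (hH s).differentiableAt)
    (fun s => (hH s).deriv) t 0
  have hF0 : F 0 = 1 := by
    ext X Y
    simp only [hF, Matrix.of_apply, zero_smul, NormedSpace.exp_zero, Matrix.one_apply]
    by_cases h : X = Y
    · simp [h]
    · rw [if_neg h]
      obtain ⟨i, hi⟩ := Function.ne_iff.1 h
      exact Finset.prod_eq_zero (Finset.mem_univ i) (by simp [hi])
  simp only [zero_smul, NormedSpace.exp_zero, hF0, mul_one] at hconst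
  have hfin : F t = NormedSpace.exp (t • dGam J n) := by
    have h2 : NormedSpace.exp (t • dGam J n) * NormedSpace.exp (t • (-dGam J n)) = 1 := by
      rw [← Matrix.exp_add_of_commute, smul_neg, add_neg_cancel, NormedSpace.exp_zero]
      exact ((Commute.refl _).neg_right.smul_left _).smul_right _
    calc F t = (NormedSpace.exp (t • dGam J n) * NormedSpace.exp (t • (-dGam J n))) * F t := by
          rw [h2, one_mul]
      _ = _ := by rw [mul_assoc, hconst, mul_one]
  rw [← hfin]
  simp [hF]

lemma dGam_nonneg {J : Matrix Λ Λ ℝ} (hJ : ∀ x y, 0 ≤ J x y) (n : ℕ) (X Y : Fin n → Λ) :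
    0 ≤ dGam J n X Y :=
  Finset.sum_nonneg fun i _ => by split_ifs <;> simp [hJ]

/-- Moving one of `n` particles changes a pair interaction with values in `[0, M]` by at most
`2 n M`. -/
lemma abs_pairSum_sub_le {vv : Λ → Λ → ℝ} {M : ℝ} (h0 : ∀ x y, 0 ≤ vv x y)
    (hM : ∀ x y, vv x y ≤ M) {J : Matrix Λ Λ ℝ} {n : ℕ} {X Y : Fin n → Λ}
    (hXY : dGam J n X Y ≠ 0) :
    |∑ i, ∑ j, vv (X i) (X j) - ∑ i, ∑ j, vv (Y i) (Y j)| ≤ 2 * n * M := by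
  obtain ⟨k, -, hk⟩ := Finset.exists_ne_zero_of_sum_ne_zero hXY
  have hk' : ∀ j, j ≠ k → X j = Y j := by
    by_contra h
    exact hk (if_neg h)
  have hM0 : ∀ x y, |vv (X x) (X y) - vv (Y x) (Y y)| ≤ M := by
    intro x y
    rw [abs_le]
    constructor <;> linarith [h0 (X x) (X y), h0 (Y x) (Y y), hM (X x) (X y), hM (Y x) (Y y)]
  have hMM : 0 ≤ M := (abs_nonneg _).trans (hM0 k k)
  have hterm : ∀ i j, |vv (X i) (X j) - vv (Y i) (Y j)|
      ≤ (if i = k then M else 0) + (if j = k then M else 0) := by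
    intro i j
    by_cases hi : i = k
    · rw [if_pos hi]
      have : (0 : ℝ) ≤ if j = k then M else 0 := by split_ifs <;> simp [hMM]
      linarith [hM0 i j]
    · by_cases hj : j = k
      · rw [if_neg hi, if_pos hj, zero_add]
        exact hM0 i j
      · simp [hi, hj, hk' i hi, hk' j hj]
  simp only [← Finset.sum_sub_distrib]
  calc _ ≤ ∑ i : Fin n, ∑ j : Fin n, ((if i = k then M else 0) + (if j = k then M else 0)) := by
        refine (Finset.abs_sum_le_sum_abs _ _).trans (Finset.sum_le_sum fun i _ => ?_)
        exact (Finset.abs_sum_le_sum_abs _ _).trans (Finset.sum_le_sum fun j _ => hterm i j)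
    _ = 2 * n * M := by
        simp [Finset.sum_add_distrib]
        ring

end SecondQuantization

/-! ### Moments of the standard complex Gaussian -/

section Wick

lemma integral_pow_mul_conj_pow_eq_zero {k l : ℕ} (h : k ≠ l) :
    ∫ z : ℂ, z ^ k * conj z ^ l * ((Real.exp (-‖z‖ ^ 2) : ℝ) : ℂ) = 0 := by
  -- rotating by `c` with `c ^ k * conj c ^ l = -1` turns the integral into its negative
  set θ : ℝ := π / ((k : ℝ) - l) with hθ
  set c : Circle := Circle.exp θ with hc
  have hkl : (k : ℝ) - l ≠ 0 := sub_ne_zero.2 (by exact_mod_cast h)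
  have hcc : (c : ℂ) ^ k * conj (c : ℂ) ^ l = -1 := by
    rw [hc, Circle.coe_exp, ← Complex.exp_conj, ← Complex.exp_nat_mul, ← Complex.exp_nat_mul,
      ← Complex.exp_add, ← Complex.exp_pi_mul_I]
    congr 1
    simp only [map_mul, Complex.conj_ofReal, Complex.conj_I]
    have : ((k : ℂ) - l) * θ = π := by
      rw [hθ]
      have hkl' : (k : ℂ) - l ≠ 0 := by exact_mod_cast hkl
      push_cast
      field_simp
    linear_combination Complex.I * this
  have hmp := (rotation c).measurePreserving
  have h1 := hmp.integral_comp (rotation c).toHomeomorph.measurableEmbedding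
    (fun z : ℂ => z ^ k * conj z ^ l * ((Real.exp (-‖z‖ ^ 2) : ℝ) : ℂ))
  have h2 : ∀ z : ℂ, (rotation c z) ^ k * conj (rotation c z) ^ l
      * ((Real.exp (-‖rotation c z‖ ^ 2) : ℝ) : ℂ)
      = -(z ^ k * conj z ^ l * ((Real.exp (-‖z‖ ^ 2) : ℝ) : ℂ)) := by
    intro z
    rw [LinearIsometryEquiv.norm_map, rotation_apply, map_mul, mul_pow, mul_pow]
    linear_combination (z ^ k * conj z ^ l * ((Real.exp (-‖z‖ ^ 2) : ℝ) : ℂ)) * hcc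
  simp only [h2] at h1
  rw [integral_neg] at h1
  exact self_eq_neg.1 h1.symm

lemma integral_pow_mul_conj_pow (k l : ℕ) :
    ∫ z : ℂ, z ^ k * conj z ^ l * ((Real.exp (-‖z‖ ^ 2) : ℝ) : ℂ)
      = if k = l then (π * (k.factorial : ℝ) : ℂ) else 0 := by
  split_ifs with h
  · subst h
    have h1 : ∀ z : ℂ, z ^ k * conj z ^ k * ((Real.exp (-‖z‖ ^ 2) : ℝ) : ℂ)
        = ((‖z‖ ^ ((2 * k : ℕ) : ℝ) * Real.exp (-‖z‖ ^ (2 : ℝ)) : ℝ) : ℂ) := by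
      intro z
      rw [← mul_pow, Complex.mul_conj, Real.rpow_natCast, Real.rpow_two, Complex.normSq_eq_norm_sq]
      push_cast
      ring
    simp only [h1]
    rw [integral_complex_ofReal, Complex.integral_rpow_mul_exp_neg_rpow (by norm_num)
      (by have : (0 : ℝ) ≤ ((2 * k : ℕ) : ℝ) := Nat.cast_nonneg _
          linarith)]
    have h2 : (((2 * k : ℕ) : ℝ) + 2) / 2 = (k : ℝ) + 1 := by push_cast; ring
    rw [h2, Real.Gamma_nat_eq_factorial]
    push_cast
    ring
  · exact integral_pow_mul_conj_pow_eq_zero h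

variable {Λ : Type*} [Fintype Λ] [DecidableEq Λ]

/-- The occupation number of the site `z` in the configuration `X`. -/
def occ {n : ℕ} (X : Fin n → Λ) (z : Λ) : ℕ := Fintype.card {i // X i = z}

lemma prod_comp_eq_prod_pow_occ {R : Type*} [CommMonoid R] {n : ℕ} (X : Fin n → Λ) (f : Λ → R) :
    ∏ i, f (X i) = ∏ z, f z ^ occ X z := by
  rw [← Fintype.prod_fiberwise' X f]
  simp [occ]

lemma sum_perm_eq_prod_factorial {n : ℕ} (Z W : Fin n → Λ) :
    (∑ g : Equiv.Perm (Fin n), if Z = W ∘ g then (1 : ℂ) else 0)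
      = if occ Z = occ W then ∏ z, ((occ Z z).factorial : ℂ) else 0 := by
  split_ifs with h
  · have hcard : ∀ z, Fintype.card {i // Z i = z} = Fintype.card {i // W i = z} := fun z =>
      congrFun h z
    let g0 : Equiv.Perm (Fin n) := (Equiv.sigmaFiberEquiv Z).symm.trans
      ((Equiv.sigmaCongrRight fun z => Fintype.equivOfCardEq (hcard z)).trans
        (Equiv.sigmaFiberEquiv W))
    have hg0 : W ∘ g0 = Z := by
      ext i
      simp only [g0, Function.comp_apply, Equiv.trans_apply]
      exact ((Fintype.equivOfCardEq (hcard (Z i))) ⟨i, rfl⟩).2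
    rw [← Equiv.sum_comp (Equiv.mulRight g0)]
    have h1 : ∀ g : Equiv.Perm (Fin n), (Z = W ∘ (Equiv.mulRight g0 g)) ↔ W ∘ g = W := by
      intro g
      have : W ∘ (Equiv.mulRight g0 g) = (W ∘ g) ∘ g0 := rfl
      rw [this, ← hg0]
      constructor
      · intro h
        exact (g0.surjective.injective_comp_right h).symm
      · intro h
        rw [h]
    simp only [h1]
    have h2 := DomMulAct.stabilizer_card W
    rw [Fintype.card_subtype] at h2
    rw [Finset.sum_boole, h2]
    push_cast
    refine Finset.prod_congr rfl fun z _ => ?_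
    rw [h]
    rfl
  · refine Finset.sum_eq_zero fun g _ => if_neg fun hZ => h ?_
    ext z
    subst hZ
    exact Fintype.card_congr (g.subtypeEquiv fun i => Iff.rfl)

/-- The squared `ℓ²` norm on the classical field space. -/
def nsq (φ : Λ → ℂ) : ℝ := ∑ z, ‖φ z‖ ^ 2

/-- Wick's theorem for the standard complex Gaussian measure on `ℂ^Λ`. -/
lemma wick_standard {n : ℕ} (Z W : Fin n → Λ) :
    ∫ φ : Λ → ℂ, (∏ i, φ (Z i)) * (∏ i, conj (φ (W i))) * ((Real.exp (-nsq φ) : ℝ) : ℂ)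
      = (π : ℂ) ^ Fintype.card Λ
        * ∑ g : Equiv.Perm (Fin n), if Z = W ∘ g then (1 : ℂ) else 0 := by
  have h1 : ∀ φ : Λ → ℂ, (∏ i, φ (Z i)) * (∏ i, conj (φ (W i))) * ((Real.exp (-nsq φ) : ℝ) : ℂ)
      = ∏ z, (φ z ^ occ Z z * conj (φ z) ^ occ W z * ((Real.exp (-‖φ z‖ ^ 2) : ℝ) : ℂ)) := by
    intro φ
    rw [prod_comp_eq_prod_pow_occ Z φ, prod_comp_eq_prod_pow_occ W (fun z => conj (φ z)),
      Finset.prod_mul_distrib, Finset.prod_mul_distrib, nsq, ← Finset.sum_neg_distrib,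
      Real.exp_sum]
    push_cast
    rfl
  simp only [h1]
  rw [integral_fintype_prod_volume_eq_prod
    (fun z (w : ℂ) => w ^ occ Z z * conj w ^ occ W z * ((Real.exp (-‖w‖ ^ 2) : ℝ) : ℂ))]
  simp only [integral_pow_mul_conj_pow]
  rw [sum_perm_eq_prod_factorial]
  split_ifs with h
  · rw [h]
    simp [Finset.prod_mul_distrib, Finset.card_univ]
  · obtain ⟨z, hz⟩ := Function.ne_iff.1 h
    rw [mul_zero]
    exact Finset.prod_eq_zero (Finset.mem_univ z) (if_neg hz)

/-! ### Integrability against Gaussian weights -/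

lemma nsq_nonneg (φ : Λ → ℂ) : 0 ≤ nsq φ := Finset.sum_nonneg fun _ _ => by positivity

lemma continuous_nsq : Continuous (nsq : (Λ → ℂ) → ℝ) := by
  unfold nsq
  fun_prop

lemma integrable_exp_neg_nsq {c : ℝ} (hc : 0 < c) :
    Integrable (fun φ : Λ → ℂ => Real.exp (-(c * nsq φ))) := by
  have h1 : (fun φ : Λ → ℂ => Real.exp (-(c * nsq φ)))
      = fun φ : Λ → ℂ => ∏ z, Real.exp (-c * ‖φ z‖ ^ (2 : ℝ)) := by
    ext φ
    rw [nsq, ← Real.exp_sum, Finset.mul_sum, ← Finset.sum_neg_distrib]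
    congr 1
    refine Finset.sum_congr rfl fun z _ => by rw [Real.rpow_two]; ring
  rw [h1]
  refine Integrable.fintype_prod (f := fun _ (w : ℂ) => Real.exp (-c * ‖w‖ ^ (2 : ℝ)))
    fun z => ?_
  have h2 := Complex.integral_exp_neg_mul_rpow (p := 2) (b := c) (by norm_num) hc
  by_contra hcon
  rw [integral_undef hcon] at h2
  have : 0 < π * c ^ (-2 / 2 : ℝ) * Real.Gamma (2 / 2 + 1) := by
    have := Real.Gamma_pos_of_pos (s := 2 / 2 + 1) (by norm_num)
    positivity
  linarith

/-- Polynomial growth is integrable against a Gaussian. -/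
lemma integrable_pow_mul_exp_neg_nsq {c : ℝ} (hc : 0 < c) (q : ℕ) :
    Integrable (fun φ : Λ → ℂ => nsq φ ^ q * Real.exp (-(c * nsq φ))) := by
  refine ((integrable_exp_neg_nsq (Λ := Λ) (half_pos hc)).const_mul
    ((q.factorial : ℝ) * (2 / c) ^ q)).mono' ?_ ?_
  · have := continuous_nsq (Λ := Λ)
    exact Continuous.aestronglyMeasurable (by fun_prop)
  · refine ae_of_all _ fun φ => ?_
    have h0 := nsq_nonneg φ
    rw [Real.norm_of_nonneg (by positivity)]
    have h1 := Real.pow_div_factorial_le_exp (x := c / 2 * nsq φ) (by positivity) q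
    have h2 : nsq φ ^ q ≤ (q.factorial : ℝ) * (2 / c) ^ q * Real.exp (c / 2 * nsq φ) := by
      rw [div_le_iff₀ (by positivity), mul_pow] at h1
      calc nsq φ ^ q = (2 / c) ^ q * ((c / 2) ^ q * nsq φ ^ q) := by
            rw [← mul_assoc, ← mul_pow]
            field_simp
            simp
        _ ≤ (2 / c) ^ q * (Real.exp (c / 2 * nsq φ) * q.factorial) := by gcongr
        _ = _ := by ring
    calc nsq φ ^ q * Real.exp (-(c * nsq φ))
        ≤ ((q.factorial : ℝ) * (2 / c) ^ q * Real.exp (c / 2 * nsq φ))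
          * Real.exp (-(c * nsq φ)) := by gcongr
      _ = (q.factorial : ℝ) * (2 / c) ^ q * Real.exp (-(c / 2 * nsq φ)) := by
          rw [mul_assoc, ← Real.exp_add]
          ring_nf

end Wick

/-! ### Gaussian representation of symmetrized tensor powers -/

section Propagator

variable {Λ : Type*} [Fintype Λ] [DecidableEq Λ]

/-- A real matrix acting on complex fields. -/
def app (B : Matrix Λ Λ ℝ) (φ : Λ → ℂ) (x : Λ) : ℂ := ∑ z, (B x z : ℂ) * φ z

/-- The real quadratic form `Re ⟨φ, M φ⟩` of a real matrix on complex fields. -/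
def qf (M : Matrix Λ Λ ℝ) (φ : Λ → ℂ) : ℝ := ∑ x, ∑ z, M x z * (conj (φ x) * φ z).re

lemma continuous_app (B : Matrix Λ Λ ℝ) (x : Λ) : Continuous fun φ : Λ → ℂ => app B φ x := by
  unfold app
  fun_prop

lemma app_smul (B : Matrix Λ Λ ℝ) (r : ℝ) (φ : Λ → ℂ) (x : Λ) :
    app B (r • φ) x = r * app B φ x := by
  simp only [app, Finset.mul_sum, Pi.smul_apply, Complex.real_smul]
  exact Finset.sum_congr rfl fun z _ => by ring

lemma nsq_smul (r : ℝ) (φ : Λ → ℂ) : nsq (r • φ) = r ^ 2 * nsq φ := by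
  simp only [nsq, Finset.mul_sum, Pi.smul_apply, norm_smul, mul_pow, Real.norm_eq_abs, sq_abs]

lemma norm_sq_le_nsq (φ : Λ → ℂ) (z : Λ) : ‖φ z‖ ^ 2 ≤ nsq φ :=
  Finset.single_le_sum (f := fun z => ‖φ z‖ ^ 2) (fun _ _ => by positivity) (Finset.mem_univ z)

lemma norm_prod_le_nsq_pow (φ : Λ → ℂ) {n : ℕ} (Z W : Fin n → Λ) :
    ‖(∏ i, φ (Z i)) * ∏ i, conj (φ (W i))‖ ≤ nsq φ ^ n := by
  rw [← Finset.prod_mul_distrib, norm_prod]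
  calc ∏ i, ‖φ (Z i) * conj (φ (W i))‖ ≤ ∏ _i : Fin n, nsq φ := by
        refine Finset.prod_le_prod (fun _ _ => norm_nonneg _) fun i _ => ?_
        rw [norm_mul, RCLike.norm_conj]
        nlinarith [norm_sq_le_nsq φ (Z i), norm_sq_le_nsq φ (W i),
          sq_nonneg (‖φ (Z i)‖ - ‖φ (W i)‖)]
    _ = nsq φ ^ n := by simp

/-- Wick's theorem for the Gaussian field `B φ`, whose covariance is `B Bᵀ`. -/
lemma wick_app (B : Matrix Λ Λ ℝ) {n : ℕ} (X Y : Fin n → Λ) :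
    ∫ φ : Λ → ℂ, (∏ i, app B φ (X i)) * (∏ i, conj (app B φ (Y i)))
        * ((Real.exp (-nsq φ) : ℝ) : ℂ)
      = (π : ℂ) ^ Fintype.card Λ
        * ((∑ g : Equiv.Perm (Fin n), ∏ i, (B * Bᵀ) (X i) (Y (g i)) : ℝ) : ℂ) := by
  have hexp : ∀ φ : Λ → ℂ, (∏ i, app B φ (X i)) * (∏ i, conj (app B φ (Y i)))
        * ((Real.exp (-nsq φ) : ℝ) : ℂ)
      = ∑ Z : Fin n → Λ, ∑ W : Fin n → Λ, ((∏ i, (B (X i) (Z i) : ℂ)) * ∏ i, (B (Y i) (W i) : ℂ))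
        * ((∏ i, φ (Z i)) * (∏ i, conj (φ (W i))) * ((Real.exp (-nsq φ) : ℝ) : ℂ)) := by
    intro φ
    simp only [app, map_sum, map_mul, Complex.conj_ofReal]
    rw [Finset.prod_univ_sum, Finset.prod_univ_sum, Finset.sum_mul_sum, Finset.sum_mul]
    simp only [Fintype.piFinset_univ]
    refine Finset.sum_congr rfl fun Z _ => ?_
    rw [Finset.sum_mul]
    refine Finset.sum_congr rfl fun W _ => ?_
    rw [Finset.prod_mul_distrib, Finset.prod_mul_distrib]
    ring
  have h_integrable : ∀ Z W : Fin n → Λ, Integrable (fun φ : Λ → ℂ =>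
      (∏ i, φ (Z i)) * (∏ i, conj (φ (W i))) * ((Real.exp (-nsq φ) : ℝ) : ℂ)) := by
    intro Z W
    refine (integrable_pow_mul_exp_neg_nsq (Λ := Λ) one_pos n).mono' ?_ (ae_of_all _ fun φ => ?_)
    · have := continuous_nsq (Λ := Λ)
      exact Continuous.aestronglyMeasurable (by fun_prop)
    · rw [norm_mul, Complex.norm_real, Real.norm_of_nonneg (Real.exp_pos _).le, one_mul]
      exact mul_le_mul_of_nonneg_right (norm_prod_le_nsq_pow φ Z W) (Real.exp_pos _).le
  simp only [hexp]
  rw [integral_finsetSum _ fun Z _ => integrable_finsetSum _ fun W _ => (h_integrable Z W).const_mul _]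
  have h2 : ∀ Z : Fin n → Λ, (∫ φ : Λ → ℂ, ∑ W : Fin n → Λ,
        ((∏ i, (B (X i) (Z i) : ℂ)) * ∏ i, (B (Y i) (W i) : ℂ))
        * ((∏ i, φ (Z i)) * (∏ i, conj (φ (W i))) * ((Real.exp (-nsq φ) : ℝ) : ℂ)))
      = ∑ W : Fin n → Λ, ((∏ i, (B (X i) (Z i) : ℂ)) * ∏ i, (B (Y i) (W i) : ℂ))
        * ((π : ℂ) ^ Fintype.card Λ
          * ∑ g : Equiv.Perm (Fin n), if Z = W ∘ g then (1 : ℂ) else 0) := by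
    intro Z
    rw [integral_finsetSum _ fun W _ => (h_integrable Z W).const_mul _]
    refine Finset.sum_congr rfl fun W _ => ?_
    rw [integral_const_mul, wick_standard]
  simp only [h2]
  rw [Finset.sum_comm]
  simp only [Finset.mul_sum, mul_ite, mul_one, mul_zero]
  have h3 : ∀ W : Fin n → Λ, (∑ Z : Fin n → Λ, ∑ g : Equiv.Perm (Fin n), if Z = W ∘ g then
        (∏ i, (B (X i) (Z i) : ℂ)) * (∏ i, (B (Y i) (W i) : ℂ)) * (π : ℂ) ^ Fintype.card Λ else 0)
      = ∑ g : Equiv.Perm (Fin n), (∏ i, (B (X i) (W (g i)) : ℂ)) * (∏ i, (B (Y i) (W i) : ℂ))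
        * (π : ℂ) ^ Fintype.card Λ := by
    intro W
    rw [Finset.sum_comm]
    refine Finset.sum_congr rfl fun g _ => ?_
    rw [Finset.sum_ite_eq' Finset.univ (W ∘ g), if_pos (Finset.mem_univ _)]
    rfl
  have h4 : ∀ (g : Equiv.Perm (Fin n)), ∑ W : Fin n → Λ,
        (∏ i, (B (X i) (W (g i)) : ℂ)) * (∏ i, (B (Y i) (W i) : ℂ)) * (π : ℂ) ^ Fintype.card Λ
      = (π : ℂ) ^ Fintype.card Λ * ((∏ i, (B * Bᵀ) (X i) (Y (g i)) : ℝ) : ℂ) := by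
    intro g
    rw [← Finset.sum_mul, mul_comm]
    congr 1
    have h5 : ∀ W : Fin n → Λ, (∏ i, (B (X i) (W (g i)) : ℂ)) * (∏ i, (B (Y i) (W i) : ℂ))
        = ∏ i, ((B (X i) (W (g i)) : ℂ) * (B (Y (g i)) (W (g i)) : ℂ)) := by
      intro W
      rw [Finset.prod_mul_distrib, Equiv.prod_comp g (fun i => (B (Y i) (W i) : ℂ))]
    simp only [h5]
    rw [← Equiv.sum_comp (Equiv.arrowCongr g (Equiv.refl Λ))
      (fun W : Fin n → Λ => ∏ i, ((B (X i) (W (g i)) : ℂ) * (B (Y (g i)) (W (g i)) : ℂ)))]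
    simp only [Equiv.arrowCongr_apply, Equiv.coe_refl, Function.comp_apply, id_eq,
      Equiv.symm_apply_apply]
    have h6 := Finset.prod_univ_sum (fun _ : Fin n => (Finset.univ : Finset Λ))
      (fun i w => (B (X i) w : ℂ) * (B (Y (g i)) w : ℂ))
    rw [Fintype.piFinset_univ] at h6
    rw [← h6]
    push_cast
    refine Finset.prod_congr rfl fun i _ => ?_
    rw [Matrix.mul_apply]
    push_cast
    rfl
  simp only [h3]
  rw [Finset.sum_comm]
  simp only [h4]
  rw [← Finset.mul_sum]
  push_cast
  rfl

lemma nsq_app (B : Matrix Λ Λ ℝ) (φ : Λ → ℂ) : nsq (app B φ) = qf (Bᵀ * B) φ := by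
  have h1 : ∀ x, ‖app B φ x‖ ^ 2
      = ∑ z, ∑ w, B x z * B x w * (conj (φ z) * φ w).re := by
    intro x
    have : ((‖app B φ x‖ ^ 2 : ℝ) : ℂ) = conj (app B φ x) * app B φ x := by
      rw [← Complex.normSq_eq_norm_sq, Complex.normSq_eq_conj_mul_self]
    rw [← Complex.ofReal_re (‖app B φ x‖ ^ 2), this]
    simp only [app, map_sum, map_mul, Complex.conj_ofReal]
    rw [Finset.sum_mul_sum, Complex.re_sum]
    refine Finset.sum_congr rfl fun z _ => ?_
    rw [Complex.re_sum]
    refine Finset.sum_congr rfl fun w _ => ?_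
    rw [← Complex.re_ofReal_mul]
    push_cast
    ring_nf
  simp only [nsq, h1, qf, Matrix.mul_apply, Matrix.transpose_apply, Finset.sum_mul]
  rw [Finset.sum_comm]
  refine Finset.sum_congr rfl fun z _ => ?_
  rw [Finset.sum_comm]

lemma qf_one (φ : Λ → ℂ) : qf 1 φ = nsq φ := by
  simp only [qf, nsq, Matrix.one_apply, ite_mul, zero_mul, one_mul]
  refine Finset.sum_congr rfl fun x _ => ?_
  rw [Finset.sum_ite_eq, if_pos (Finset.mem_univ _), ← Complex.normSq_eq_conj_mul_self,
    Complex.ofReal_re, Complex.normSq_eq_norm_sq]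

lemma qf_sub (M N : Matrix Λ Λ ℝ) (φ : Λ → ℂ) : qf (M - N) φ = qf M φ - qf N φ := by
  simp only [qf, Matrix.sub_apply, sub_mul, Finset.sum_sub_distrib]

lemma qf_smul (c : ℝ) (M : Matrix Λ Λ ℝ) (φ : Λ → ℂ) : qf (c • M) φ = c * qf M φ := by
  simp only [qf, Matrix.smul_apply, smul_eq_mul, Finset.mul_sum, mul_assoc]

/-- Schur's test for a symmetric nonnegative matrix with row sums `R`. -/
lemma qf_le {M : Matrix Λ Λ ℝ} (h0 : ∀ x y, 0 ≤ M x y) (hs : Mᵀ = M) {R : ℝ}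
    (hR : ∀ x, ∑ y, M x y = R) (φ : Λ → ℂ) : qf M φ ≤ R * nsq φ := by
  have h1 : qf M φ ≤ ∑ x, ∑ z, (M x z * ‖φ x‖ ^ 2 / 2 + M x z * ‖φ z‖ ^ 2 / 2) := by
    refine Finset.sum_le_sum fun x _ => Finset.sum_le_sum fun z _ => ?_
    have h2 : (conj (φ x) * φ z).re ≤ ‖φ x‖ * ‖φ z‖ := by
      refine (Complex.re_le_norm _).trans ?_
      rw [norm_mul, RCLike.norm_conj]
    have h3 : (conj (φ x) * φ z).re ≤ ‖φ x‖ ^ 2 / 2 + ‖φ z‖ ^ 2 / 2 := by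
      nlinarith [sq_nonneg (‖φ x‖ - ‖φ z‖)]
    calc _ ≤ M x z * (‖φ x‖ ^ 2 / 2 + ‖φ z‖ ^ 2 / 2) := mul_le_mul_of_nonneg_left h3 (h0 x z)
      _ = _ := by ring
  refine h1.trans (le_of_eq ?_)
  simp only [Finset.sum_add_distrib]
  have h4 : ∑ x, ∑ z, M x z * ‖φ x‖ ^ 2 / 2 = R * nsq φ / 2 := by
    simp only [← Finset.sum_div, ← Finset.sum_mul, hR, ← Finset.mul_sum, nsq]
  have h5 : ∑ x, ∑ z, M x z * ‖φ z‖ ^ 2 / 2 = R * nsq φ / 2 := by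
    rw [Finset.sum_comm, ← h4]
    refine Finset.sum_congr rfl fun x _ => Finset.sum_congr rfl fun z _ => ?_
    rw [← congrFun (congrFun hs x) z, Matrix.transpose_apply]
  rw [h4, h5]
  ring

lemma exp_row_sum {J : Matrix Λ Λ ℝ} {D : ℝ} (hD : ∀ x, ∑ y, J x y = D) (ν : ℝ) (x : Λ) :
    ∑ y, NormedSpace.exp (ν • J) x y = Real.exp (ν * D) := by
  have hpow : ∀ (k : ℕ) (x : Λ), ∑ y, (J ^ k) x y = D ^ k := by
    intro k
    induction k with
    | zero => intro x; simp [Matrix.one_apply]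
    | succ k ih =>
      intro x
      simp only [pow_succ, Matrix.mul_apply]
      rw [Finset.sum_comm]
      simp only [← Finset.mul_sum, hD, ← Finset.sum_mul, ih]
  have h1 := hasSum_sum (s := Finset.univ) fun y _ => hasSum_exp_apply (ν • J) x y
  have h2 : HasSum (fun k : ℕ => (ν * D) ^ k / (k.factorial : ℝ)) (Real.exp (ν * D)) := by
    rw [Real.exp_eq_exp_ℝ]
    exact NormedSpace.expSeries_div_hasSum_exp (ν * D)
  refine h1.unique ?_
  convert h2 using 2 with k
  simp only [smul_pow, Matrix.smul_apply, smul_eq_mul, ← Finset.mul_sum, hpow]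
  ring

/-- The square root `exp (-(ν/2) (a - J))` of the one-particle propagator. -/
def hprop (J : Matrix Λ Λ ℝ) (a ν : ℝ) : Matrix Λ Λ ℝ := NormedSpace.exp ((ν / 2) • (J - a • 1))

lemma hprop_transpose {J : Matrix Λ Λ ℝ} (hs : Jᵀ = J) (a ν : ℝ) :
    (hprop J a ν)ᵀ = hprop J a ν := by
  rw [hprop, ← Matrix.exp_transpose]
  simp [hs]

lemma hprop_mul_self (J : Matrix Λ Λ ℝ) (a ν : ℝ) :
    hprop J a ν * hprop J a ν = NormedSpace.exp (ν • (J - a • 1)) := by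
  rw [hprop, ← Matrix.exp_add_of_commute _ _ (Commute.refl _), ← add_smul]
  ring_nf

lemma exp_smul_sub (J : Matrix Λ Λ ℝ) (a ν : ℝ) :
    NormedSpace.exp (ν • (J - a • (1 : Matrix Λ Λ ℝ)))
      = Real.exp (-(ν * a)) • NormedSpace.exp (ν • J) := by
  rw [← exp_add_smul_one]
  congr 1
  rw [smul_sub, smul_smul, neg_smul, sub_eq_add_neg]

lemma nsq_app_hprop {J : Matrix Λ Λ ℝ} (hs : Jᵀ = J) (a ν : ℝ) (φ : Λ → ℂ) :
    nsq (app (hprop J a ν) φ) = qf (NormedSpace.exp (ν • (J - a • 1))) φ := by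
  rw [nsq_app, hprop_transpose hs, hprop_mul_self]

lemma nsq_app_hprop_le {J : Matrix Λ Λ ℝ} (h0 : ∀ x y, 0 ≤ J x y) (hs : Jᵀ = J) {D : ℝ}
    (hD : ∀ x, ∑ y, J x y = D) (a : ℝ) {ν : ℝ} (hν : 0 ≤ ν) (φ : Λ → ℂ) :
    nsq (app (hprop J a ν) φ) ≤ Real.exp (-(ν * (a - D))) * nsq φ := by
  rw [nsq_app_hprop hs, exp_smul_sub, qf_smul]
  have h1 := qf_le (M := NormedSpace.exp (ν • J))
    (exp_apply_nonneg fun x y => mul_nonneg hν (h0 x y))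
    (by rw [← Matrix.exp_transpose, Matrix.transpose_smul, hs]) (exp_row_sum hD ν) φ
  calc _ ≤ Real.exp (-(ν * a)) * (Real.exp (ν * D) * nsq φ) := by gcongr
    _ = _ := by
      rw [← mul_assoc, ← Real.exp_add]
      ring_nf

/-- `(|φ|² - |exp (-ν A / 2) φ|²) / ν → ⟨φ, A φ⟩` as `ν → 0`, with `A = a - J`. -/
lemma tendsto_nsq_sub_div {J : Matrix Λ Λ ℝ} (hs : Jᵀ = J) (a : ℝ) (φ : Λ → ℂ) :
    Tendsto (fun ν : ℝ => (nsq φ - nsq (app (hprop J a ν) φ)) / ν) (𝓝[>] 0)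
      (𝓝 (a * nsq φ - qf J φ)) := by
  set A := J - a • (1 : Matrix Λ Λ ℝ) with hA
  have h1 : HasDerivAt (fun ν : ℝ => qf (NormedSpace.exp (ν • A)) φ)
      (∑ x, ∑ z, A x z * (conj (φ x) * φ z).re) 0 := by
    refine HasDerivAt.fun_sum fun x _ => HasDerivAt.fun_sum fun z _ => ?_
    have h := hasDerivAt_exp_smul_apply A 0
    have h' := (hasDerivAt_pi.1 (hasDerivAt_pi.1 h x) z).mul_const ((conj (φ x) * φ z).re)
    simpa [NormedSpace.exp_zero] using h'
  have h2 := (hasDerivAt_iff_tendsto_slope_zero.1 h1).mono_left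
    (nhdsWithin_mono (0 : ℝ) (s := Set.Ioi 0) fun t ht => ne_of_gt ht)
  have h3 : (∑ x, ∑ z, A x z * (conj (φ x) * φ z).re) = qf J φ - a * nsq φ := by
    change qf A φ = _
    rw [hA, qf_sub, qf_smul, qf_one]
  rw [h3] at h2
  have h4 := h2.neg
  rw [neg_sub] at h4
  refine h4.congr fun ν => ?_
  simp only [nsq_app_hprop hs, ← hA, zero_add, zero_smul, NormedSpace.exp_zero, qf_one, smul_eq_mul]
  rw [div_eq_inv_mul]
  ring

lemma tendsto_app_hprop (J : Matrix Λ Λ ℝ) (a : ℝ) (φ : Λ → ℂ) (x : Λ) :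
    Tendsto (fun ν : ℝ => app (hprop J a ν) φ x) (𝓝[>] 0) (𝓝 (φ x)) := by
  have hc : ∀ z, Tendsto (fun ν : ℝ => hprop J a ν x z) (𝓝[>] 0)
      (𝓝 ((1 : Matrix Λ Λ ℝ) x z)) := by
    intro z
    have h := (hasDerivAt_pi.1 (hasDerivAt_pi.1
      (hasDerivAt_exp_smul_apply (J - a • (1 : Matrix Λ Λ ℝ)) 0) x) z).continuousAt
    have h' := h.tendsto
    simp only [zero_smul, NormedSpace.exp_zero] at h'
    have hl : Tendsto (fun ν : ℝ => ν / 2) (𝓝[>] 0) (𝓝 0) := by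
      have : Tendsto (fun ν : ℝ => ν / 2) (𝓝 0) (𝓝 (0 / 2)) := tendsto_id.div_const 2
      rw [zero_div] at this
      exact this.mono_left nhdsWithin_le_nhds
    exact h'.comp hl
  have : φ x = ∑ z, (((1 : Matrix Λ Λ ℝ) x z : ℝ) : ℂ) * φ z := by
    rw [Finset.sum_eq_single x (fun z _ hz => by simp [Matrix.one_apply_ne' hz])
      (fun h => absurd (Finset.mem_univ x) h)]
    simp
  rw [this]
  refine tendsto_finsetSum _ fun z _ => Tendsto.mul_const _ ?_
  exact (Complex.continuous_ofReal.tendsto _).comp (hc z)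

end Propagator

/-! ### Poisson averages -/

section Poisson

variable {Λ : Type*} [Fintype Λ] [DecidableEq Λ]

lemma HasSum.of_eq {f g : ℕ → ℝ} {a b : ℝ} (h : HasSum f a) (hf : ∀ n, g n = f n) (ha : b = a) :
    HasSum g b := by
  rw [funext hf, ha]
  exact h

lemma occ_eq_sum {n : ℕ} (X : Fin n → Λ) (z : Λ) :
    occ X z = ∑ i, if X i = z then 1 else 0 := by
  rw [occ, Fintype.card_subtype, Finset.card_filter]

lemma occ_append {p n : ℕ} (y : Fin p → Λ) (u : Fin n → Λ) (z : Λ) :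
    occ (Fin.append y u) z = occ y z + occ u z := by
  simp only [occ_eq_sum, Fin.sum_univ_add, Fin.append_left, Fin.append_right]

/-- The total mass of the unnormalized Poisson point process of intensity `ρ`. -/
lemma hasSum_poisson (ρ : Λ → ℝ) :
    HasSum (fun n : ℕ => ((n.factorial : ℝ))⁻¹ * ∑ u : Fin n → Λ, ∏ j, ρ (u j))
      (Real.exp (∑ z, ρ z)) := by
  have h2 : HasSum (fun k : ℕ => (∑ z, ρ z) ^ k / (k.factorial : ℝ)) (Real.exp (∑ z, ρ z)) := by
    rw [Real.exp_eq_exp_ℝ]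
    exact NormedSpace.expSeries_div_hasSum_exp _
  convert h2 using 2 with n
  rw [Fintype.sum_pow, div_eq_inv_mul]

/-- Exponential moments of the occupation numbers of a Poisson point process to which the points
of `y` are added. -/
lemma hasSum_poisson_exp {p : ℕ} (y : Fin p → Λ) (ρ : Λ → ℝ) (θ : ℝ) (z : Λ) :
    HasSum (fun n : ℕ => ((n.factorial : ℝ))⁻¹ * ∑ u : Fin n → Λ, (∏ j, ρ (u j))
        * Real.exp (θ * occ (Fin.append y u) z))
      (Real.exp (θ * occ y z) * Real.exp (∑ w, ρ w + ρ z * (Real.exp θ - 1))) := by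
  have h := (hasSum_poisson fun w => ρ w * Real.exp (if w = z then θ else 0)).mul_left
    (Real.exp (θ * occ y z))
  have e1 : ∑ w, ρ w * Real.exp (if w = z then θ else 0)
      = ∑ w, ρ w + ρ z * (Real.exp θ - 1) := by
    have : ∀ w, ρ w * Real.exp (if w = z then θ else 0)
        = ρ w + if w = z then ρ w * (Real.exp θ - 1) else 0 := by
      intro w
      split_ifs
      · ring
      · simp
    simp only [this, Finset.sum_add_distrib, Finset.sum_ite_eq', Finset.mem_univ, if_true]
  rw [e1] at h
  refine h.of_eq (fun n => ?_) rfl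
  rw [mul_left_comm]
  refine congrArg _ ?_
  rw [Finset.mul_sum]
  refine Finset.sum_congr rfl fun u _ => ?_
  have e2 : θ * occ (Fin.append y u) z
      = θ * occ y z + ∑ j, (if u j = z then θ else 0 : ℝ) := by
    rw [occ_append, Nat.cast_add, mul_add]
    congr 1
    rw [occ_eq_sum, Nat.cast_sum, Finset.mul_sum]
    refine Finset.sum_congr rfl fun j _ => ?_
    split_ifs <;> simp
  rw [e2, Real.exp_add, Real.exp_sum, Finset.prod_mul_distrib]
  ring

/-- The `n`-point term of the unnormalized Poisson average, of intensity `ρ`, of the function `F`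
of the rescaled occupation numbers `ν N_z`, the points of `y` being added to the process. -/
def pois (F : (Λ → ℝ) → ℝ) (ν : ℝ) {p : ℕ} (y : Fin p → Λ) (ρ : Λ → ℝ) (n : ℕ) : ℝ :=
  ((n.factorial : ℝ))⁻¹ * ∑ u : Fin n → Λ, (∏ j, ρ (u j))
    * F (fun z => ν * occ (Fin.append y u) z)

lemma abs_pois_le {F : (Λ → ℝ) → ℝ} (hF : ∀ m, (∀ z, 0 ≤ m z) → |F m| ≤ 1) {ν : ℝ} (hν : 0 ≤ ν)
    {p : ℕ} (y : Fin p → Λ) {ρ : Λ → ℝ} (hρ : ∀ z, 0 ≤ ρ z) (n : ℕ) :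
    |pois F ν y ρ n| ≤ ((n.factorial : ℝ))⁻¹ * ∑ u : Fin n → Λ, ∏ j, ρ (u j) := by
  rw [pois, abs_mul, abs_of_nonneg (by positivity : (0 : ℝ) ≤ ((n.factorial : ℝ))⁻¹)]
  refine mul_le_mul_of_nonneg_left ?_ (by positivity)
  refine (Finset.abs_sum_le_sum_abs _ _).trans (Finset.sum_le_sum fun u _ => ?_)
  have h0 : 0 ≤ ∏ j, ρ (u j) := Finset.prod_nonneg fun j _ => hρ _
  rw [abs_mul, abs_of_nonneg h0]
  exact mul_le_of_le_one_right h0 (hF _ fun z => by positivity)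

lemma summable_pois {F : (Λ → ℝ) → ℝ} (hF : ∀ m, (∀ z, 0 ≤ m z) → |F m| ≤ 1) {ν : ℝ} (hν : 0 ≤ ν)
    {p : ℕ} (y : Fin p → Λ) {ρ : Λ → ℝ} (hρ : ∀ z, 0 ≤ ρ z) : Summable (pois F ν y ρ) :=
  Summable.of_norm_bounded (hasSum_poisson ρ).summable fun n => abs_pois_le hF hν y hρ n

lemma abs_tsum_pois_le {F : (Λ → ℝ) → ℝ} (hF : ∀ m, (∀ z, 0 ≤ m z) → |F m| ≤ 1) {ν : ℝ}
    (hν : 0 ≤ ν) {p : ℕ} (y : Fin p → Λ) {ρ : Λ → ℝ} (hρ : ∀ z, 0 ≤ ρ z) :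
    |∑' n, pois F ν y ρ n| ≤ Real.exp (∑ z, ρ z) := by
  rw [← Real.norm_eq_abs]
  exact tsum_of_norm_bounded (hasSum_poisson ρ) fun n => abs_pois_le hF hν y hρ n

/-- A continuous bounded function is close to its value at `r`, up to a multiple of the
exponential deviation `∑ z, (cosh (m z - r z) - 1)`. -/
lemma exists_abs_sub_le_cosh {F : (Λ → ℝ) → ℝ} (hF : ∀ m, (∀ z, 0 ≤ m z) → |F m| ≤ 1)
    (hc : Continuous F) {r : Λ → ℝ} (hr : ∀ z, 0 ≤ r z) {η : ℝ} (hη : 0 < η) :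
    ∃ C : ℝ, 0 ≤ C ∧ ∀ m, (∀ z, 0 ≤ m z) →
      |F m - F r| ≤ η + C * ∑ z, (Real.cosh (m z - r z) - 1) := by
  obtain ⟨δ, hδ, h⟩ := Metric.continuous_iff.1 hc r η hη
  have hch : 0 < Real.cosh δ - 1 := by
    have := Real.one_lt_cosh.2 hδ.ne'
    linarith
  refine ⟨2 / (Real.cosh δ - 1), by positivity, fun m hm => ?_⟩
  have hnn : ∀ z ∈ Finset.univ, 0 ≤ Real.cosh (m z - r z) - 1 := fun z _ => by
    have := Real.one_le_cosh (m z - r z)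
    linarith
  by_cases hd : dist m r < δ
  · have h1 := h m hd
    rw [Real.dist_eq] at h1
    have : 0 ≤ 2 / (Real.cosh δ - 1) * ∑ z, (Real.cosh (m z - r z) - 1) :=
      mul_nonneg (by positivity) (Finset.sum_nonneg hnn)
    linarith
  · have : ∃ z, δ ≤ |m z - r z| := by
      by_contra! hcon
      exact hd ((dist_pi_lt_iff hδ).2 fun z => by rw [Real.dist_eq]; exact hcon z)
    obtain ⟨z, hz⟩ := this
    have h1 : Real.cosh δ - 1 ≤ ∑ z, (Real.cosh (m z - r z) - 1) := by
      refine le_trans ?_ (Finset.single_le_sum hnn (Finset.mem_univ z))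
      have : Real.cosh δ ≤ Real.cosh (m z - r z) :=
        Real.cosh_le_cosh.2 (by rwa [abs_of_pos hδ])
      linarith
    have h2 : 2 ≤ 2 / (Real.cosh δ - 1) * ∑ z, (Real.cosh (m z - r z) - 1) := by
      rw [div_mul_eq_mul_div, le_div_iff₀ hch]
      linarith
    have h3 : |F m - F r| ≤ 1 + 1 := (abs_sub _ _).trans (add_le_add (hF m hm) (hF r hr))
    linarith

/-- The Poisson average of the deviation `cosh (ν N_z - r) - 1`. -/
lemma hasSum_poisson_cosh {p : ℕ} (y : Fin p → Λ) (ρ : Λ → ℝ) (ν r : ℝ) (z : Λ) :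
    HasSum (fun n : ℕ => ((n.factorial : ℝ))⁻¹ * ∑ u : Fin n → Λ, (∏ j, ρ (u j))
        * (Real.cosh (ν * occ (Fin.append y u) z - r) - 1))
      (Real.exp (∑ w, ρ w) *
        ((Real.exp (ν * occ y z - r + ρ z * (Real.exp ν - 1))
          + Real.exp (-(ν * occ y z) + r + ρ z * (Real.exp (-ν) - 1))) / 2 - 1)) := by
  have h1 := (hasSum_poisson_exp y ρ ν z).mul_left (Real.exp (-r) / 2)
  have h2 := (hasSum_poisson_exp y ρ (-ν) z).mul_left (Real.exp r / 2)
  refine ((h1.add h2).sub (hasSum_poisson ρ)).of_eq (fun n => ?_) ?_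
  · rw [mul_left_comm (Real.exp (-r) / 2), mul_left_comm (Real.exp r / 2), ← mul_add, ← mul_sub]
    refine congrArg _ ?_
    rw [Finset.mul_sum, Finset.mul_sum, ← Finset.sum_add_distrib, ← Finset.sum_sub_distrib]
    refine Finset.sum_congr rfl fun u _ => ?_
    rw [Real.cosh_eq, sub_eq_add_neg (ν * _) r, neg_add, neg_neg, Real.exp_add, Real.exp_add,
      neg_mul]
    ring
  · simp only [Real.exp_add, sub_eq_add_neg _ r, neg_mul]
    ring

/-- Law of large numbers: at intensity `r ν / ν`, with `r ν → r₀`, the rescaled occupation numbers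
concentrate at `r₀`. -/
lemma tendsto_tsum_pois {F : (Λ → ℝ) → ℝ} (hF : ∀ m, (∀ z, 0 ≤ m z) → |F m| ≤ 1)
    (hc : Continuous F) {p : ℕ} (y : Fin p → Λ) {r : ℝ → Λ → ℝ} (hr : ∀ ν z, 0 ≤ r ν z)
    {r₀ : Λ → ℝ} (hr₀ : ∀ z, 0 ≤ r₀ z)
    (hlim : ∀ z, Tendsto (fun ν => r ν z) (𝓝[>] 0) (𝓝 (r₀ z))) :
    Tendsto (fun ν => Real.exp (-∑ z, r ν z / ν) * ∑' n, pois F ν y (fun z => r ν z / ν) n)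
      (𝓝[>] 0) (𝓝 (F r₀)) := by
  rw [Metric.tendsto_nhds]
  intro η hη
  obtain ⟨C, hC, hFC⟩ := exists_abs_sub_le_cosh hF hc hr₀ (half_pos hη)
  -- the normalized Poisson average of the deviation
  set G : ℝ → ℝ := fun ν => η / 2 + C * ∑ z,
    ((Real.exp (ν * occ y z - r₀ z + r ν z / ν * (Real.exp ν - 1))
      + Real.exp (-(ν * occ y z) + r₀ z + r ν z / ν * (Real.exp (-ν) - 1))) / 2 - 1) with hG
  have hle : ∀ ν, 0 < ν → |Real.exp (-∑ z, r ν z / ν)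
      * ∑' n, pois F ν y (fun z => r ν z / ν) n - F r₀| ≤ G ν := by
    intro ν hν
    have hρ : ∀ z, 0 ≤ r ν z / ν := fun z => div_nonneg (hr ν z) hν.le
    have s1 : HasSum (fun n : ℕ => pois F ν y (fun z => r ν z / ν) n
        - F r₀ * (((n.factorial : ℝ))⁻¹ * ∑ u : Fin n → Λ, ∏ j, r ν (u j) / ν))
        (∑' n, pois F ν y (fun z => r ν z / ν) n - F r₀ * Real.exp (∑ z, r ν z / ν)) :=
      (summable_pois hF hν.le y hρ).hasSum.sub ((hasSum_poisson fun z => r ν z / ν).mul_left _)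
    have s2 := ((hasSum_poisson fun z => r ν z / ν).mul_left (η / 2)).add
      ((hasSum_sum (s := Finset.univ) fun z _ =>
        hasSum_poisson_cosh y (fun z => r ν z / ν) ν (r₀ z) z).mul_left C)
    have s3 := tsum_of_norm_bounded (f := fun n : ℕ => pois F ν y (fun z => r ν z / ν) n
        - F r₀ * (((n.factorial : ℝ))⁻¹ * ∑ u : Fin n → Λ, ∏ j, r ν (u j) / ν)) s2 ?_
    · rw [s1.tsum_eq, Real.norm_eq_abs] at s3
      have e : Real.exp (-∑ z, r ν z / ν) * ∑' n, pois F ν y (fun z => r ν z / ν) n - F r₀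
          = Real.exp (-∑ z, r ν z / ν) * (∑' n, pois F ν y (fun z => r ν z / ν) n
            - F r₀ * Real.exp (∑ z, r ν z / ν)) := by
        rw [mul_sub, mul_left_comm, ← Real.exp_add]
        simp
      rw [e, abs_mul, abs_of_pos (Real.exp_pos _)]
      refine (mul_le_mul_of_nonneg_left s3 (Real.exp_pos _).le).trans (le_of_eq ?_)
      rw [← Finset.mul_sum, hG, mul_add, mul_left_comm _ (η / 2), mul_left_comm _ C,
        ← mul_assoc (Real.exp (-∑ z, r ν z / ν)), ← Real.exp_add]
      simp
    · intro n
      rw [pois, Real.norm_eq_abs, mul_left_comm (F r₀), ← mul_sub, Finset.mul_sum,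
        ← Finset.sum_sub_distrib, abs_mul, abs_of_nonneg (by positivity : (0:ℝ) ≤ (n.factorial : ℝ)⁻¹)]
      simp only [← Finset.mul_sum]
      rw [mul_left_comm (η / 2), mul_left_comm C, ← mul_add]
      refine mul_le_mul_of_nonneg_left ?_ (by positivity)
      rw [Finset.sum_comm, Finset.mul_sum, Finset.mul_sum, ← Finset.sum_add_distrib]
      refine (Finset.abs_sum_le_sum_abs _ _).trans (Finset.sum_le_sum fun u _ => ?_)
      have h0 : 0 ≤ ∏ j, r ν (u j) / ν := Finset.prod_nonneg fun j _ => hρ _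
      rw [mul_comm (F r₀), ← mul_sub, abs_mul, abs_of_nonneg h0]
      refine (mul_le_mul_of_nonneg_left (hFC _ fun z => by positivity) h0).trans (le_of_eq ?_)
      rw [← Finset.mul_sum]
      ring
  have hGlim : Tendsto G (𝓝[>] 0) (𝓝 (η / 2)) := by
    have hid : Tendsto (fun ν : ℝ => ν) (𝓝[>] 0) (𝓝 0) :=
      tendsto_id.mono_left nhdsWithin_le_nhds
    have hd1 : Tendsto (fun ν : ℝ => (Real.exp ν - 1) / ν) (𝓝[>] 0) (𝓝 1) := by
      have := (Real.hasDerivAt_exp 0).tendsto_slope_zero_right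
      simp only [zero_add, Real.exp_zero, smul_eq_mul] at this
      exact this.congr fun ν => by ring
    have hd2 : Tendsto (fun ν : ℝ => (Real.exp (-ν) - 1) / ν) (𝓝[>] 0) (𝓝 (-1)) := by
      have h := ((hasDerivAt_neg (0 : ℝ)).exp).tendsto_slope_zero_right
      simp only [zero_add, neg_zero, Real.exp_zero, smul_eq_mul, one_mul] at h
      exact h.congr fun ν => by ring
    have hz : ∀ z, Tendsto (fun ν =>
        (Real.exp (ν * occ y z - r₀ z + r ν z / ν * (Real.exp ν - 1))
        + Real.exp (-(ν * occ y z) + r₀ z + r ν z / ν * (Real.exp (-ν) - 1))) / 2 - 1)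
        (𝓝[>] 0) (𝓝 0) := by
      intro z
      have t1 : Tendsto (fun ν => ν * occ y z - r₀ z + r ν z / ν * (Real.exp ν - 1))
          (𝓝[>] 0) (𝓝 (0 * occ y z - r₀ z + r₀ z * 1)) :=
        (((hid.mul_const _).sub_const _).add ((hlim z).mul hd1)).congr fun ν => by ring
      have t2 : Tendsto (fun ν => -(ν * occ y z) + r₀ z + r ν z / ν * (Real.exp (-ν) - 1))
          (𝓝[>] 0) (𝓝 (-(0 * occ y z) + r₀ z + r₀ z * (-1))) :=
        (((hid.mul_const _).neg.add_const _).add ((hlim z).mul hd2)).congr fun ν => by ring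
      have := (((t1.rexp).add t2.rexp).div_const 2).sub_const 1
      convert this using 2
      simp
    have := ((tendsto_finsetSum Finset.univ fun z _ => hz z).const_mul C).const_add (η / 2)
    rwa [Finset.sum_const_zero, mul_zero, add_zero] at this
  filter_upwards [self_mem_nhdsWithin, hGlim.eventually (gt_mem_nhds (half_lt_self hη))]
    with ν hν hG'
  rw [Real.dist_eq]
  exact (hle ν hν).trans_lt hG'

end Poisson

/-! ### The ideal Bose gas in an external weight of its occupation numbers -/

section MainTerm

variable {Λ : Type*} [Fintype Λ] [DecidableEq Λ]

/-- The contribution, with `n` traced-out particles, of symmetrized products of the one-particle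
kernel `K`, weighted by the function `F` of the rescaled occupation numbers. -/
def kterm (K : Matrix Λ Λ ℝ) (F : (Λ → ℝ) → ℝ) (ν : ℝ) {p : ℕ} (x y : Fin p → Λ) (n : ℕ) : ℝ :=
  ((n.factorial : ℝ))⁻¹ * ∑ u : Fin n → Λ,
    (∑ g : Equiv.Perm (Fin (p + n)), ∏ i, K (Fin.append x u i) (Fin.append y u (g i)))
      * F (fun z => ν * occ (Fin.append y u) z)

lemma continuous_app_fun (B : Matrix Λ Λ ℝ) : Continuous fun φ : Λ → ℂ => app B φ :=
  continuous_pi fun x => continuous_app B x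

lemma continuous_nsq_app (B : Matrix Λ Λ ℝ) : Continuous fun φ : Λ → ℂ => nsq (app B φ) :=
  continuous_nsq.comp (continuous_app_fun B)

lemma continuous_pois_app (B : Matrix Λ Λ ℝ) (F : (Λ → ℝ) → ℝ) (ν c : ℝ) {p : ℕ} (y : Fin p → Λ)
    (n : ℕ) : Continuous fun φ : Λ → ℂ => pois F ν y (fun z => ‖app B φ z‖ ^ 2 / c) n := by
  unfold pois
  have := fun x => continuous_app B x
  fun_prop

lemma integrable_app (B : Matrix Λ Λ ℝ) (hB : ∀ φ, nsq (app B φ) ≤ nsq φ) {n : ℕ}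
    (X Y : Fin n → Λ) :
    Integrable fun φ : Λ → ℂ => (∏ i, app B φ (X i)) * (∏ i, conj (app B φ (Y i)))
        * ((Real.exp (-nsq φ) : ℝ) : ℂ) := by
  refine (integrable_pow_mul_exp_neg_nsq (Λ := Λ) one_pos n).mono' ?_ (ae_of_all _ fun φ => ?_)
  · have := continuous_nsq (Λ := Λ)
    have := fun x => continuous_app B x
    exact Continuous.aestronglyMeasurable (by fun_prop)
  · rw [norm_mul, Complex.norm_real, Real.norm_of_nonneg (Real.exp_pos _).le, one_mul]
    refine mul_le_mul_of_nonneg_right ?_ (Real.exp_pos _).le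
    exact (norm_prod_le_nsq_pow _ X Y).trans (pow_le_pow_left₀ (nsq_nonneg _) (hB φ) n)

/-- Gaussian representation of `kterm`: the traced-out particles become a Poisson process whose
intensity is the squared modulus of the Gaussian field. -/
lemma integral_pois_app (B : Matrix Λ Λ ℝ) (hB : ∀ φ, nsq (app B φ) ≤ nsq φ)
    (F : (Λ → ℝ) → ℝ) (ν : ℝ) {p : ℕ} (x y : Fin p → Λ) (n : ℕ) :
    ∫ φ : Λ → ℂ, (pois F ν y (fun z => ‖app B φ z‖ ^ 2) n : ℂ)
        * ((∏ i, app B φ (x i)) * ∏ i, conj (app B φ (y i))) * ((Real.exp (-nsq φ) : ℝ) : ℂ)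
      = (π : ℂ) ^ Fintype.card Λ * (kterm (B * Bᵀ) F ν x y n : ℂ) := by
  have hexp : ∀ φ : Λ → ℂ, (pois F ν y (fun z => ‖app B φ z‖ ^ 2) n : ℂ)
        * ((∏ i, app B φ (x i)) * ∏ i, conj (app B φ (y i))) * ((Real.exp (-nsq φ) : ℝ) : ℂ)
      = ∑ u : Fin n → Λ, (((n.factorial : ℝ)⁻¹ * F (fun z => ν * occ (Fin.append y u) z) : ℝ) : ℂ)
        * ((∏ i, app B φ (Fin.append x u i)) * (∏ i, conj (app B φ (Fin.append y u i)))
        * ((Real.exp (-nsq φ) : ℝ) : ℂ)) := by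
    intro φ
    rw [pois, Complex.ofReal_mul, Complex.ofReal_sum, Finset.mul_sum, Finset.sum_mul,
      Finset.sum_mul]
    refine Finset.sum_congr rfl fun u _ => ?_
    simp only [Fin.prod_univ_add, Fin.append_left, Fin.append_right]
    have : ((∏ j, ‖app B φ (u j)‖ ^ 2 : ℝ) : ℂ)
        = (∏ j, app B φ (u j)) * ∏ j, conj (app B φ (u j)) := by
      rw [← Finset.prod_mul_distrib, Complex.ofReal_prod]
      refine Finset.prod_congr rfl fun j _ => ?_
      rw [Complex.mul_conj, Complex.normSq_eq_norm_sq]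
    rw [Complex.ofReal_mul, this, Complex.ofReal_mul]
    ring
  simp only [hexp]
  rw [integral_finsetSum _ fun u _ => (integrable_app B hB _ _).const_mul _]
  simp only [integral_const_mul, wick_app]
  rw [kterm, Complex.ofReal_mul, Complex.ofReal_sum, Finset.mul_sum, Finset.mul_sum]
  refine Finset.sum_congr rfl fun u _ => ?_
  push_cast
  ring

/-- The sum over the number of traced-out particles of the Gaussian representation. -/
lemma hasSum_kterm (B : Matrix Λ Λ ℝ) {q : ℝ} (hq : q < 1)
    (hB : ∀ φ, nsq (app B φ) ≤ q * nsq φ) {F : (Λ → ℝ) → ℝ}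
    (hF : ∀ m, (∀ z, 0 ≤ m z) → |F m| ≤ 1) {ν : ℝ} (hν : 0 ≤ ν) {p : ℕ} (x y : Fin p → Λ) :
    HasSum (fun n => (π : ℂ) ^ Fintype.card Λ * (kterm (B * Bᵀ) F ν x y n : ℂ))
      (∫ φ : Λ → ℂ, ((∑' n, pois F ν y (fun z => ‖app B φ z‖ ^ 2) n : ℝ) : ℂ)
        * ((∏ i, app B φ (x i)) * ∏ i, conj (app B φ (y i)))
        * ((Real.exp (-nsq φ) : ℝ) : ℂ)) := by
  have hB1 : ∀ φ, nsq (app B φ) ≤ nsq φ := fun φ =>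
    (hB φ).trans (mul_le_of_le_one_left (nsq_nonneg φ) hq.le)
  simp only [← integral_pois_app B hB1]
  have hsum : ∀ φ : Λ → ℂ, HasSum (fun n : ℕ => ((n.factorial : ℝ))⁻¹
      * (∑ u : Fin n → Λ, ∏ j, ‖app B φ (u j)‖ ^ 2) * (nsq φ ^ p * Real.exp (-nsq φ)))
      (Real.exp (nsq (app B φ)) * (nsq φ ^ p * Real.exp (-nsq φ))) := fun φ =>
    (hasSum_poisson fun z => ‖app B φ z‖ ^ 2).mul_right _
  refine hasSum_integral_of_dominated_convergence (fun n φ => ((n.factorial : ℝ))⁻¹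
      * (∑ u : Fin n → Λ, ∏ j, ‖app B φ (u j)‖ ^ 2) * (nsq φ ^ p * Real.exp (-nsq φ)))
    ?_ ?_ (ae_of_all _ fun φ => (hsum φ).summable) ?_ (ae_of_all _ fun φ => ?_)
  · intro n
    have h1 := continuous_nsq (Λ := Λ)
    have h2 := fun x => continuous_app B x
    have h3 := continuous_pois_app B F ν 1 y n
    simp only [div_one] at h3
    have h4 := Complex.continuous_ofReal.comp h3
    simp only [Function.comp_def] at h4
    refine Continuous.aestronglyMeasurable (Continuous.mul (Continuous.mul h4 ?_) ?_) <;> fun_prop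
  · refine fun n => ae_of_all _ fun φ => ?_
    rw [norm_mul, norm_mul, Complex.norm_real, Complex.norm_real,
      Real.norm_of_nonneg (Real.exp_pos _).le, mul_assoc]
    refine mul_le_mul (abs_pois_le hF hν y (fun z => by positivity) n)
      (mul_le_mul_of_nonneg_right ?_ (Real.exp_pos _).le)
      (mul_nonneg (norm_nonneg _) (Real.exp_pos _).le) ?_
    · exact (norm_prod_le_nsq_pow _ x y).trans (pow_le_pow_left₀ (nsq_nonneg _) (hB1 φ) p)
    · exact mul_nonneg (by positivity) (Finset.sum_nonneg fun u _ =>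
        Finset.prod_nonneg fun j _ => by positivity)
  · simp only [fun φ => (hsum φ).tsum_eq]
    refine (integrable_pow_mul_exp_neg_nsq (Λ := Λ) (sub_pos.2 hq) p).mono' ?_
      (ae_of_all _ fun φ => ?_)
    · have h1 := continuous_nsq (Λ := Λ)
      have h2 := continuous_nsq_app B
      exact Continuous.aestronglyMeasurable (by fun_prop)
    · have h0 := nsq_nonneg φ
      rw [Real.norm_of_nonneg (by positivity), mul_left_comm, ← Real.exp_add]
      refine mul_le_mul_of_nonneg_left (Real.exp_le_exp.2 ?_) (by positivity)
      linarith [hB φ]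
  · have hs := (summable_pois hF hν y (ρ := fun z => ‖app B φ z‖ ^ 2)
      fun z => by positivity).hasSum
    exact ((Complex.hasSum_ofReal.2 hs).mul_right _).mul_right _

/-- The change of variables `φ ↦ φ / √ν`. -/
lemma integral_scaling {ν : ℝ} (hν : 0 < ν) (f : (Λ → ℂ) → ℂ) :
    (ν : ℂ) ^ Fintype.card Λ * ∫ φ : Λ → ℂ, f φ = ∫ φ : Λ → ℂ, f ((√ν)⁻¹ • φ) := by
  rw [Measure.integral_comp_smul]
  have hr : Module.finrank ℝ (Λ → ℂ) = 2 * Fintype.card Λ := by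
    rw [Module.finrank_pi_fintype]
    simp [Complex.finrank_real_complex, mul_comm]
  rw [hr, pow_mul, inv_pow, Real.sq_sqrt hν.le, inv_pow, inv_inv, abs_of_pos (by positivity),
    Complex.real_smul]
  push_cast
  rfl

/-- The rescaled integrand of the Gaussian representation. -/
def gint (B : Matrix Λ Λ ℝ) (F : (Λ → ℝ) → ℝ) (ν : ℝ) {p : ℕ} (x y : Fin p → Λ) (φ : Λ → ℂ) : ℂ :=
  ((Real.exp (-((nsq φ - nsq (app B φ)) / ν))
      * (Real.exp (-∑ z, ‖app B φ z‖ ^ 2 / ν)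
        * ∑' n, pois F ν y (fun z => ‖app B φ z‖ ^ 2 / ν) n) : ℝ) : ℂ)
    * ((∏ i, app B φ (x i)) * ∏ i, conj (app B φ (y i)))

lemma pow_mul_integral_eq (B : Matrix Λ Λ ℝ) (F : (Λ → ℝ) → ℝ) {ν : ℝ} (hν : 0 < ν) {p : ℕ}
    (x y : Fin p → Λ) :
    (ν : ℂ) ^ (p + Fintype.card Λ)
        * (∫ φ : Λ → ℂ, ((∑' n, pois F ν y (fun z => ‖app B φ z‖ ^ 2) n : ℝ) : ℂ)
          * ((∏ i, app B φ (x i)) * ∏ i, conj (app B φ (y i)))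
          * ((Real.exp (-nsq φ) : ℝ) : ℂ))
      = ∫ φ : Λ → ℂ, gint B F ν x y φ := by
  rw [pow_add, mul_assoc, integral_scaling hν, ← integral_const_mul]
  refine integral_congr_ae (ae_of_all _ fun φ => ?_)
  have hs2 : ((√ν)⁻¹) ^ 2 = ν⁻¹ := by rw [inv_pow, Real.sq_sqrt hν.le]
  have hs2' : (((√ν)⁻¹ : ℝ) : ℂ) ^ 2 = (ν : ℂ)⁻¹ := by exact_mod_cast congrArg Complex.ofReal hs2
  simp only [gint, app_smul, nsq_smul, hs2, norm_mul, Complex.norm_real, mul_pow,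
    Real.norm_eq_abs, sq_abs, map_mul, Complex.conj_ofReal, Finset.prod_mul_distrib,
    Finset.prod_const, Finset.card_univ, Fintype.card_fin]
  have e1 : ∀ z, ν⁻¹ * ‖app B φ z‖ ^ 2 = ‖app B φ z‖ ^ 2 / ν := fun z => by ring
  simp only [e1]
  have e2 : Real.exp (-(ν⁻¹ * nsq φ)) = Real.exp (-((nsq φ - nsq (app B φ)) / ν))
      * Real.exp (-∑ z, ‖app B φ z‖ ^ 2 / ν) := by
    rw [← Real.exp_add]
    congr 1
    rw [← Finset.sum_div, show ∑ z, ‖app B φ z‖ ^ 2 = nsq (app B φ) from rfl]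
    ring
  have e3 : (ν : ℂ) ^ p * ((((√ν)⁻¹ : ℝ) : ℂ) ^ p * (((√ν)⁻¹ : ℝ) : ℂ) ^ p) = 1 := by
    rw [← mul_pow, ← sq, hs2', ← mul_pow, mul_inv_cancel₀ (by exact_mod_cast hν.ne'), one_pow]
  rw [e2]
  push_cast at e3 ⊢
  linear_combination (Complex.exp (-(((nsq φ : ℂ) - nsq (app B φ)) / ν))
    * Complex.exp (-∑ z, (‖app B φ z‖ : ℂ) ^ 2 / ν)
    * (∑' n, (pois F ν y (fun z => ‖app B φ z‖ ^ 2 / ν) n : ℂ))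
    * ((∏ i, app B φ (x i)) * ∏ i, conj (app B φ (y i)))) * e3

lemma norm_gint_le (B : Matrix Λ Λ ℝ) {c ν : ℝ} (hν : 0 < ν) (hc : 0 ≤ c)
    (hB : ∀ φ, nsq (app B φ) ≤ (1 - c * ν) * nsq φ) {F : (Λ → ℝ) → ℝ}
    (hF : ∀ m, (∀ z, 0 ≤ m z) → |F m| ≤ 1) {p : ℕ} (x y : Fin p → Λ) (φ : Λ → ℂ) :
    ‖gint B F ν x y φ‖ ≤ nsq φ ^ p * Real.exp (-(c * nsq φ)) := by
  have h0 := nsq_nonneg φ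
  have hB1 : nsq (app B φ) ≤ nsq φ := (hB φ).trans (mul_le_of_le_one_left h0 (by nlinarith))
  have h1 : |Real.exp (-∑ z, ‖app B φ z‖ ^ 2 / ν)
        * ∑' n, pois F ν y (fun z => ‖app B φ z‖ ^ 2 / ν) n| ≤ 1 := by
    rw [abs_mul, abs_of_pos (Real.exp_pos _)]
    refine (mul_le_mul_of_nonneg_left (abs_tsum_pois_le hF hν.le y
      (ρ := fun z => ‖app B φ z‖ ^ 2 / ν) fun z => by positivity) (Real.exp_pos _).le).trans ?_
    rw [← Real.exp_add]
    simp
  have h2 : Real.exp (-((nsq φ - nsq (app B φ)) / ν)) ≤ Real.exp (-(c * nsq φ)) := by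
    refine Real.exp_le_exp.2 (neg_le_neg ?_)
    rw [le_div_iff₀ hν]
    nlinarith [hB φ]
  rw [gint, norm_mul, Complex.norm_real, Real.norm_eq_abs, abs_mul, abs_of_pos (Real.exp_pos _),
    mul_comm (nsq φ ^ p)]
  refine mul_le_mul ((mul_le_of_le_one_right (Real.exp_pos _).le h1).trans h2)
    ((norm_prod_le_nsq_pow _ x y).trans (pow_le_pow_left₀ (nsq_nonneg _) hB1 p))
    (norm_nonneg _) (Real.exp_pos _).le

lemma aestronglyMeasurable_gint (B : Matrix Λ Λ ℝ) {ν : ℝ} (hν : 0 < ν) {F : (Λ → ℝ) → ℝ}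
    (hF : ∀ m, (∀ z, 0 ≤ m z) → |F m| ≤ 1) {p : ℕ} (x y : Fin p → Λ) :
    AEStronglyMeasurable (gint B F ν x y) := by
  have h1 := continuous_nsq (Λ := Λ)
  have h2 := fun x => continuous_app B x
  have h3 := continuous_nsq_app B
  have h4 : Measurable fun φ : Λ → ℂ => ∑' n, pois F ν y (fun z => ‖app B φ z‖ ^ 2 / ν) n := by
    refine measurable_of_tendsto_metrizable
      (f := fun N (φ : Λ → ℂ) => ∑ n ∈ Finset.range N, pois F ν y (fun z => ‖app B φ z‖ ^ 2 / ν) n)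
      (fun N => ?_) (tendsto_pi_nhds.2 fun φ => ?_)
    · exact (continuous_finsetSum _ fun n _ => continuous_pois_app B F ν ν y n).measurable
    · exact (summable_pois hF hν.le y (ρ := fun z => ‖app B φ z‖ ^ 2 / ν)
        fun z => by positivity).hasSum.tendsto_sum_nat
  refine Measurable.aestronglyMeasurable ?_
  unfold gint
  refine Measurable.mul (Complex.measurable_ofReal.comp (Measurable.mul ?_ (Measurable.mul ?_ h4)))
    ?_
  · exact Continuous.measurable (by fun_prop)
  · exact Continuous.measurable (by fun_prop)
  · exact Continuous.measurable (by fun_prop)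

/-- The classical integral against the Gaussian density `exp (-⟨φ, (a - J) φ⟩)`, with the weight `F`
of the local mass `|φ|²`. -/
def clInt (J : Matrix Λ Λ ℝ) (a : ℝ) (F : (Λ → ℝ) → ℝ) {p : ℕ} (x y : Fin p → Λ) : ℂ :=
  ∫ φ : Λ → ℂ, ((Real.exp (-(a * nsq φ - qf J φ)) * F (fun z => ‖φ z‖ ^ 2) : ℝ) : ℂ)
    * ((∏ i, φ (x i)) * ∏ i, conj (φ (y i)))

/-- The one-particle propagator `exp (-ν (a - J))`. -/
def prop (J : Matrix Λ Λ ℝ) (a ν : ℝ) : Matrix Λ Λ ℝ := NormedSpace.exp (ν • (J - a • 1))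

lemma hprop_mul_transpose {J : Matrix Λ Λ ℝ} (hs : Jᵀ = J) (a ν : ℝ) :
    hprop J a ν * (hprop J a ν)ᵀ = prop J a ν := by
  rw [hprop_transpose hs, hprop_mul_self, prop]

lemma summable_kterm {J : Matrix Λ Λ ℝ} (h0 : ∀ x y, 0 ≤ J x y) (hs : Jᵀ = J) {D : ℝ}
    (hD : ∀ x, ∑ y, J x y = D) {a : ℝ} (ha : D < a) {F : (Λ → ℝ) → ℝ}
    (hF : ∀ m, (∀ z, 0 ≤ m z) → |F m| ≤ 1) {ν : ℝ} (hν : 0 < ν) {p : ℕ} (x y : Fin p → Λ) :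
    Summable (kterm (prop J a ν) F ν x y) := by
  have h := (hasSum_kterm (hprop J a ν) (Real.exp_lt_one_iff.2 (by nlinarith))
    (nsq_app_hprop_le h0 hs hD a hν.le) hF hν.le x y).summable
  rw [summable_mul_left_iff (pow_ne_zero _ (by exact_mod_cast Real.pi_ne_zero)),
    hprop_mul_transpose hs] at h
  exact Complex.summable_ofReal.1 h

/-- The semiclassical limit for the ideal Bose gas with a weight of the occupation numbers. -/
lemma tendsto_tsum_kterm {J : Matrix Λ Λ ℝ} (h0 : ∀ x y, 0 ≤ J x y) (hs : Jᵀ = J) {D : ℝ}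
    (hD : ∀ x, ∑ y, J x y = D) {a : ℝ} (ha : D < a) {F : (Λ → ℝ) → ℝ}
    (hF : ∀ m, (∀ z, 0 ≤ m z) → |F m| ≤ 1) (hFc : Continuous F) {p : ℕ} (x y : Fin p → Λ) :
    Tendsto (fun ν : ℝ => (ν : ℂ) ^ (p + Fintype.card Λ) * ((π : ℂ) ^ Fintype.card Λ
        * ((∑' n, kterm (prop J a ν) F ν x y n : ℝ) : ℂ)))
      (𝓝[>] 0) (𝓝 (clInt J a F x y)) := by
  have hγ : 0 < a - D := sub_pos.2 ha
  set c : ℝ := (a - D) / (1 + (a - D)) with hc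
  have hcpos : 0 < c := by positivity
  have hmain : Tendsto (fun ν : ℝ => ∫ φ : Λ → ℂ, gint (hprop J a ν) F ν x y φ)
      (𝓝[>] 0) (𝓝 (clInt J a F x y)) := by
    refine tendsto_integral_filter_of_dominated_convergence
      (fun φ => nsq φ ^ p * Real.exp (-(c * nsq φ))) ?_ ?_
      (integrable_pow_mul_exp_neg_nsq hcpos p) (ae_of_all _ fun φ => ?_)
    · filter_upwards [self_mem_nhdsWithin] with ν hν
      exact aestronglyMeasurable_gint _ hν hF x y
    · have h1 : ∀ᶠ ν : ℝ in 𝓝[>] 0, ν < 1 :=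
        (gt_mem_nhds one_pos).filter_mono nhdsWithin_le_nhds
      filter_upwards [self_mem_nhdsWithin, h1] with ν (hν : 0 < ν) hν1
      refine ae_of_all _ fun φ => norm_gint_le _ hν hcpos.le (fun φ => ?_) hF x y φ
      refine (nsq_app_hprop_le h0 hs hD a hν.le φ).trans
        (mul_le_mul_of_nonneg_right ?_ (nsq_nonneg φ))
      -- `exp (-t) ≤ 1 / (1 + t)` with `t = ν (a - D)`
      have h2 : Real.exp (-(ν * (a - D))) ≤ 1 / (1 + ν * (a - D)) := by
        rw [Real.exp_neg, ← one_div]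
        refine one_div_le_one_div_of_le (by positivity) ?_
        linarith [Real.add_one_le_exp (ν * (a - D))]
      refine h2.trans ?_
      rw [hc, div_le_iff₀ (by positivity), div_mul_eq_mul_div, one_sub_div (by positivity),
        div_mul_eq_mul_div, le_div_iff₀ (by positivity)]
      have : 0 ≤ (a - D) * ν * ((a - D) * (1 - ν)) := by
        have : 0 < 1 - ν := by linarith
        positivity
      nlinarith
    · unfold gint
      have happ : ∀ z, Tendsto (fun ν : ℝ => app (hprop J a ν) φ z) (𝓝[>] 0) (𝓝 (φ z)) :=
        tendsto_app_hprop J a φ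
      refine Tendsto.mul ((Complex.continuous_ofReal.tendsto _).comp (Tendsto.mul ?_ ?_))
        (Tendsto.mul (tendsto_finsetProd _ fun i _ => happ _)
          (tendsto_finsetProd _ fun i _ => (Complex.continuous_conj.tendsto _).comp (happ _)))
      · exact (tendsto_nsq_sub_div hs a φ).neg.rexp
      · exact tendsto_tsum_pois hF hFc y (r := fun ν z => ‖app (hprop J a ν) φ z‖ ^ 2)
          (fun ν z => by positivity) (fun z => by positivity) fun z => ((happ z).norm.pow 2)
  refine hmain.congr' ?_
  filter_upwards [self_mem_nhdsWithin] with ν (hν : 0 < ν)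
  rw [← pow_mul_integral_eq _ F hν x y, ← (hasSum_kterm (hprop J a ν) (Real.exp_lt_one_iff.2 (by nlinarith))
    (nsq_app_hprop_le h0 hs hD a hν.le) hF hν.le x y).tsum_eq, tsum_mul_left,
    hprop_mul_transpose hs, Complex.ofReal_tsum]

end MainTerm

/-! ### The interacting gas -/

section Interacting

variable {Λ : Type*} [Fintype Λ] [DecidableEq Λ]

/-- The mean-field pair interaction `(ν²/2) ∑_{i,j} v(X_i, X_j)`. -/
def pot (vv : Λ → Λ → ℝ) (ν : ℝ) {n : ℕ} (X : Fin n → Λ) : ℝ :=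
  ν ^ 2 / 2 * ∑ i, ∑ j, vv (X i) (X j)

/-- The Boltzmann weight `exp (-(1/2) ∑_{x,y} m_x v(x, y) m_y)` of a mass distribution `m`. -/
def bweight (vv : Λ → Λ → ℝ) (m : Λ → ℝ) : ℝ :=
  Real.exp (-(1 / 2 * ∑ x, ∑ y, m x * vv x y * m y))

lemma continuous_bweight (vv : Λ → Λ → ℝ) : Continuous (bweight vv) := by
  unfold bweight
  fun_prop

lemma abs_bweight_le {vv : Λ → Λ → ℝ} (h0 : ∀ x y, 0 ≤ vv x y) (m : Λ → ℝ) (hm : ∀ z, 0 ≤ m z) :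
    |bweight vv m| ≤ 1 := by
  rw [bweight, abs_of_pos (Real.exp_pos _), Real.exp_le_one_iff, neg_nonpos]
  exact mul_nonneg (by norm_num) (Finset.sum_nonneg fun x _ => Finset.sum_nonneg fun y _ =>
    mul_nonneg (mul_nonneg (hm x) (h0 x y)) (hm y))

lemma sum_comp_eq_sum_occ {n : ℕ} (X : Fin n → Λ) (f : Λ → ℝ) :
    ∑ i, f (X i) = ∑ z, (occ X z : ℝ) * f z := by
  simp only [occ_eq_sum, Nat.cast_sum, Finset.sum_mul]
  rw [Finset.sum_comm]
  simp

lemma bweight_occ (vv : Λ → Λ → ℝ) (ν : ℝ) {n : ℕ} (X : Fin n → Λ) :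
    bweight vv (fun z => ν * occ X z) = Real.exp (-pot vv ν X) := by
  rw [bweight, pot]
  congr 2
  have e : ∀ w, ∑ j, vv w (X j) = ∑ z, (occ X z : ℝ) * vv w z :=
    fun w => sum_comp_eq_sum_occ X (vv w)
  simp only [e]
  rw [sum_comp_eq_sum_occ X (fun w => ∑ z, (occ X z : ℝ) * vv w z)]
  simp only [Finset.mul_sum]
  refine Finset.sum_congr rfl fun x _ => Finset.sum_congr rfl fun y _ => ?_
  ring

lemma pot_comp_perm (vv : Λ → Λ → ℝ) (ν : ℝ) {n : ℕ} (X : Fin n → Λ) (g : Equiv.Perm (Fin n)) :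
    pot vv ν (X ∘ g) = pot vv ν X := by
  simp only [pot, Function.comp_apply]
  rw [Equiv.sum_comp g fun i => ∑ j, vv (X i) (X (g j))]
  congr 1
  exact Finset.sum_congr rfl fun i _ => Equiv.sum_comp g fun j => vv (X i) (X j)

lemma pot_nonneg {vv : Λ → Λ → ℝ} (h0 : ∀ x y, 0 ≤ vv x y) (ν : ℝ) {n : ℕ} (X : Fin n → Λ) :
    0 ≤ pot vv ν X :=
  mul_nonneg (by positivity) (Finset.sum_nonneg fun i _ => Finset.sum_nonneg fun j _ => h0 _ _)

/-- Minus the `N`-particle Hamiltonian with hopping matrix `J` and pair interaction `vv`. -/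
def qgen (J : Matrix Λ Λ ℝ) (vv : Λ → Λ → ℝ) (ν : ℝ) (N : ℕ) :
    Matrix (Fin N → Λ) (Fin N → Λ) ℝ :=
  ν • dGam J N - diagonal fun X => pot vv ν X

/-- The term with `n` traced-out particles of the (unnormalized) reduced density matrix of the
interacting gas with hopping matrix `J`, the chemical potential being `-ν a`. -/
def qterm (J : Matrix Λ Λ ℝ) (a : ℝ) (vv : Λ → Λ → ℝ) (ν : ℝ) {p : ℕ} (x y : Fin p → Λ) (n : ℕ) :
    ℝ :=
  ((n.factorial : ℝ))⁻¹ * ∑ u : Fin n → Λ, ∑ g : Equiv.Perm (Fin (p + n)),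
    Real.exp (-(ν * a * (p + n : ℕ)))
      * NormedSpace.exp (qgen J vv ν (p + n)) (Fin.append x u)
        (Fin.append y u ∘ g)

lemma prod_prop (J : Matrix Λ Λ ℝ) (a ν : ℝ) {N : ℕ} (X Y : Fin N → Λ) :
    ∏ i, prop J a ν (X i) (Y i)
      = Real.exp (-(ν * a * N)) * NormedSpace.exp (ν • dGam J N) X Y := by
  rw [exp_smul_dGam, prop, exp_smul_sub]
  simp only [Matrix.smul_apply, smul_eq_mul, Finset.prod_mul_distrib, Finset.prod_const,
    Finset.card_univ, Fintype.card_fin, ← Real.exp_nat_mul]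
  congr 2
  ring

/-- The interaction may be pulled out of the propagator as a weight of the final configuration,
at the price of a relative error of order `ν` times the number of rescaled particles `ν N`, which
is absorbed in a slight change of `J` and `a`. -/
lemma abs_qterm_sub_kterm_le {J : Matrix Λ Λ ℝ} (h0 : ∀ x y, 0 ≤ J x y) (a : ℝ)
    {vv : Λ → Λ → ℝ} (hv : ∀ x y, 0 ≤ vv x y) {M : ℝ} (hM0 : 0 ≤ M) (hM : ∀ x y, vv x y ≤ M)
    {ε θ : ℝ} (hε : 0 < ε) (hθ : 0 < θ) {ν : ℝ} (hν : 0 < ν) {p : ℕ} (x y : Fin p → Λ) (n : ℕ) :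
    |qterm J a vv ν x y n - kterm (prop J a ν) (bweight vv) ν x y n|
      ≤ ν * (M / (ε * θ)) * kterm (prop ((1 + ε) • J) (a - θ) ν) (fun _ => 1) ν x y n := by
  have key : ∀ (N : ℕ) (X Y : Fin N → Λ),
      |Real.exp (-(ν * a * N)) * NormedSpace.exp (qgen J vv ν N) X Y
        - (∏ i, prop J a ν (X i) (Y i)) * Real.exp (-pot vv ν Y)|
      ≤ ν * (M / (ε * θ)) * ∏ i, prop ((1 + ε) • J) (a - θ) ν (X i) (Y i) := by
    intro N X Y
    have hA : ∀ X Y, 0 ≤ (ν • dGam J N) X Y := fun X Y => mul_nonneg hν.le (dGam_nonneg h0 N X Y)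
    have hδ : ∀ X Y, (ν • dGam J N) X Y ≠ 0 → |pot vv ν X - pot vv ν Y| ≤ ν ^ 2 * N * M := by
      intro X Y hXY
      have h1 := abs_pairSum_sub_le (J := J) hv hM (X := X) (Y := Y)
        (fun h => hXY (by rw [Matrix.smul_apply, h, smul_zero]))
      rw [pot, pot, ← mul_sub, abs_mul, abs_of_nonneg (by positivity : 0 ≤ ν ^ 2 / 2)]
      calc _ ≤ ν ^ 2 / 2 * (2 * N * M) := mul_le_mul_of_nonneg_left h1 (by positivity)
        _ = _ := by ring
    have h2 := abs_exp_sub_diagonal_sub_le hA (pot_nonneg hv ν) (by positivity) hδ hε X Y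
    have hE : 0 ≤ NormedSpace.exp ((1 + ε) • ν • dGam J N) X Y :=
      exp_apply_nonneg (fun X Y => mul_nonneg (by positivity) (hA X Y)) X Y
    rw [prod_prop, mul_assoc (Real.exp _), ← mul_sub, abs_mul, abs_of_pos (Real.exp_pos _)]
    refine (mul_le_mul_of_nonneg_left h2 (Real.exp_pos _).le).trans ?_
    have h3 : ∏ i, prop ((1 + ε) • J) (a - θ) ν (X i) (Y i)
        = Real.exp (-(ν * a * N)) * Real.exp (θ * (ν * N))
          * NormedSpace.exp ((1 + ε) • ν • dGam J N) X Y := by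
      rw [smul_smul, exp_smul_dGam, prop, exp_smul_sub, smul_smul, mul_comm (1 + ε) ν]
      simp only [Matrix.smul_apply, smul_eq_mul, Finset.prod_mul_distrib, Finset.prod_const,
        Finset.card_univ, Fintype.card_fin, ← Real.exp_nat_mul]
      rw [← Real.exp_add]
      congr 2
      ring
    rw [h3]
    have h4 : ν * N ≤ θ⁻¹ * Real.exp (θ * (ν * N)) := by
      rw [← div_eq_inv_mul, le_div_iff₀ hθ]
      linarith [Real.add_one_le_exp (θ * (ν * N))]
    calc Real.exp (-(ν * a * N)) * (ν ^ 2 * N * M / ε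
          * NormedSpace.exp ((1 + ε) • ν • dGam J N) X Y)
        = ν * N * (Real.exp (-(ν * a * N)) * ν * M / ε
          * NormedSpace.exp ((1 + ε) • ν • dGam J N) X Y) := by ring
      _ ≤ θ⁻¹ * Real.exp (θ * (ν * N)) * (Real.exp (-(ν * a * N)) * ν * M / ε
          * NormedSpace.exp ((1 + ε) • ν • dGam J N) X Y) :=
        mul_le_mul_of_nonneg_right h4 (mul_nonneg (by positivity) hE)
      _ = _ := by
        field_simp
  simp only [qterm, kterm]
  rw [← mul_sub, ← Finset.sum_sub_distrib, abs_mul,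
    abs_of_nonneg (by positivity : (0 : ℝ) ≤ ((n.factorial : ℝ))⁻¹), mul_left_comm _ _ (∑ u, _)]
  refine mul_le_mul_of_nonneg_left ?_ (by positivity)
  rw [Finset.mul_sum]
  refine (Finset.abs_sum_le_sum_abs _ _).trans (Finset.sum_le_sum fun u _ => ?_)
  rw [mul_one, Finset.sum_mul, ← Finset.sum_sub_distrib, Finset.mul_sum]
  refine (Finset.abs_sum_le_sum_abs _ _).trans (Finset.sum_le_sum fun g _ => ?_)
  have := key (p + n) (Fin.append x u) (Fin.append y u ∘ g)
  rw [pot_comp_perm, ← bweight_occ] at this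
  exact this

/-- The semiclassical limit of the unnormalized reduced density matrices. -/
lemma summable_and_tendsto_qterm {J : Matrix Λ Λ ℝ} (h0 : ∀ x y, 0 ≤ J x y) (hs : Jᵀ = J) {D : ℝ}
    (hD0 : 0 ≤ D) (hD : ∀ x, ∑ y, J x y = D) {a : ℝ} (ha : D < a)
    {vv : Λ → Λ → ℝ} (hv : ∀ x y, 0 ≤ vv x y) {p : ℕ} (x y : Fin p → Λ) :
    (∀ ν : ℝ, 0 < ν → Summable (qterm J a vv ν x y)) ∧
    Tendsto (fun ν : ℝ => (ν : ℂ) ^ (p + Fintype.card Λ) * ((π : ℂ) ^ Fintype.card Λ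
        * ((∑' n, qterm J a vv ν x y n : ℝ) : ℂ)))
      (𝓝[>] 0) (𝓝 (clInt J a (bweight vv) x y)) := by
  obtain ⟨M, hM0, hM⟩ : ∃ M : ℝ, 0 ≤ M ∧ ∀ x y, vv x y ≤ M :=
    ⟨∑ x, ∑ y, vv x y, Finset.sum_nonneg fun x _ => Finset.sum_nonneg fun y _ => hv x y,
      fun x y => (Finset.single_le_sum (f := vv x) (fun y _ => hv x y) (Finset.mem_univ y)).trans
        (Finset.single_le_sum (f := fun x => ∑ y, vv x y)
          (fun x _ => Finset.sum_nonneg fun y _ => hv x y) (Finset.mem_univ x))⟩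
  have hγ : 0 < a - D := sub_pos.2 ha
  -- with these choices `(1 + ε) D < a - θ`, so the comparison gas is still convergent
  set ε : ℝ := (a - D) / (2 * (D + 1)) with hε
  set θ : ℝ := (a - D) / 4 with hθ
  have hεpos : 0 < ε := by positivity
  have hθpos : 0 < θ := by positivity
  have h0' : ∀ x y, 0 ≤ ((1 + ε) • J) x y := fun x y => mul_nonneg (by positivity) (h0 x y)
  have hs' : ((1 + ε) • J)ᵀ = (1 + ε) • J := by rw [Matrix.transpose_smul, hs]
  have hD' : ∀ x, ∑ y, ((1 + ε) • J) x y = (1 + ε) * D := fun x => by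
    simp only [Matrix.smul_apply, smul_eq_mul, ← Finset.mul_sum, hD]
  have ha' : (1 + ε) * D < a - θ := by
    have : ε * D ≤ (a - D) / 2 := by
      rw [hε, div_mul_eq_mul_div, div_le_div_iff₀ (by positivity) (by positivity)]
      nlinarith
    rw [hθ]
    linarith
  have h1 : ∀ m : Λ → ℝ, (∀ z, 0 ≤ m z) → |(fun _ => (1 : ℝ)) m| ≤ 1 := by simp
  have hbound := fun (ν : ℝ) (hν : 0 < ν) =>
    abs_qterm_sub_kterm_le h0 a hv hM0 hM hεpos hθpos hν x y
  have hsk := fun (ν : ℝ) (hν : 0 < ν) => summable_kterm h0 hs hD ha (abs_bweight_le hv) hν x y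
  have hsk' := fun (ν : ℝ) (hν : 0 < ν) => summable_kterm h0' hs' hD' ha' h1 hν x y
  have hsd := fun (ν : ℝ) (hν : 0 < ν) => Summable.of_norm_bounded
    ((hsk' ν hν).mul_left (ν * (M / (ε * θ))))
    (f := fun n => qterm J a vv ν x y n - kterm (prop J a ν) (bweight vv) ν x y n) (hbound ν hν)
  have hsq : ∀ ν : ℝ, 0 < ν → Summable (qterm J a vv ν x y) := fun ν hν => by
    simpa using (hsd ν hν).add (hsk ν hν)
  refine ⟨hsq, ?_⟩
  have t1 := tendsto_tsum_kterm h0 hs hD ha (abs_bweight_le hv) (continuous_bweight vv) x y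
  have t2 := tendsto_tsum_kterm h0' hs' hD' ha' h1 continuous_const x y
  have hid : Tendsto (fun ν : ℝ => ν * (M / (ε * θ))) (𝓝[>] 0) (𝓝 0) := by
    have : Tendsto (fun ν : ℝ => ν * (M / (ε * θ))) (𝓝 0) (𝓝 (0 * (M / (ε * θ)))) :=
      tendsto_id.mul_const _
    rw [zero_mul] at this
    exact this.mono_left nhdsWithin_le_nhds
  have t3 := hid.mul t2.norm
  rw [zero_mul] at t3
  have t4 : Tendsto (fun ν : ℝ => (ν : ℂ) ^ (p + Fintype.card Λ) * ((π : ℂ) ^ Fintype.card Λ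
        * ((∑' n, (qterm J a vv ν x y n - kterm (prop J a ν) (bweight vv) ν x y n) : ℝ) : ℂ)))
      (𝓝[>] 0) (𝓝 0) := by
    refine squeeze_zero_norm' ?_ t3
    filter_upwards [self_mem_nhdsWithin] with ν (hν : 0 < ν)
    have h5 := tsum_of_norm_bounded ((hsk' ν hν).hasSum.mul_left (ν * (M / (ε * θ))))
      (f := fun n => qterm J a vv ν x y n - kterm (prop J a ν) (bweight vv) ν x y n) (hbound ν hν)
    simp only [norm_mul, Complex.norm_real]
    rw [mul_left_comm (ν * (M / (ε * θ))), mul_left_comm (ν * (M / (ε * θ)))]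
    refine mul_le_mul_of_nonneg_left (mul_le_mul_of_nonneg_left (h5.trans ?_) (norm_nonneg _))
      (norm_nonneg _)
    exact mul_le_mul_of_nonneg_left (le_abs_self _) (by positivity)
  have t5 := t4.add t1
  rw [zero_add] at t5
  refine t5.congr' ?_
  filter_upwards [self_mem_nhdsWithin] with ν (hν : 0 < ν)
  rw [← mul_add, ← mul_add, ← Complex.ofReal_add, ← (hsd ν hν).tsum_add (hsk ν hν)]
  simp only [sub_add_cancel]

end Interacting

/-! ### The lattice Bose gas and its classical field limit -/

section Lattice

variable {d L : ℕ} [NeZero L]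

/-- The hopping matrix `Δ/2 + d` of the torus. -/
def hop (d L : ℕ) [NeZero L] : Matrix (Tor d L) (Tor d L) ℝ := fun x y =>
  1 / 2 * ∑ j : Fin d, ((if y = x + unitVec d L j then (1 : ℝ) else 0)
    + (if y = x - unitVec d L j then (1 : ℝ) else 0))

lemma hop_nonneg (x y : Tor d L) : 0 ≤ hop d L x y :=
  mul_nonneg (by norm_num) (Finset.sum_nonneg fun j _ => by positivity)

lemma hop_transpose : (hop d L)ᵀ = hop d L := by
  ext x y
  simp only [Matrix.transpose_apply, hop]
  congr 1
  refine Finset.sum_congr rfl fun j _ => ?_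
  have h1 : (x = y + unitVec d L j) ↔ (y = x - unitVec d L j) := by
    rw [eq_sub_iff_add_eq, eq_comm]
  have h2 : (x = y - unitVec d L j) ↔ (y = x + unitVec d L j) := by
    rw [eq_sub_iff_add_eq, eq_comm]
  simp only [h1, h2]
  ring

lemma hop_row_sum (x : Tor d L) : ∑ y, hop d L x y = d := by
  simp only [hop, ← Finset.mul_sum]
  rw [Finset.sum_comm]
  simp only [Finset.sum_add_distrib, Finset.sum_ite_eq', Finset.mem_univ, if_true]
  simp
  ring

lemma lap_eq (x y : Tor d L) :
    lap d L x y = ((2 * hop d L x y - 2 * d * (1 : Matrix (Tor d L) (Tor d L) ℝ) x y : ℝ) : ℂ) := by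
  rw [lap, hop, Matrix.one_apply]
  simp only [eq_comm (a := y) (b := x)]
  push_cast
  congr 1
  · simp only [apply_ite Complex.ofReal, Complex.ofReal_one, Complex.ofReal_zero]
    ring
  · split_ifs <;> simp

lemma kin_eq (n : ℕ) (X Y : Cfg d L n) :
    kin d L n X Y = ((2 * dGam (hop d L) n X Y
      - 2 * d * n * (1 : Matrix (Cfg d L n) (Cfg d L n) ℝ) X Y : ℝ) : ℂ) := by
  have h : ∀ i : Fin n, (if ∀ j : Fin n, j ≠ i → X j = Y j then lap d L (X i) (Y i) else 0)
      = ((2 * (if ∀ j : Fin n, j ≠ i → X j = Y j then hop d L (X i) (Y i) else 0)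
        - 2 * d * (1 : Matrix (Cfg d L n) (Cfg d L n) ℝ) X Y : ℝ) : ℂ) := by
    intro i
    by_cases hi : ∀ j : Fin n, j ≠ i → X j = Y j
    · rw [if_pos hi, if_pos hi, lap_eq]
      have : (1 : Matrix (Tor d L) (Tor d L) ℝ) (X i) (Y i)
          = (1 : Matrix (Cfg d L n) (Cfg d L n) ℝ) X Y := by
        have : X i = Y i ↔ X = Y :=
          ⟨fun h => funext fun j => by
            by_cases hj : j = i
            · rw [hj, h]
            · exact hi j hj, fun h => by rw [h]⟩
        simp only [Matrix.one_apply, this]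
      rw [this]
    · rw [if_neg hi, if_neg hi, Matrix.one_apply_ne (fun h => hi fun j _ => by rw [h])]
      simp
  rw [kin, dGam]
  simp only [h]
  rw [← Complex.ofReal_sum, Finset.sum_sub_distrib, ← Finset.mul_sum]
  simp
  ring

lemma neg_ham_eq (v : Tor d L → ℝ) (ν c : ℝ) (n : ℕ) :
    -(ham d L v ν (ν ^ 2) n + (c : ℂ) • (1 : Matrix (Cfg d L n) (Cfg d L n) ℂ))
      = (qgen (hop d L) (fun x y => v (x - y)) ν n + (-(ν * d * n + c)) • 1).map
        (fun t : ℝ => (t : ℂ)) := by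
  ext X Y
  simp only [ham, qgen, pot, Matrix.neg_apply, Matrix.add_apply, Matrix.smul_apply, kin_eq,
    Matrix.map_apply, Matrix.sub_apply, Matrix.one_apply, Matrix.diagonal_apply, smul_eq_mul]
  split_ifs <;> push_cast <;> ring

lemma matExp_ham (v : Tor d L → ℝ) (ν c : ℝ) (n : ℕ) (X Y : Cfg d L n) :
    matExp (-(ham d L v ν (ν ^ 2) n + (c : ℂ) • (1 : Matrix (Cfg d L n) (Cfg d L n) ℂ))) X Y
      = ((Real.exp (-(ν * d * n + c))
        * NormedSpace.exp (qgen (hop d L) (fun x y => v (x - y)) ν n) X Y : ℝ) : ℂ) := by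
  rw [neg_ham_eq, matExp_map, exp_add_smul_one]
  rfl

lemma mul_symProj_apply {n : ℕ} (M : Matrix (Cfg d L n) (Cfg d L n) ℂ) (X Y : Cfg d L n) :
    (M * symProj d L n) X Y
      = ((n.factorial : ℂ))⁻¹ * ∑ g : Equiv.Perm (Fin n), M X (Y ∘ g) := by
  simp only [Matrix.mul_apply, symProj, Finset.mul_sum]
  rw [Finset.sum_comm, ← Equiv.sum_comp (Equiv.inv (Equiv.Perm (Fin n)))]
  refine Finset.sum_congr rfl fun g _ => ?_
  rw [Finset.sum_eq_single (Y ∘ g)]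
  · rw [if_pos]
    · ring
    · funext i
      simp
  · intro Z _ hZ
    rw [if_neg, mul_zero, mul_zero]
    rintro rfl
    apply hZ
    funext i
    simp
  · exact fun h => absurd (Finset.mem_univ _) h

lemma gammaQ_term_eq (v : Tor d L → ℝ) (ν κ : ℝ) {p : ℕ} (x y : Fin p → Tor d L) (n : ℕ) :
    ((Nat.factorial (p + n) : ℂ) / (Nat.factorial n : ℂ))
        * ((Real.exp (-(κ * ν * (p + n))) : ℝ) : ℂ)
        * ∑ u : Cfg d L n, (matExp (-(ham d L v ν (ν ^ 2) (p + n))) * symProj d L (p + n))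
              (Fin.append x u) (Fin.append y u)
      = (qterm (hop d L) (κ + d) (fun x y => v (x - y)) ν x y n : ℂ) := by
  have h := fun X Y => matExp_ham v ν 0 (p + n) X Y
  simp only [Complex.ofReal_zero, zero_smul, add_zero] at h
  have hf : ((p + n).factorial : ℂ) ≠ 0 := by exact_mod_cast (p + n).factorial_ne_zero
  simp only [mul_symProj_apply, h, qterm, ← Complex.ofReal_sum, ← Finset.mul_sum]
  have e : Real.exp (-(ν * (κ + d) * (p + n : ℕ)))
      = Real.exp (-(κ * ν * (p + n))) * Real.exp (-(ν * d * (p + n : ℕ))) := by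
    rw [← Real.exp_add]
    congr 1
    push_cast
    ring
  rw [e]
  push_cast
  field_simp

lemma trace_term_eq (v : Tor d L → ℝ) (ν κ : ℝ) (n : ℕ) :
    (matExp (-(ham d L v ν (ν ^ 2) n
        + ((κ * ν * n : ℝ) : ℂ) • (1 : Matrix (Cfg d L n) (Cfg d L n) ℂ))) * symProj d L n).trace
      = (qterm (hop d L) (κ + d) (fun x y => v (x - y)) ν (Fin.elim0 : Fin 0 → Tor d L)
        Fin.elim0 n : ℂ) := by
  have cast_eq : ∀ (N : ℕ) (h : N = n) (u : Fin n → Tor d L),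
      ∑ g : Equiv.Perm (Fin N), Real.exp (-(ν * (κ + d) * N))
        * NormedSpace.exp (qgen (hop d L) (fun x y => v (x - y)) ν N) (u ∘ Fin.cast h)
          ((u ∘ Fin.cast h) ∘ g)
      = ∑ g : Equiv.Perm (Fin n), Real.exp (-(ν * (κ + d) * n))
        * NormedSpace.exp (qgen (hop d L) (fun x y => v (x - y)) ν n) u (u ∘ g) := by
    rintro N rfl u
    rfl
  simp only [Matrix.trace, Matrix.diag_apply, mul_symProj_apply, matExp_ham, qterm,
    Fin.elim0_append]
  simp only [cast_eq (0 + n) (Nat.zero_add n)]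
  rw [← Finset.mul_sum]
  have e : ν * (κ + d) * n = ν * d * n + κ * ν * n := by ring
  rw [e]
  push_cast
  rfl

lemma sum_hop_eq (φ : Tor d L → ℂ) :
    ∑ x, ∑ z, (hop d L x z : ℂ) * (conj (φ x) * φ z) = (qf (hop d L) φ : ℂ) := by
  set S := ∑ x, ∑ z, (hop d L x z : ℂ) * (conj (φ x) * φ z) with hS
  have hconj : conj S = S := by
    rw [hS]
    simp only [map_sum, map_mul, Complex.conj_ofReal, Complex.conj_conj]
    rw [Finset.sum_comm]
    refine Finset.sum_congr rfl fun x _ => Finset.sum_congr rfl fun z _ => ?_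
    rw [show hop d L z x = hop d L x z from congrFun (congrFun hop_transpose x) z]
    ring
  rw [← Complex.conj_eq_iff_re.1 hconj]
  congr 1
  rw [hS, qf]
  simp only [Complex.re_sum, Complex.re_ofReal_mul]

lemma sum_conj_mul_mulVec (κ : ℝ) (φ : Tor d L → ℂ) :
    ∑ x : Tor d L, conj (φ x) * (((1 / 2 : ℂ) • lap d L - (κ : ℂ) • 1).mulVec φ x)
      = ((-((κ + d) * nsq φ - qf (hop d L) φ) : ℝ) : ℂ) := by
  have h : ∀ x, conj (φ x) * (((1 / 2 : ℂ) • lap d L - (κ : ℂ) • 1).mulVec φ x)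
      = ∑ z, (hop d L x z : ℂ) * (conj (φ x) * φ z) - (κ + d) * ((‖φ x‖ ^ 2 : ℝ) : ℂ) := by
    intro x
    have h1 : (((1 / 2 : ℂ) • lap d L - (κ : ℂ) • 1).mulVec φ x)
        = ∑ z, ((hop d L x z : ℂ) * φ z - if x = z then (κ + d) * φ z else 0) := by
      simp only [Matrix.mulVec, dotProduct]
      refine Finset.sum_congr rfl fun z _ => ?_
      simp only [Matrix.sub_apply, Matrix.smul_apply, lap_eq, Matrix.one_apply, smul_eq_mul]
      split_ifs <;> push_cast <;> ring
    rw [h1, Finset.sum_sub_distrib, mul_sub, Finset.mul_sum, Finset.sum_ite_eq,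
      if_pos (Finset.mem_univ x), ← Complex.normSq_eq_norm_sq, ← Complex.mul_conj]
    congr 1
    · exact Finset.sum_congr rfl fun z _ => by ring
    · ring
  simp only [h]
  rw [Finset.sum_sub_distrib, sum_hop_eq, ← Finset.mul_sum, nsq]
  push_cast
  ring

lemma det_ne_zero {κ : ℝ} (hκ : 0 < κ) :
    ((-(1 / 2 : ℂ)) • lap d L + (κ : ℂ) • 1).det ≠ 0 := by
  intro hdet
  obtain ⟨w, hw, h0⟩ := Matrix.exists_mulVec_eq_zero_iff.2 hdet
  have h1 : ((1 / 2 : ℂ) • lap d L - (κ : ℂ) • 1).mulVec w = 0 := by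
    have : (1 / 2 : ℂ) • lap d L - (κ : ℂ) • 1
        = -((-(1 / 2 : ℂ)) • lap d L + (κ : ℂ) • 1) := by
      rw [neg_smul]
      abel
    rw [this, Matrix.neg_mulVec, h0, neg_zero]
  have h2 := sum_conj_mul_mulVec κ w
  simp only [h1, Pi.zero_apply, mul_zero, Finset.sum_const_zero] at h2
  have h3 : -((κ + d) * nsq w - qf (hop d L) w) = 0 := by exact_mod_cast h2.symm
  have h4 := qf_le hop_nonneg hop_transpose hop_row_sum w
  have h5 : nsq w ≤ 0 := by
    by_contra! h
    nlinarith [mul_pos hκ h]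
  apply hw
  funext z
  have h6 := (norm_sq_le_nsq w z).trans h5
  have : ‖w z‖ = 0 := by nlinarith [norm_nonneg (w z)]
  simpa using this

/-- The normalization of the Gaussian density. -/
def gnorm (d L : ℕ) [NeZero L] (κ : ℝ) : ℂ :=
  (((Real.pi : ℂ) ^ Fintype.card (Tor d L))
      * ((-(1 / 2 : ℂ)) • lap d L + (κ : ℂ) • 1)⁻¹.det)⁻¹

lemma gnorm_ne_zero {κ : ℝ} (hκ : 0 < κ) : gnorm d L κ ≠ 0 := by
  refine inv_ne_zero (mul_ne_zero (pow_ne_zero _ (by exact_mod_cast Real.pi_ne_zero)) ?_)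
  rw [Matrix.det_nonsing_inv, Ring.inverse_eq_inv']
  exact inv_ne_zero (det_ne_zero hκ)

lemma gaussWeight_mul_intWeight (v : Tor d L → ℝ) (κ : ℝ) (φ : Tor d L → ℂ) :
    gaussWeight d L κ φ * intWeight d L v φ = gnorm d L κ
      * ((Real.exp (-((κ + d) * nsq φ - qf (hop d L) φ))
        * bweight (fun x y => v (x - y)) (fun z => ‖φ z‖ ^ 2) : ℝ) : ℂ) := by
  rw [gaussWeight, sum_conj_mul_mulVec, intWeight, bweight, gnorm, mul_assoc]
  simp only [Complex.normSq_eq_norm_sq]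
  push_cast
  rw [neg_mul]

lemma Zcl_eq (v : Tor d L → ℝ) (κ : ℝ) :
    Zcl d L v κ = gnorm d L κ * clInt (hop d L) (κ + d) (bweight fun x y => v (x - y))
      (Fin.elim0 : Fin 0 → Tor d L) Fin.elim0 := by
  simp only [Zcl, clInt, gaussWeight_mul_intWeight, integral_const_mul, Finset.univ_eq_empty,
    Finset.prod_empty, mul_one]

lemma GammaCl_eq (v : Tor d L → ℝ) {κ : ℝ} (hκ : 0 < κ) {p : ℕ} (x y : Fin p → Tor d L) :
    GammaCl d L v κ p x y
      = (clInt (hop d L) (κ + d) (bweight fun x y => v (x - y))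
          (Fin.elim0 : Fin 0 → Tor d L) Fin.elim0)⁻¹
        * clInt (hop d L) (κ + d) (bweight fun x y => v (x - y)) x y := by
  have h : ∀ φ : Tor d L → ℂ, gaussWeight d L κ φ * (∏ i : Fin p, conj (φ (y i)))
        * (∏ i : Fin p, φ (x i)) * intWeight d L v φ
      = gnorm d L κ * (((Real.exp (-((κ + d) * nsq φ - qf (hop d L) φ))
        * bweight (fun x y => v (x - y)) (fun z => ‖φ z‖ ^ 2) : ℝ) : ℂ)
        * ((∏ i, φ (x i)) * ∏ i, conj (φ (y i)))) := by
    intro φ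
    rw [← mul_assoc, ← gaussWeight_mul_intWeight]
    ring
  rw [GammaCl, Zcl_eq]
  simp only [h, integral_const_mul]
  rw [← clInt, mul_inv, mul_mul_mul_comm, inv_mul_cancel₀ (gnorm_ne_zero hκ), one_mul]

lemma clInt_zero_ne_zero {v : Tor d L → ℝ} (hv : ∀ x, 0 ≤ v x) {κ : ℝ} (hκ : 0 < κ) :
    clInt (hop d L) (κ + d) (bweight fun x y => v (x - y))
      (Fin.elim0 : Fin 0 → Tor d L) Fin.elim0 ≠ 0 := by
  simp only [clInt, Finset.univ_eq_empty, Finset.prod_empty, mul_one]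
  rw [integral_complex_ofReal, Complex.ofReal_ne_zero]
  refine ne_of_gt ?_
  simp only [bweight, ← Real.exp_add]
  refine integral_exp_pos ((integrable_pow_mul_exp_neg_nsq (Λ := Tor d L) hκ 0).mono' ?_
    (ae_of_all _ fun φ => ?_))
  · have h1 := continuous_nsq (Λ := Tor d L)
    have h2 : Continuous fun φ : Tor d L → ℂ => qf (hop d L) φ := by
      unfold qf
      fun_prop
    exact Continuous.aestronglyMeasurable (by fun_prop)
  · rw [Real.norm_of_nonneg (Real.exp_pos _).le, pow_zero, one_mul, Real.exp_le_exp]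
    have h3 := qf_le hop_nonneg hop_transpose hop_row_sum φ
    have h4 : 0 ≤ ∑ x, ∑ y, ‖φ x‖ ^ 2 * v (x - y) * ‖φ y‖ ^ 2 :=
      Finset.sum_nonneg fun x _ => Finset.sum_nonneg fun y _ => by
        have := hv (x - y)
        positivity
    linarith

end Lattice

/-- **Mean-field limit of the reduced density matrices** (Theorem 1.2 (ii)):
for `v` pointwise nonnegative and of positive type, `κ > 0`, `p ∈ ℕ*` and
`x, y ∈ Λ^p`, `lim_{ν→0⁺} ν^p (Γ_p^{ν,κ,ν²})_{x,y} = (Γ_p^{cl})_{x,y}`. -/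
theorem mean_field_limit_correlation_functions
    (d L : ℕ) (hd : 1 ≤ d) [NeZero L] (κ : ℝ) (hκ : 0 < κ)
    (v : Tor d L → ℝ) (hv_nonneg : ∀ x, 0 ≤ v x) (hv_pos : IsPosType d L v)
    (p : ℕ) (hp : 1 ≤ p) (x y : Fin p → Tor d L) :
    Tendsto (fun ν : ℝ => ((ν : ℂ)) ^ p * GammaQ d L v ν κ (ν ^ 2) p x y)
      (𝓝[>] (0 : ℝ)) (𝓝 (GammaCl d L v κ p x y)) := by
  have ha : (d : ℝ) < κ + d := by linarith
  have lim := fun {q : ℕ} (x y : Fin q → Tor d L) =>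
    (summable_and_tendsto_qterm hop_nonneg hop_transpose (Nat.cast_nonneg d) hop_row_sum ha
      (vv := fun x y => v (x - y)) (fun x y => hv_nonneg (x - y)) x y).2
  have t := ((lim (Fin.elim0 : Fin 0 → Tor d L) Fin.elim0).inv₀
    (clInt_zero_ne_zero hv_nonneg hκ)).mul (lim x y)
  rw [← GammaCl_eq v hκ] at t
  refine t.congr' ?_
  filter_upwards [self_mem_nhdsWithin] with ν (hν : 0 < ν)
  have hν' : (ν : ℂ) ≠ 0 := by exact_mod_cast hν.ne'
  have hπ : (π : ℂ) ≠ 0 := by exact_mod_cast Real.pi_ne_zero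
  simp only [GammaQ, grandXi, gammaQ_term_eq, trace_term_eq, ← Complex.ofReal_tsum, zero_add,
    mul_inv, pow_add]
  field_simp
end
end

section
/- Let v : Λ → [0,∞) be pointwise nonnegative and let κ₀ > 0. Then in the large-mass limit (chemical-potential parameter κ = κ₀/ν, coupling λ = 1), the relative grand canonical partition function of the lattice Bose gas converges to the relative classical partition function of a gas of weighted particles: lim_{ν→0⁺} 𝒵^{ν,κ₀/ν,1} = 𝒵^{lm}. -/
/-!
Both sides are quotients of the same sums over occupation numbers `m : Λ → ℕ`, namely
`S(λ) = ∑_m e^{-κ₀|m|} e^{-λ V(m)}` with `V(m) = (1/2) ∑_{x,y} m_x m_y v(x - y)`, at `λ = 1` and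
`λ = 0`.

For the quantum side, a fixed particle number `n` gives, as `ν → 0`, the diagonal operator
`e^{-V - κ₀ n}`, so that `Tr(e^{-(H_n + κ₀ n)} P_n⁺)` tends to
`(1/n!) ∑_X |Stab X| e^{-V(X) - κ₀ n}` (`trace_tendsto`). The passage to the limit in the sum over
`n` is by dominated convergence: since `v ≥ 0` and the rows of the Laplacian sum to zero, the
maximal row sum of `|e^{-(H_n + κ₀ n)}|` is at most `e^{-κ₀ n}` (`norm_exp_ham_le`), and then the
trace is at most `e^{-κ₀ n} (1/n!) ∑_X |Stab X|` (`norm_trace_le`), uniformly in `ν`. The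
configurations with given occupation numbers form a single orbit of the symmetric group, so
orbit counting turns these sums into `S(λ)` (`permutation_expansion`).

For the classical side, `V^{lm}(k, x)` depends only on the occupation numbers
`m_y = ∑_{i : x_i = y} k_i`, and the total weight `∑ (1/n!) ∏ 1/k_i` of all `(k, x)` with given `m`
is `1`, the coefficient of `z^m` in `exp(∑_x ∑_k z_x^k / k) = ∏_x (1 - z_x)⁻¹`
(`clusterCoeff_eq_one`, proved by a recursion for the coefficients). Hence the numerator of `𝒵^{lm}`
is `S(1)` (`cluster_expansion`), and the denominator is `S(0)` (`ideal_gas`).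
-/

open scoped BigOperators ComplexConjugate Classical Real Topology
open MeasureTheory Filter Matrix

noncomputable section

/-- The large-mass interaction `V^{lm}(k,x) = (1/2) ∑_{i,j} k_i k_j v(x_i - x_j)`. -/
def Vlm (d L : ℕ) [NeZero L] (v : Tor d L → ℝ) (n : ℕ) (k : Fin n → ℕ+)
    (x : Cfg d L n) : ℝ :=
  (1 / 2) * ∑ i : Fin n, ∑ j : Fin n, ((k i : ℕ) : ℝ) * ((k j : ℕ) : ℝ) * v (x i - x j)

/-- The relative classical partition function with infinite mass `𝒵^{lm}`. -/
def Zlm (d L : ℕ) [NeZero L] (v : Tor d L → ℝ) (κ₀ : ℝ) : ℂ :=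
  (∑' (n : ℕ), ((Nat.factorial n : ℕ) : ℂ)⁻¹ *
      ∑' (k : Fin n → ℕ+), (∏ i : Fin n, (((k i : ℕ) : ℕ) : ℂ)⁻¹) *
        ∑ x : Cfg d L n,
          ((Real.exp (-(κ₀ * ∑ i : Fin n, ((k i : ℕ) : ℝ)))
            * Real.exp (-(Vlm d L v n k x)) : ℝ) : ℂ))
    / ((Real.exp ((L ^ d : ℕ) * ∑' (k : ℕ+), Real.exp (-(κ₀ * (k : ℕ))) / ((k : ℕ) : ℝ)) : ℝ) : ℂ)

/-! ### The gas of weighted particles in terms of occupation numbers -/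

namespace LargeMass

set_option linter.unusedSectionVars false

section Combinatorics
open scoped ENNReal Nat

variable {Λ : Type*}

/-- The combinatorial weight `∏ᵢ 1 / kᵢ` of a family of weighted particles. -/
def wt {n : ℕ} (f : Fin n → ℕ+ × Λ) : ℝ≥0∞ := ∏ i, (((f i).1 : ℕ) : ℝ≥0∞)⁻¹

lemma wt_insertNth {n : ℕ} (i : Fin (n + 1)) (a : ℕ+ × Λ) (g : Fin n → ℕ+ × Λ) :
    wt (i.insertNth a g : Fin (n + 1) → ℕ+ × Λ) = ((a.1 : ℕ) : ℝ≥0∞)⁻¹ * wt g := by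
  simp [wt, Fin.prod_univ_succAbove _ i]

variable [Fintype Λ] [DecidableEq Λ]

/-- Occupation numbers of a family of weighted particles `f i = (kᵢ, xᵢ)`: the value at `y` is the
sum of the weights `kᵢ` over the particles with `xᵢ = y`. -/
def occ {n : ℕ} (f : Fin n → ℕ+ × Λ) : Λ → ℕ := ∑ i, Pi.single (f i).2 ((f i).1 : ℕ)

/-- Total weight `∑ₙ (1/n!) ∑_{(k,x)} ∏ᵢ 1/kᵢ` of all families of weighted particles with occupation
numbers `m`. Equivalently, the coefficient of `z ^ m` in `exp (∑ₓ ∑ₖ zₓ ^ k / k)`. -/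
def clusterCoeff (m : Λ → ℕ) : ℝ≥0∞ :=
  ∑' n : ℕ, (n ! : ℝ≥0∞)⁻¹ * ∑' f : Fin n → ℕ+ × Λ, if occ f = m then wt f else 0

lemma occ_insertNth {n : ℕ} (i : Fin (n + 1)) (a : ℕ+ × Λ) (g : Fin n → ℕ+ × Λ) :
    occ (i.insertNth a g : Fin (n + 1) → ℕ+ × Λ) = Pi.single a.2 (a.1 : ℕ) + occ g := by
  simp [occ, Fin.sum_univ_succAbove _ i]

/-- Marking one particle at `x`, counted with its weight: since `m x = ∑ᵢ kᵢ 1[xᵢ = x]`, removing the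
marked particle cancels its factor `1 / kᵢ` and leaves `n` unmarked ones. -/
lemma marked_sum (m : Λ → ℕ) (x : Λ) (n : ℕ) :
    (m x : ℝ≥0∞) * ∑' f : Fin (n + 1) → ℕ+ × Λ, (if occ f = m then wt f else 0)
      = (n + 1 : ℕ) * ∑' k : ℕ+, ∑' g : Fin n → ℕ+ × Λ,
          if Pi.single x (k : ℕ) + occ g = m then wt g else 0 := by
  have h1 : ∀ f : Fin (n + 1) → ℕ+ × Λ,
      (m x : ℝ≥0∞) * (if occ f = m then wt f else 0)
        = ∑ i, (if (f i).2 = x then (((f i).1 : ℕ) : ℝ≥0∞) else 0)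
            * (if occ f = m then wt f else 0) := by
    intro f
    rw [← Finset.sum_mul]
    split_ifs with h
    · congr 1
      rw [← h, occ]
      simp [Finset.sum_apply, Pi.single_apply, eq_comm]
    · simp
  have h2 : ∀ i : Fin (n + 1),
      ∑' f : Fin (n + 1) → ℕ+ × Λ, (if (f i).2 = x then (((f i).1 : ℕ) : ℝ≥0∞) else 0)
            * (if occ f = m then wt f else 0)
        = ∑' k : ℕ+, ∑' g : Fin n → ℕ+ × Λ,
          if Pi.single x (k : ℕ) + occ g = m then wt g else 0 := by
    intro i
    rw [← (Fin.insertNthEquiv (fun _ => ℕ+ × Λ) i).tsum_eq, ENNReal.tsum_prod', ENNReal.tsum_prod']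
    refine tsum_congr fun k => ?_
    rw [tsum_eq_single x]
    · refine tsum_congr fun g => ?_
      have he : Fin.insertNthEquiv (fun _ => ℕ+ × Λ) i ((k, x), g) = i.insertNth (k, x) g := rfl
      simp only [he, Fin.insertNth_apply_same, occ_insertNth, wt_insertNth, if_true]
      split_ifs
      · rw [← mul_assoc, ENNReal.mul_inv_cancel (by simp) (by simp), one_mul]
      · simp
    · intro y hy
      simp [Fin.insertNthEquiv_apply, hy]
  rw [← ENNReal.tsum_mul_left, tsum_congr h1, Summable.tsum_finsetSum (fun _ _ => ENNReal.summable),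
    Finset.sum_congr rfl (fun i _ => h2 i)]
  simp

/-- The recursion `m x · c(m) = ∑_{k ≥ 1} c(m - k eₓ)`, where terms with `k > m x` vanish. -/
lemma clusterCoeff_rec (m : Λ → ℕ) (x : Λ) :
    (m x : ℝ≥0∞) * clusterCoeff m
      = ∑' k : ℕ+, ∑' n : ℕ, (n ! : ℝ≥0∞)⁻¹ * ∑' g : Fin n → ℕ+ × Λ,
          if Pi.single x (k : ℕ) + occ g = m then wt g else 0 := by
  rw [clusterCoeff, ← ENNReal.tsum_mul_left, ENNReal.tsum_comm,
    tsum_eq_zero_add' ENNReal.summable]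
  have h0 : (m x : ℝ≥0∞) * (((0 ! : ℕ) : ℝ≥0∞)⁻¹ *
      ∑' f : Fin 0 → ℕ+ × Λ, if occ f = m then wt f else 0) = 0 := by
    by_cases h : m = 0
    · simp [h]
    · have : ∀ f : Fin 0 → ℕ+ × Λ, occ f ≠ m := by
        intro f hf; apply h; rw [← hf]; simp [occ]
      simp [this]
  rw [h0, zero_add]
  refine tsum_congr fun n => ?_
  rw [mul_left_comm, marked_sum, ENNReal.tsum_mul_left, ← mul_assoc]
  congr 1
  rw [Nat.factorial_succ, Nat.cast_mul, ENNReal.mul_inv (by simp) (by simp), mul_comm,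
    ← mul_assoc, ENNReal.mul_inv_cancel (by simp) (by simp), one_mul]

lemma clusterCoeff_zero : clusterCoeff (0 : Λ → ℕ) = 1 := by
  rw [clusterCoeff, tsum_eq_single 0]
  · simp [occ, wt]
  · intro n hn
    obtain ⟨n, rfl⟩ := Nat.exists_eq_succ_of_ne_zero hn
    have : ∀ f : Fin (n + 1) → ℕ+ × Λ, occ f ≠ 0 := by
      intro f hf
      have h := congrFun hf (f 0).2
      simp only [occ, Finset.sum_apply, Pi.zero_apply, Finset.sum_eq_zero_iff] at h
      have := h 0 (Finset.mem_univ _)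
      simp at this
    simp [this]

/-- All coefficients of `exp (∑ₓ ∑ₖ zₓ ^ k / k) = ∏ₓ (1 - zₓ)⁻¹` equal `1`; by strong induction on the
total occupation number, using `clusterCoeff_rec` at an occupied site. -/
lemma clusterCoeff_eq_one (m : Λ → ℕ) : clusterCoeff m = 1 := by
  induction hN : ∑ x, m x using Nat.strong_induction_on generalizing m with
  | _ N ih =>
  by_cases h : m = 0
  · rw [h, clusterCoeff_zero]
  obtain ⟨x, hx⟩ : ∃ x, m x ≠ 0 := by
    by_contra! hc
    exact h (funext hc)
  have hrec := clusterCoeff_rec m x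
  have hk : ∀ k : ℕ+, (∑' n : ℕ, (n ! : ℝ≥0∞)⁻¹ * ∑' g : Fin n → ℕ+ × Λ,
          if Pi.single x (k : ℕ) + occ g = m then wt g else 0)
        = if (k : ℕ) ≤ m x then 1 else 0 := by
    intro k
    split_ifs with hkm
    · have hle : (Pi.single x (k : ℕ) : Λ → ℕ) ≤ m := by
        intro y
        by_cases hy : y = x
        · subst hy; simpa using hkm
        · simp [hy]
      have hadd : Pi.single x (k : ℕ) + (m - Pi.single x (k : ℕ)) = m := add_tsub_cancel_of_le hle
      have hsum : (k : ℕ) + ∑ y, (m - Pi.single x (k : ℕ) : Λ → ℕ) y = N := by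
        rw [← hN, ← hadd]
        simp [Finset.sum_add_distrib]
      rw [← ih _ (by have := k.pos; omega) (m - Pi.single x (k : ℕ)) rfl, clusterCoeff]
      have : ∀ o : Λ → ℕ, Pi.single x (k : ℕ) + o = m ↔ o = m - Pi.single x (k : ℕ) := by
        intro o
        conv_lhs => rw [← hadd]
        exact add_right_inj _
      simp only [this]
    · have : ∀ o : Λ → ℕ, Pi.single x (k : ℕ) + o ≠ m := by
        rintro o rfl
        simp at hkm
      simp [this]
  have hcount : (∑' k : ℕ+, if (k : ℕ) ≤ m x then (1 : ℝ≥0∞) else 0) = m x := by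
    rw [tsum_pnat_eq_tsum_succ (f := fun k => if k ≤ m x then (1 : ℝ≥0∞) else 0),
      tsum_eq_sum (s := Finset.range (m x))]
    · rw [Finset.sum_congr rfl (g := fun _ => 1)]
      · simp
      · intro k hk
        have := Finset.mem_range.1 hk
        simp; omega
    · intro k hk
      have : ¬ k < m x := fun h => hk (Finset.mem_range.2 h)
      simp; omega
  rw [tsum_congr hk, hcount] at hrec
  have := ENNReal.mul_right_inj (a := (m x : ℝ≥0∞)) (b := clusterCoeff m) (c := 1) (by simpa using hx) (by simp)
  exact this.1 (by rw [hrec, mul_one])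

/-- Summing a function of the occupation numbers over the gas of weighted particles gives its plain
sum over all occupation numbers. -/
lemma cluster_expansion (G : (Λ → ℕ) → ℝ≥0∞) :
    ∑' n : ℕ, (n ! : ℝ≥0∞)⁻¹ * ∑' f : Fin n → ℕ+ × Λ, wt f * G (occ f) = ∑' m, G m := by
  have h : ∀ n : ℕ, ∀ f : Fin n → ℕ+ × Λ,
      wt f * G (occ f) = ∑' m, G m * (if occ f = m then wt f else 0) := by
    intro n f
    rw [tsum_eq_single (occ f)]
    · simp [mul_comm]
    · intro m hm; simp [hm.symm]
  calc _ = ∑' n : ℕ, ∑' m, G m * ((n ! : ℝ≥0∞)⁻¹ * ∑' f : Fin n → ℕ+ × Λ,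
            if occ f = m then wt f else 0) := by
        refine tsum_congr fun n => ?_
        rw [tsum_congr (h n), ENNReal.tsum_comm, ← ENNReal.tsum_mul_left]
        refine tsum_congr fun m => ?_
        rw [ENNReal.tsum_mul_left, mul_left_comm]
    _ = ∑' m, G m * clusterCoeff m := by
        rw [ENNReal.tsum_comm]
        exact tsum_congr fun m => ENNReal.tsum_mul_left
    _ = _ := by simp [clusterCoeff_eq_one]

/-- The `n`-th power of a sum, expanded as a sum over `n`-tuples. -/
lemma tsum_prod_fin {α : Type*} (a : α → ℝ≥0∞) (n : ℕ) :
    ∑' f : Fin n → α, ∏ i, a (f i) = (∑' x, a x) ^ n := by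
  induction n with
  | zero => simp
  | succ n ih =>
    rw [← (Fin.consEquiv (fun _ => α)).tsum_eq, ENNReal.tsum_prod']
    simp [Fin.consEquiv, Fin.prod_univ_succ, ENNReal.tsum_mul_left, ENNReal.tsum_mul_right, ih, pow_succ']

/-! ### Permutations and occupation numbers -/

/-- Occupation numbers of a configuration of `n` particles (all of weight `1`). -/
def cnt {n : ℕ} (X : Fin n → Λ) : Λ → ℕ := ∑ i, Pi.single (X i) 1

/-- Number of permutations of the particles that fix the configuration `X`. -/
def stab {n : ℕ} (X : Fin n → Λ) : ℕ :=
  (Finset.univ.filter fun g : Equiv.Perm (Fin n) => X = X ∘ g).card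

lemma cnt_apply {n : ℕ} (X : Fin n → Λ) (y : Λ) :
    cnt X y = Fintype.card {i // X i = y} := by
  simp [cnt, Pi.single_apply, Fintype.card_subtype, eq_comm, Finset.sum_boole]

lemma sum_cnt {n : ℕ} (X : Fin n → Λ) : ∑ y, cnt X y = n := by
  simp only [cnt, Finset.sum_apply]
  rw [Finset.sum_comm]
  simp

/-- If `X` is a rearrangement of `Y`, the permutations carrying `Y` to `X` form a coset of the
stabilizer of `X`. -/
lemma card_transporter {n : ℕ} (X Y : Fin n → Λ) (σ : Equiv.Perm (Fin n)) (h : X = Y ∘ σ) :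
    (Finset.univ.filter fun g : Equiv.Perm (Fin n) => X = Y ∘ g).card = stab X := by
  symm
  refine Finset.card_equiv (Equiv.mulLeft σ) fun g => ?_
  simp only [Finset.mem_filter, Finset.mem_univ, true_and, Equiv.coe_mulLeft, Equiv.Perm.coe_mul,
    ← Function.comp_assoc, ← h]

lemma card_transporter_le {n : ℕ} (X Y : Fin n → Λ) :
    (Finset.univ.filter fun g : Equiv.Perm (Fin n) => X = Y ∘ g).card ≤ stab X := by
  by_cases h : ∃ σ : Equiv.Perm (Fin n), X = Y ∘ σ
  · obtain ⟨σ, h⟩ := h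
    exact (card_transporter X Y σ h).le
  · push Not at h
    simp [h]

lemma exists_perm {n : ℕ} (X Y : Fin n → Λ) (h : cnt X = cnt Y) :
    ∃ σ : Equiv.Perm (Fin n), X = Y ∘ σ := by
  have e : ∀ y, {i // X i = y} ≃ {i // Y i = y} := fun y =>
    Fintype.equivOfCardEq (by rw [← cnt_apply, ← cnt_apply, h])
  refine ⟨(Equiv.sigmaFiberEquiv X).symm.trans
    ((Equiv.sigmaCongrRight e).trans (Equiv.sigmaFiberEquiv Y)), ?_⟩
  funext i
  exact (e (X i) ⟨i, rfl⟩).2.symm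

lemma exists_cnt (m : Λ → ℕ) {n : ℕ} (hn : ∑ y, m y = n) : ∃ X : Fin n → Λ, cnt X = m := by
  have e : Fin n ≃ Σ y, Fin (m y) := Fintype.equivOfCardEq (by simp [hn])
  refine ⟨fun i => (e i).1, ?_⟩
  rw [cnt, e.sum_comp (fun p => Pi.single p.1 1), Fintype.sum_sigma]
  funext z
  simp [Finset.sum_apply, Pi.single_apply]

/-- Orbit counting: configurations with occupation numbers `m` form one orbit of the symmetric group,
so their stabilizers have total size `n!`. -/
lemma sum_stab (m : Λ → ℕ) {n : ℕ} (hn : ∑ y, m y = n) :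
    ∑ X : Fin n → Λ, (if cnt X = m then stab X else 0) = n ! := by
  obtain ⟨Y, hY⟩ := exists_cnt m hn
  have h1 : ∀ X : Fin n → Λ, (if cnt X = m then stab X else 0)
      = ∑ g : Equiv.Perm (Fin n), if X = Y ∘ g then 1 else 0 := by
    intro X
    rw [Finset.sum_boole, Nat.cast_id]
    split_ifs with h
    · obtain ⟨σ, hσ⟩ := exists_perm X Y (h.trans hY.symm)
      exact (card_transporter X Y σ hσ).symm
    · symm
      rw [Finset.card_eq_zero, Finset.filter_eq_empty_iff]
      rintro g - rfl
      apply h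
      rw [← hY, cnt, cnt]
      exact Equiv.sum_comp g (fun i => (Pi.single (Y i) 1 : Λ → ℕ))
  rw [Finset.sum_congr rfl fun X _ => h1 X, Finset.sum_comm]
  simp [Fintype.card_perm]

/-- Summing a function of the occupation numbers over configurations, weighted by
`stab X / n!`, gives its plain sum over all occupation numbers. -/
lemma permutation_expansion (G : (Λ → ℕ) → ℝ≥0∞) :
    ∑' n : ℕ, (n ! : ℝ≥0∞)⁻¹ * ∑ X : Fin n → Λ, (stab X : ℝ≥0∞) * G (cnt X) = ∑' m, G m := by
  have h : ∀ n : ℕ, ∀ X : Fin n → Λ, (stab X : ℝ≥0∞) * G (cnt X)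
      = ∑' m, G m * ((if cnt X = m then stab X else 0 : ℕ) : ℝ≥0∞) := by
    intro n X
    rw [tsum_eq_single (cnt X)]
    · simp [mul_comm]
    · intro m hm; simp [hm.symm]
  calc _ = ∑' n : ℕ, ∑' m, G m * ((n ! : ℝ≥0∞)⁻¹ *
            ((∑ X : Fin n → Λ, if cnt X = m then stab X else 0 : ℕ) : ℝ≥0∞)) := by
        refine tsum_congr fun n => ?_
        rw [Finset.sum_congr rfl fun X _ => h n X,
          ← Summable.tsum_finsetSum (fun _ _ => ENNReal.summable), ← ENNReal.tsum_mul_left]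
        refine tsum_congr fun m => ?_
        rw [← Finset.mul_sum, mul_left_comm, Nat.cast_sum]
    _ = ∑' m, G m := by
        rw [ENNReal.tsum_comm]
        refine tsum_congr fun m => ?_
        rw [ENNReal.tsum_mul_left, tsum_eq_single (∑ y, m y), sum_stab m rfl,
          ENNReal.inv_mul_cancel (by exact_mod_cast Nat.factorial_ne_zero _) (by simp), mul_one]
        intro n hn
        have : ∀ X : Fin n → Λ, cnt X ≠ m := by
          rintro X rfl
          exact hn (sum_cnt X).symm
        simp [this]

end Combinatorics

/-! ### Trace bounds and dominated convergence -/

section Analysis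
open scoped Nat Matrix.Norms.Operator

lemma matExp_eq {m : Type*} [Fintype m] [DecidableEq m] (A : Matrix m m ℂ) :
    matExp A = NormedSpace.exp A := by
  have h := NormedSpace.exp_series_hasSum_exp' (𝕂 := ℂ) A
  ext x y
  exact (Pi.hasSum.1 (Pi.hasSum.1 h x) y).tsum_eq

lemma norm_exp_le_exp_norm {m : Type*} [Fintype m] [DecidableEq m] (A : Matrix m m ℂ) :
    ‖NormedSpace.exp A‖ ≤ Real.exp ‖A‖ := by
  -- `‖1‖ = 1` needs a nonempty index type.
  cases isEmpty_or_nonempty m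
  · rw [Subsingleton.elim (NormedSpace.exp A) 0, norm_zero]
    positivity
  have h := NormedSpace.exp_series_hasSum_exp' (𝕂 := ℂ) A
  have hr : HasSum (fun n : ℕ => ‖A‖ ^ n / n !) (Real.exp ‖A‖) := by
    rw [Real.exp_eq_exp_ℝ]
    exact NormedSpace.expSeries_div_hasSum_exp ‖A‖
  refine (congrArg norm h.tsum_eq).symm.le.trans (tsum_of_norm_bounded hr fun n => ?_)
  rw [norm_smul, div_eq_inv_mul]
  have : ‖((n ! : ℂ))⁻¹‖ = ((n ! : ℝ))⁻¹ := by simp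
  rw [this]
  gcongr
  exact norm_pow_le A n

/-- Bounding `e^A` through `e^{-c} e^{A + c}`; this gains over `e^‖A‖` when the entries of `A + c` are
non-negative, the norm being the maximal row sum of absolute values. -/
lemma norm_exp_le_of_shift {m : Type*} [Fintype m] [DecidableEq m] (A : Matrix m m ℂ) (c r : ℝ)
    (h : ‖A + (c : ℂ) • (1 : Matrix m m ℂ)‖ ≤ r) : ‖NormedSpace.exp A‖ ≤ Real.exp (r - c) := by
  have h1 : NormedSpace.exp A
      = NormedSpace.exp (A + (c : ℂ) • (1 : Matrix m m ℂ)) *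
        NormedSpace.exp ((-c : ℂ) • (1 : Matrix m m ℂ)) := by
    rw [← Matrix.exp_add_of_commute]
    · congr 1
      rw [neg_smul, add_neg_cancel_right]
    · exact (Commute.one_right _).smul_right _
  have h2 : NormedSpace.exp ((-c : ℂ) • (1 : Matrix m m ℂ))
      = ((Real.exp (-c) : ℝ) : ℂ) • (1 : Matrix m m ℂ) := by
    rw [Matrix.smul_one_eq_diagonal, Matrix.smul_one_eq_diagonal, Matrix.exp_diagonal]
    congr 1
    funext x
    rw [Pi.coe_exp, ← Complex.exp_eq_exp_ℂ]
    push_cast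
    rfl
  rw [h1, h2, mul_smul_comm, mul_one, norm_smul, Complex.norm_real, Real.norm_of_nonneg (by positivity),
    sub_eq_neg_add, Real.exp_add]
  gcongr
  exact (norm_exp_le_exp_norm _).trans (Real.exp_le_exp.2 h)

lemma norm_le_of_rows {m : Type*} [Fintype m] (A : Matrix m m ℂ) {r : ℝ} (hr : 0 ≤ r)
    (h : ∀ x, ∑ y, ‖A x y‖ ≤ r) : ‖A‖ ≤ r := by
  lift r to NNReal using hr
  rw [Matrix.linfty_opNorm_def]
  refine NNReal.coe_le_coe.2 (Finset.sup_le fun x _ => ?_)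
  rw [← NNReal.coe_le_coe]
  push_cast
  exact h x

lemma row_le_norm {m : Type*} [Fintype m] (A : Matrix m m ℂ) (x : m) :
    ∑ y, ‖A x y‖ ≤ ‖A‖ := by
  rw [Matrix.linfty_opNorm_def]
  have := Finset.le_sup (f := fun i : m => ∑ j : m, ‖A i j‖₊) (Finset.mem_univ x)
  have := NNReal.coe_le_coe.2 this
  push_cast at this
  exact this

variable {d L : ℕ} [NeZero L]

/-- The off-diagonal (hopping) part of `∑ᵢ Δᵢ`: one particle moves to a neighbouring site. -/
def hop (d L n : ℕ) [NeZero L] : Matrix (Cfg d L n) (Cfg d L n) ℂ := fun X Y =>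
  ∑ i : Fin n, ∑ j : Fin d,
    ((if Y = Function.update X i (X i + unitVec d L j) then (1 : ℂ) else 0)
      + (if Y = Function.update X i (X i - unitVec d L j) then (1 : ℂ) else 0))

lemma kin_eq (n : ℕ) : kin d L n = hop d L n - ((2 * d * n : ℝ) : ℂ) • 1 := by
  have key : ∀ (X Y : Cfg d L n) (i : Fin n) (z : Tor d L),
      Y = Function.update X i z ↔ (∀ j : Fin n, j ≠ i → X j = Y j) ∧ Y i = z := by
    intro X Y i z
    rw [Function.eq_update_iff, and_comm]
    simp only [eq_comm]
  have key' : ∀ (X Y : Cfg d L n) (i : Fin n),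
      X = Y ↔ (∀ j : Fin n, j ≠ i → X j = Y j) ∧ Y i = X i := by
    intro X Y i
    rw [← key, Function.update_eq_self, eq_comm]
  ext X Y
  rw [Matrix.sub_apply, Matrix.smul_apply, Matrix.one_apply, kin, hop]
  have : (((2 * d * n : ℝ) : ℂ) • (if X = Y then (1 : ℂ) else 0))
      = ∑ i : Fin n, if X = Y then (2 * d : ℂ) else 0 := by
    split_ifs <;> simp [mul_comm]
  rw [this, ← Finset.sum_sub_distrib]
  refine Finset.sum_congr rfl fun i _ => ?_
  simp only [key, key' X Y i, lap]
  by_cases h : ∀ j : Fin n, j ≠ i → X j = Y j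
  · rw [if_pos h]
    simp only [eq_true h, true_and]
  · rw [if_neg h]
    simp only [eq_false h, false_and, if_false]
    simp

/-- Each of the `n` particles has `2d` possible hops. -/
lemma hop_row (n : ℕ) (X : Cfg d L n) : ∑ Y, ‖hop d L n X Y‖ ≤ 2 * d * n := by
  calc ∑ Y, ‖hop d L n X Y‖ ≤ ∑ Y : Cfg d L n, ∑ i : Fin n, ∑ j : Fin d,
        ((if Y = Function.update X i (X i + unitVec d L j) then (1 : ℝ) else 0)
      + (if Y = Function.update X i (X i - unitVec d L j) then (1 : ℝ) else 0)) := by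
        refine Finset.sum_le_sum fun Y _ => ?_
        refine (norm_sum_le _ _).trans (Finset.sum_le_sum fun i _ => ?_)
        refine (norm_sum_le _ _).trans (Finset.sum_le_sum fun j _ => ?_)
        refine (norm_add_le _ _).trans (le_of_eq ?_)
        congr 1 <;> split_ifs <;> simp
    _ = 2 * d * n := by
        rw [Finset.sum_comm]
        have : ∀ i : Fin n, ∑ Y : Cfg d L n, ∑ j : Fin d,
            ((if Y = Function.update X i (X i + unitVec d L j) then (1 : ℝ) else 0)
            + (if Y = Function.update X i (X i - unitVec d L j) then (1 : ℝ) else 0)) = d * 2 := by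
          intro i
          rw [Finset.sum_comm]
          simp only [Finset.sum_add_distrib, Finset.sum_ite_eq', Finset.mem_univ, if_true]
          simp; ring
        rw [Finset.sum_congr rfl fun i _ => this i]
        simp; ring

/-- The interaction energy `(λ/2) ∑_{i,j} v(Xᵢ - Xⱼ)`. -/
def pot (v : Tor d L → ℝ) (lam : ℝ) {n : ℕ} (X : Cfg d L n) : ℝ :=
  (lam / 2) * ∑ i : Fin n, ∑ j : Fin n, v (X i - X j)

lemma pot_nonneg {v : Tor d L → ℝ} (hv : ∀ x, 0 ≤ v x) {lam : ℝ} (hl : 0 ≤ lam) {n : ℕ}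
    (X : Cfg d L n) : 0 ≤ pot v lam X :=
  mul_nonneg (by positivity) (Finset.sum_nonneg fun _ _ => Finset.sum_nonneg fun _ _ => hv _)

/-- `e^{-(H_n + s)}` has row sums of absolute values at most `e^{-s}`: after adding a large constant
`c` all entries of the exponent are non-negative, and its row sums are at most `c - s` because the
rows of the Laplacian sum to zero and the interaction is non-negative. -/
lemma norm_exp_ham_le {v : Tor d L → ℝ} (hv : ∀ x, 0 ≤ v x) {lam ν : ℝ} (hl : 0 ≤ lam)
    (hν : 0 ≤ ν) (s : ℝ) (n : ℕ) :
    ‖NormedSpace.exp (-(ham d L v ν lam n + (s : ℂ) • (1 : Matrix (Cfg d L n) (Cfg d L n) ℂ)))‖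
      ≤ Real.exp (-s) := by
  set M : ℝ := ∑ X : Cfg d L n, pot v lam X
  have hM : ∀ X : Cfg d L n, pot v lam X ≤ M := fun X =>
    Finset.single_le_sum (f := fun X : Cfg d L n => pot v lam X)
      (fun X _ => pot_nonneg hv hl X) (Finset.mem_univ X)
  have hM0 : 0 ≤ M := Finset.sum_nonneg fun X _ => pot_nonneg hv hl X
  set c : ℝ := ν * d * n + M + |s| with hc
  have hνd : 0 ≤ ν * d * n := by positivity
  have hs := le_abs_self s
  have hmat : -(ham d L v ν lam n + (s : ℂ) • (1 : Matrix (Cfg d L n) (Cfg d L n) ℂ)) + (c : ℂ) • 1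
      = ((ν / 2 : ℝ) : ℂ) • hop d L n
        + Matrix.diagonal fun X => ((M + |s| - s - pot v lam X : ℝ) : ℂ) := by
    rw [ham, kin_eq]
    ext X Y
    by_cases h : X = Y
    · subst h
      simp [pot, hc]
      ring
    · simp [h]
  have hnorm : ‖-(ham d L v ν lam n + (s : ℂ) • (1 : Matrix (Cfg d L n) (Cfg d L n) ℂ))
      + (c : ℂ) • 1‖ ≤ c - s := by
    rw [hmat]
    refine norm_le_of_rows _ (by linarith) fun X => ?_
    calc _ ≤ ∑ Y, (ν / 2 * ‖hop d L n X Y‖ + if X = Y then M + |s| - s - pot v lam X else 0) := by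
          refine Finset.sum_le_sum fun Y _ => ?_
          refine (norm_add_le _ _).trans (le_of_eq ?_)
          congr 1
          · rw [Matrix.smul_apply, norm_smul, Complex.norm_real, Real.norm_of_nonneg (by positivity)]
          · rw [Matrix.diagonal_apply]
            split_ifs
            · rw [Complex.norm_real, Real.norm_of_nonneg (by linarith [hM X])]
            · simp
      _ = ν / 2 * ∑ Y, ‖hop d L n X Y‖ + (M + |s| - s - pot v lam X) := by
          rw [Finset.sum_add_distrib, ← Finset.mul_sum]
          simp
      _ ≤ ν / 2 * (2 * d * n) + (M + |s| - s - pot v lam X) := by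
          gcongr
          exact hop_row n X
      _ ≤ c - s := by
          have := pot_nonneg hv hl X
          rw [hc]
          linarith
  have := norm_exp_le_of_shift _ c _ hnorm
  rwa [show c - s - c = -s by ring] at this

lemma symProj_apply (n : ℕ) (X Y : Cfg d L n) : symProj d L n X Y = ((n ! : ℕ) : ℂ)⁻¹ *
    ((Finset.univ.filter fun g : Equiv.Perm (Fin n) => Y = X ∘ g).card : ℂ) := by
  rw [symProj, Finset.sum_boole]

/-- The trace against the symmetrization projection is controlled by the maximal row sum of `E`: each
`Y` is carried to `X` by at most `stab X` permutations. -/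
lemma norm_trace_le (n : ℕ) (E : Matrix (Cfg d L n) (Cfg d L n) ℂ) :
    ‖(E * symProj d L n).trace‖ ≤ ‖E‖ * ((n ! : ℝ)⁻¹ * ∑ X : Cfg d L n, (stab X : ℝ)) := by
  rw [Matrix.trace, Finset.mul_sum, Finset.mul_sum]
  refine (norm_sum_le _ _).trans (Finset.sum_le_sum fun X _ => ?_)
  rw [Matrix.diag_apply, Matrix.mul_apply]
  calc _ ≤ ∑ Y, ‖E X Y‖ * ((n ! : ℝ)⁻¹ * (stab X : ℝ)) := by
        refine (norm_sum_le _ _).trans (Finset.sum_le_sum fun Y _ => ?_)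
        rw [norm_mul, symProj_apply, norm_mul, norm_inv, Complex.norm_natCast, Complex.norm_natCast]
        gcongr
        exact card_transporter_le X Y
    _ ≤ _ := by
        rw [← Finset.sum_mul]
        gcongr
        exact row_le_norm E X

/-- As `ν → 0`, the kinetic term disappears and the exponential becomes diagonal. -/
lemma trace_tendsto (v : Tor d L → ℝ) (lam s : ℝ) (n : ℕ) :
    Tendsto (fun ν : ℝ => (matExp (-(ham d L v ν lam n
        + (s : ℂ) • (1 : Matrix (Cfg d L n) (Cfg d L n) ℂ))) * symProj d L n).trace)
      (𝓝[>] (0 : ℝ))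
      (𝓝 (((n ! : ℝ)⁻¹ * ∑ X : Cfg d L n, (stab X : ℝ) * Real.exp (-(pot v lam X + s)) : ℝ) : ℂ)) := by
  have hcont : Continuous (fun ν : ℝ => (NormedSpace.exp (-(ham d L v ν lam n
        + (s : ℂ) • (1 : Matrix (Cfg d L n) (Cfg d L n) ℂ))) * symProj d L n).trace) := by
    have h1 : Continuous (fun ν : ℝ => -(ham d L v ν lam n
        + (s : ℂ) • (1 : Matrix (Cfg d L n) (Cfg d L n) ℂ))) := by
      unfold ham
      fun_prop
    have h2 := (NormedSpace.exp_continuous (𝔸 := Matrix (Cfg d L n) (Cfg d L n) ℂ)).comp h1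
    exact (h2.matrix_mul continuous_const).matrix_trace
  have h0 : (NormedSpace.exp (-(ham d L v 0 lam n
        + (s : ℂ) • (1 : Matrix (Cfg d L n) (Cfg d L n) ℂ))) * symProj d L n).trace
      = (((n ! : ℝ)⁻¹ * ∑ X : Cfg d L n, (stab X : ℝ) * Real.exp (-(pot v lam X + s)) : ℝ) : ℂ) := by
    have hd : -(ham d L v 0 lam n + (s : ℂ) • (1 : Matrix (Cfg d L n) (Cfg d L n) ℂ))
        = Matrix.diagonal fun X => ((-(pot v lam X + s) : ℝ) : ℂ) := by
      rw [ham]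
      ext X Y
      by_cases h : X = Y
      · subst h
        simp [pot]
      · simp [h]
    rw [hd, Matrix.exp_diagonal, Matrix.trace]
    push_cast
    rw [Finset.mul_sum]
    refine Finset.sum_congr rfl fun X _ => ?_
    rw [Matrix.diag_apply, Matrix.diagonal_mul, symProj_apply, Pi.coe_exp, ← Complex.exp_eq_exp_ℂ, stab]
    ring
  simp only [matExp_eq]
  rw [← h0]
  exact hcont.continuousAt.tendsto.mono_left nhdsWithin_le_nhds

/-- Dominated convergence in the particle number; the bound is uniform in `ν` by
`norm_exp_ham_le` and `norm_trace_le`. -/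
lemma grandXi_tendsto {v : Tor d L → ℝ} (hv : ∀ x, 0 ≤ v x) {lam : ℝ} (hl : 0 ≤ lam) (κ₀ : ℝ)
    (hsum : Summable fun n : ℕ =>
      (n ! : ℝ)⁻¹ * ∑ X : Cfg d L n, (stab X : ℝ) * Real.exp (-(κ₀ * n))) :
    Tendsto (fun ν : ℝ => grandXi d L v ν (κ₀ / ν) lam) (𝓝[>] (0 : ℝ))
      (𝓝 ((∑' n : ℕ, (n ! : ℝ)⁻¹ * ∑ X : Cfg d L n,
        (stab X : ℝ) * Real.exp (-(pot v lam X + κ₀ * n)) : ℝ) : ℂ)) := by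
  have hlim := tendsto_tsum_of_dominated_convergence (𝓕 := 𝓝[>] (0 : ℝ))
    (f := fun (ν : ℝ) (n : ℕ) => (matExp (-(ham d L v ν lam n
        + ((κ₀ * n : ℝ) : ℂ) • (1 : Matrix (Cfg d L n) (Cfg d L n) ℂ))) * symProj d L n).trace)
    hsum (fun n => trace_tendsto v lam (κ₀ * n) n) (by
      filter_upwards [self_mem_nhdsWithin] with ν hν n
      rw [matExp_eq]
      refine (norm_trace_le n _).trans ?_
      refine (mul_le_mul_of_nonneg_right
        (norm_exp_ham_le hv hl (Set.mem_Ioi.1 hν).le (κ₀ * n) n) (by positivity)).trans_eq ?_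
      rw [← Finset.sum_mul]
      ring)
  rw [Complex.ofReal_tsum]
  refine hlim.congr' ?_
  filter_upwards [self_mem_nhdsWithin] with ν hν
  rw [grandXi, div_mul_cancel₀ _ (ne_of_gt hν)]

end Analysis

/-! ### Identification of both limits -/

section Conclusion
open scoped ENNReal Nat

variable {Λ : Type*} [Fintype Λ] [DecidableEq Λ]

/-- Transfers the value of a sum of non-negative terms from `ℝ≥0∞` to `ℝ`. -/
lemma hasSum_of_ennreal {β : Type*} {a : β → ℝ} (ha : ∀ b, 0 ≤ a b) {S : ℝ≥0∞}
    (h : ∑' b, ENNReal.ofReal (a b) = S) (hS : S ≠ ⊤) : HasSum a S.toReal := by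
  have h1 := ENNReal.hasSum_toReal (h.trans_ne hS)
  rw [← ENNReal.tsum_toReal_eq (fun _ => ENNReal.ofReal_ne_top), h] at h1
  simpa only [ENNReal.toReal_ofReal (ha _)] using h1

lemma ofReal_inv_natCast {n : ℕ} (hn : 0 < n) :
    ENNReal.ofReal ((n : ℝ)⁻¹) = (n : ℝ≥0∞)⁻¹ := by
  rw [ENNReal.ofReal_inv_of_pos (by exact_mod_cast hn), ENNReal.ofReal_natCast]

/-- Real-valued form of `permutation_expansion`. -/
lemma hasSum_permutation {G : (Λ → ℕ) → ℝ} (hG : ∀ m, 0 ≤ G m)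
    (hfin : ∑' m, ENNReal.ofReal (G m) ≠ ⊤) :
    HasSum (fun n : ℕ => (n ! : ℝ)⁻¹ * ∑ X : Fin n → Λ, (stab X : ℝ) * G (cnt X))
      (∑' m, ENNReal.ofReal (G m)).toReal := by
  have hnn : ∀ n : ℕ, ∀ X : Fin n → Λ, 0 ≤ (stab X : ℝ) * G (cnt X) :=
    fun n X => mul_nonneg (by positivity) (hG _)
  refine hasSum_of_ennreal
    (fun n => mul_nonneg (by positivity) (Finset.sum_nonneg fun X _ => hnn n X)) ?_ hfin
  rw [← permutation_expansion]
  refine tsum_congr fun n => ?_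
  rw [ENNReal.ofReal_mul (by positivity), ofReal_inv_natCast n.factorial_pos,
    ENNReal.ofReal_sum_of_nonneg fun X _ => hnn n X]
  congr 1
  refine Finset.sum_congr rfl fun X _ => ?_
  rw [ENNReal.ofReal_mul (by positivity), ENNReal.ofReal_natCast]

/-- Real-valued form of `cluster_expansion`, with weights and positions summed separately. -/
lemma tsum_cluster {G : (Λ → ℕ) → ℝ} (hG : ∀ m, 0 ≤ G m)
    (hfin : ∑' m, ENNReal.ofReal (G m) ≠ ⊤) :
    ∑' n : ℕ, (n ! : ℝ)⁻¹ * ∑' k : Fin n → ℕ+, (∏ i, ((k i : ℕ) : ℝ)⁻¹) *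
        ∑ x : Fin n → Λ, G (occ fun i => (k i, x i))
      = (∑' m, ENNReal.ofReal (G m)).toReal := by
  have hterm : ∀ n : ℕ, ∀ k : Fin n → ℕ+, 0 ≤ (∏ i, ((k i : ℕ) : ℝ)⁻¹) *
        ∑ x : Fin n → Λ, G (occ fun i => (k i, x i)) := fun n k =>
    mul_nonneg (Finset.prod_nonneg fun i _ => by positivity) (Finset.sum_nonneg fun x _ => hG _)
  have hinner : ∀ n : ℕ, ∑' k : Fin n → ℕ+, ENNReal.ofReal ((∏ i, ((k i : ℕ) : ℝ)⁻¹) *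
        ∑ x : Fin n → Λ, G (occ fun i => (k i, x i)))
      = ∑' f : Fin n → ℕ+ × Λ, wt f * ENNReal.ofReal (G (occ f)) := by
    intro n
    rw [← (Equiv.arrowProdEquivProdArrow (Fin n) (fun _ => ℕ+) (fun _ => Λ)).symm.tsum_eq,
      ENNReal.tsum_prod']
    refine tsum_congr fun k => ?_
    rw [tsum_fintype, ENNReal.ofReal_mul (Finset.prod_nonneg fun i _ => by positivity),
      ENNReal.ofReal_sum_of_nonneg fun x _ => hG _, Finset.mul_sum]
    refine Finset.sum_congr rfl fun x _ => ?_
    congr 1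
    rw [ENNReal.ofReal_prod_of_nonneg fun i _ => by positivity]
    exact Finset.prod_congr rfl fun i _ => ofReal_inv_natCast (k i).pos
  have hcl := cluster_expansion (fun m : Λ → ℕ => ENNReal.ofReal (G m))
  have hinner_fin : ∀ n : ℕ, ∑' f : Fin n → ℕ+ × Λ, wt f * ENNReal.ofReal (G (occ f)) ≠ ⊤ := by
    intro n htop
    apply hfin
    rw [← hcl]
    refine ENNReal.tsum_eq_top_of_eq_top ⟨n, ?_⟩
    rw [htop]
    exact ENNReal.mul_top (by simp)
  have hreal : ∀ n : ℕ, ∑' k : Fin n → ℕ+, (∏ i, ((k i : ℕ) : ℝ)⁻¹) *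
        ∑ x : Fin n → Λ, G (occ fun i => (k i, x i))
      = (∑' f : Fin n → ℕ+ × Λ, wt f * ENNReal.ofReal (G (occ f))).toReal := fun n =>
    (hasSum_of_ennreal (hterm n) (hinner n) (hinner_fin n)).tsum_eq
  refine (hasSum_of_ennreal
    (fun n => mul_nonneg (by positivity) (tsum_nonneg (hterm n))) ?_ hfin).tsum_eq
  rw [← hcl]
  refine tsum_congr fun n => ?_
  rw [ENNReal.ofReal_mul (by positivity), ofReal_inv_natCast n.factorial_pos, hreal,
    ENNReal.ofReal_toReal (hinner_fin n)]

lemma sum_occ {n : ℕ} (f : Fin n → ℕ+ × Λ) (h : Λ → ℝ) :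
    ∑ y, (occ f y : ℝ) * h y = ∑ i, (((f i).1 : ℕ) : ℝ) * h (f i).2 := by
  simp only [occ, Finset.sum_apply, Nat.cast_sum, Finset.sum_mul]
  rw [Finset.sum_comm]
  simp [Pi.single_apply]

lemma cnt_eq_occ {n : ℕ} (X : Fin n → Λ) : cnt X = occ fun i => ((1 : ℕ+), X i) := by
  simp [cnt, occ]

/-- Without interaction, the sum over occupation numbers is the exponential of the one-particle sum. -/
lemma ideal_gas {κ₀ : ℝ} (hκ : 0 < κ₀) :
    ∑' m : Λ → ℕ, ENNReal.ofReal (Real.exp (-(κ₀ * ∑ y, (m y : ℝ))))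
      = ENNReal.ofReal (Real.exp (Fintype.card Λ *
          ∑' k : ℕ+, Real.exp (-(κ₀ * (k : ℕ))) / ((k : ℕ) : ℝ))) := by
  have hsummable : Summable fun k : ℕ+ => Real.exp (-(κ₀ * (k : ℕ))) / ((k : ℕ) : ℝ) := by
    have hgeo : Summable fun k : ℕ => Real.exp (-κ₀) ^ k :=
      summable_geometric_of_lt_one (by positivity) (by simpa using hκ)
    refine Summable.of_nonneg_of_le (fun k => by positivity) (fun k => ?_)
      (hgeo.comp_injective PNat.coe_injective)
    have h1 : Real.exp (-(κ₀ * (k : ℕ))) = Real.exp (-κ₀) ^ (k : ℕ) := by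
      rw [← Real.exp_nat_mul]; ring_nf
    rw [h1]
    exact div_le_self (by positivity) (by exact_mod_cast k.pos)
  set s : ℝ := ∑' k : ℕ+, Real.exp (-(κ₀ * (k : ℕ))) / ((k : ℕ) : ℝ) with hs
  have hs0 : 0 ≤ s := tsum_nonneg fun k => by positivity
  set a : ℕ+ × Λ → ℝ≥0∞ :=
    fun p => ((p.1 : ℕ) : ℝ≥0∞)⁻¹ * ENNReal.ofReal (Real.exp (-(κ₀ * (p.1 : ℕ)))) with ha
  have hterm : ∀ n : ℕ, ∀ f : Fin n → ℕ+ × Λ,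
      wt f * ENNReal.ofReal (Real.exp (-(κ₀ * ∑ y, (occ f y : ℝ)))) = ∏ i, a (f i) := by
    intro n f
    have := sum_occ f (fun _ => 1)
    simp only [mul_one] at this
    rw [this, Finset.mul_sum, ← Finset.sum_neg_distrib, Real.exp_sum,
      ENNReal.ofReal_prod_of_nonneg fun i _ => by positivity, wt, ← Finset.prod_mul_distrib]
  have hasum : ∑' p, a p = ENNReal.ofReal (Fintype.card Λ * s) := by
    rw [ENNReal.tsum_prod', ENNReal.ofReal_mul (by positivity), ENNReal.ofReal_natCast, hs,
      ENNReal.ofReal_tsum_of_nonneg (fun k => by positivity) hsummable, ← ENNReal.tsum_mul_left]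
    refine tsum_congr fun k => ?_
    rw [ha, tsum_fintype]
    simp only [Finset.sum_const, Finset.card_univ, nsmul_eq_mul]
    rw [div_eq_inv_mul, ENNReal.ofReal_mul (by positivity), ofReal_inv_natCast k.pos]
  rw [← cluster_expansion]
  simp only [hterm, tsum_prod_fin, hasum]
  have hexp : HasSum (fun n : ℕ => (Fintype.card Λ * s) ^ n / n !)
      (Real.exp (Fintype.card Λ * s)) := by
    rw [Real.exp_eq_exp_ℝ]
    exact NormedSpace.expSeries_div_hasSum_exp _
  rw [← hexp.tsum_eq, ENNReal.ofReal_tsum_of_nonneg (fun n => by positivity) hexp.summable]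
  refine tsum_congr fun n => ?_
  rw [div_eq_inv_mul, ENNReal.ofReal_mul (p := (n ! : ℝ)⁻¹) (by positivity),
    ofReal_inv_natCast n.factorial_pos, ENNReal.ofReal_pow (by positivity)]

variable {d L : ℕ} [NeZero L]

/-- The interaction energy as a function of the occupation numbers. -/
def occPot (v : Tor d L → ℝ) (m : Tor d L → ℕ) : ℝ :=
  (1 / 2) * ∑ x, (m x : ℝ) * ∑ y, (m y : ℝ) * v (x - y)

lemma occPot_nonneg {v : Tor d L → ℝ} (hv : ∀ x, 0 ≤ v x) (m : Tor d L → ℕ) : 0 ≤ occPot v m :=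
  mul_nonneg (by norm_num) (Finset.sum_nonneg fun _ _ => mul_nonneg (by positivity)
    (Finset.sum_nonneg fun _ _ => mul_nonneg (by positivity) (hv _)))

lemma Vlm_eq (v : Tor d L → ℝ) {n : ℕ} (k : Fin n → ℕ+) (x : Cfg d L n) :
    Vlm d L v n k x = occPot v (occ fun i => (k i, x i)) := by
  rw [Vlm, occPot, sum_occ]
  simp only [sum_occ _ (fun y => v (_ - y)), Finset.mul_sum, mul_assoc]

lemma pot_eq (v : Tor d L → ℝ) (lam : ℝ) {n : ℕ} (X : Cfg d L n) :
    pot v lam X = lam * occPot v (cnt X) := by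
  rw [pot, occPot, cnt_eq_occ, sum_occ]
  simp only [sum_occ _ (fun y => v (_ - y))]
  simp
  ring

/-- The Boltzmann weight of the occupation numbers `m` in the limiting model. -/
def boltz (v : Tor d L → ℝ) (κ₀ lam : ℝ) (m : Tor d L → ℕ) : ℝ :=
  Real.exp (-(κ₀ * ∑ y, (m y : ℝ))) * Real.exp (-(lam * occPot v m))

lemma boltz_nonneg (v : Tor d L → ℝ) (κ₀ lam : ℝ) (m : Tor d L → ℕ) : 0 ≤ boltz v κ₀ lam m := by
  unfold boltz; positivity

lemma boltz_finite {v : Tor d L → ℝ} (hv : ∀ x, 0 ≤ v x) {κ₀ lam : ℝ} (hκ : 0 < κ₀)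
    (hl : 0 ≤ lam) : ∑' m, ENNReal.ofReal (boltz v κ₀ lam m) ≠ ⊤ := by
  refine ne_top_of_le_ne_top (b := ∑' m : Tor d L → ℕ,
    ENNReal.ofReal (Real.exp (-(κ₀ * ∑ y, (m y : ℝ))))) ?_ (ENNReal.tsum_le_tsum fun m => ?_)
  · rw [ideal_gas hκ]
    exact ENNReal.ofReal_ne_top
  · refine ENNReal.ofReal_le_ofReal (mul_le_of_le_one_right (by positivity) ?_)
    rw [Real.exp_le_one_iff, neg_nonpos]
    exact mul_nonneg hl (occPot_nonneg hv m)

lemma boltz_cnt (v : Tor d L → ℝ) (κ₀ lam : ℝ) {n : ℕ} (X : Cfg d L n) :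
    boltz v κ₀ lam (cnt X) = Real.exp (-(pot v lam X + κ₀ * n)) := by
  have : ∑ y, (cnt X y : ℝ) = n := by exact_mod_cast sum_cnt X
  rw [boltz, ← Real.exp_add, this, pot_eq]
  ring_nf

lemma grandXi_tendsto_boltz {v : Tor d L → ℝ} (hv : ∀ x, 0 ≤ v x) {κ₀ lam : ℝ} (hκ : 0 < κ₀)
    (hl : 0 ≤ lam) :
    Tendsto (fun ν : ℝ => grandXi d L v ν (κ₀ / ν) lam) (𝓝[>] (0 : ℝ))
      (𝓝 (((∑' m, ENNReal.ofReal (boltz v κ₀ lam m)).toReal : ℝ) : ℂ)) := by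
  have h0 := (hasSum_permutation (boltz_nonneg v κ₀ 0) (boltz_finite hv hκ le_rfl)).summable
  have h1 := (hasSum_permutation (boltz_nonneg v κ₀ lam) (boltz_finite hv hκ hl)).tsum_eq
  simp only [boltz_cnt] at h0 h1
  rw [← h1]
  refine grandXi_tendsto hv hl κ₀ ?_
  simpa [pot] using h0

lemma Zlm_eq {v : Tor d L → ℝ} (hv : ∀ x, 0 ≤ v x) {κ₀ : ℝ} (hκ : 0 < κ₀) :
    Zlm d L v κ₀ = (((∑' m, ENNReal.ofReal (boltz v κ₀ 1 m)).toReal : ℝ) : ℂ)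
      / (((∑' m, ENNReal.ofReal (boltz v κ₀ 0 m)).toReal : ℝ) : ℂ) := by
  rw [Zlm]
  congr 1
  · rw [← tsum_cluster (boltz_nonneg v κ₀ 1) (boltz_finite hv hκ zero_le_one)]
    push_cast
    have hb : ∀ (n : ℕ) (k : Fin n → ℕ+) (x : Cfg d L n),
        boltz v κ₀ 1 (occ fun i => (k i, x i))
          = Real.exp (-(κ₀ * ∑ i : Fin n, ((k i : ℕ) : ℝ))) * Real.exp (-(Vlm d L v n k x)) := by
      intro n k x
      have := sum_occ (fun i => (k i, x i)) (fun _ => 1)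
      simp only [mul_one] at this
      rw [boltz, this, Vlm_eq, one_mul]
    simp only [hb]
    push_cast
    rfl
  · congr 1
    have h := ideal_gas (Λ := Tor d L) hκ
    have hb : ∀ m : Tor d L → ℕ, boltz v κ₀ 0 m = Real.exp (-(κ₀ * ∑ y, (m y : ℝ))) := by
      intro m; simp [boltz]
    simp only [hb]
    rw [h, ENNReal.toReal_ofReal (by positivity)]
    simp [ZMod.card]

end Conclusion
end LargeMass


/-- **Large-mass limit of the relative partition function** (Theorem 1.4 (i), case `R = 0`):
for `v` pointwise nonnegative and `κ₀ > 0`,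
`lim_{ν→0⁺} 𝒵^{ν,κ₀/ν,1} = 𝒵^{lm}`. -/
theorem large_mass_limit_partition_function
    (d L : ℕ) (hd : 1 ≤ d) [NeZero L] (κ₀ : ℝ) (hκ₀ : 0 < κ₀)
    (v : Tor d L → ℝ) (hv_nonneg : ∀ x, 0 ≤ v x) :
    Tendsto (fun ν : ℝ => relZ d L v ν (κ₀ / ν) 1) (𝓝[>] (0 : ℝ))
      (𝓝 (Zlm d L v κ₀)) := by
  have hden : (((∑' m, ENNReal.ofReal (LargeMass.boltz v κ₀ 0 m)).toReal : ℝ) : ℂ) ≠ 0 := by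
    have hb : ∀ m : Tor d L → ℕ,
        LargeMass.boltz v κ₀ 0 m = Real.exp (-(κ₀ * ∑ y, (m y : ℝ))) := by
      intro m; simp [LargeMass.boltz]
    simp only [hb]
    rw [LargeMass.ideal_gas hκ₀, ENNReal.toReal_ofReal (by positivity)]
    exact_mod_cast (Real.exp_pos _).ne'
  rw [LargeMass.Zlm_eq hv_nonneg hκ₀]
  exact (LargeMass.grandXi_tendsto_boltz hv_nonneg hκ₀ zero_le_one).div
    (LargeMass.grandXi_tendsto_boltz hv_nonneg hκ₀ le_rfl) hden
end
end
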